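/- arXiv:1306.5829 — 2 statements merged into one kernel-verified Lean document; each statement's English description precedes it below -/
import Mathlib

section
/- Let σ > 0 and let K ⊆ ℝⁿ be a convex body with B_n ⊆ K ⊆ 4σ√n B_n. Let 0 < δ ≤ σ/(8√n), let f(x) = e^{−‖x‖²/(2σ²)}, define ℓ(x) = vol(K ∩ (x + δB_n))/vol(δB_n) and P_x(S) = (1/vol(K ∩ (x + δB_n))) ∫_{S ∩ K ∩ (x + δB_n)} min(1, f(y)/f(x)) dy for x ∉ S, and let π be the probability measure on K with density proportional to ℓ(x)f(x). Then the conductance of the speedy walk satisfies: for every measurable S ⊆ K with 0 < π(S) < 1, (1/2)(∫_S P_x(K∖S) dπ(x) + ∫_{K∖S} P_x(S) dπ(x)) ≥ 10^{−4} · (δ/(σ√n)) · min{π(S), π(K∖S)}. -/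
open MeasureTheory Real Set Metric

section PartA
open scoped Pointwise

lemma sc_vol_affine (r k : ℝ) (hr : 0 ≤ r) (A : Set ℝ) :
    volume ((fun x => r * x + k) '' A) = ENNReal.ofReal r * volume A := by
  have : (fun x => r * x + k) '' A = (fun x => x + k) '' (r • A) := by
    rw [← Set.image_smul, Set.image_image]; rfl
  rw [this, Set.image_add_right, measure_preimage_add_right, Measure.addHaar_smul]
  simp [abs_of_nonneg hr]

lemma sc_bm_compact (t : ℝ) (ht0 : 0 < t) (ht1 : t < 1) (A B C : Set ℝ)
    (hA : IsCompact A) (hB : IsCompact B)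
    (hAn : A.Nonempty) (hBn : B.Nonempty)
    (h : ∀ a ∈ A, ∀ b ∈ B, (1 - t) * a + t * b ∈ C) :
    ENNReal.ofReal (1 - t) * volume A + ENNReal.ofReal t * volume B ≤ volume C := by
  obtain ⟨a0, ha0, hamax⟩ := hA.exists_isMaxOn hAn continuousOn_id
  obtain ⟨b0, hb0, hbmin⟩ := hB.exists_isMinOn hBn continuousOn_id
  have h1t : 0 ≤ 1 - t := by linarith
  rw [← sc_vol_affine (1 - t) (t * b0) h1t A, ← sc_vol_affine t ((1 - t) * a0) ht0.le B]
  set X := (fun x => (1 - t) * x + t * b0) '' A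
  set Y := (fun x => t * x + (1 - t) * a0) '' B
  have hX : IsCompact X := hA.image (by fun_prop)
  have hY : IsCompact Y := hB.image (by fun_prop)
  have hd : AEDisjoint volume X Y := by
    have : X ∩ Y ⊆ {(1 - t) * a0 + t * b0} := by
      rintro z ⟨⟨a, ha, rfl⟩, ⟨b, hb, hbz⟩⟩
      have h1 : a ≤ a0 := hamax ha
      have h2 : b0 ≤ b := hbmin hb
      simp only at hbz ⊢
      rw [mem_singleton_iff]
      apply le_antisymm
      · nlinarith
      · rw [← hbz]; nlinarith
    exact measure_mono_null this (by simp)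
  rw [← measure_union₀ hY.measurableSet.nullMeasurableSet hd]
  apply measure_mono
  rintro z (⟨a, ha, rfl⟩ | ⟨b, hb, rfl⟩)
  · exact h a ha b0 hb0
  · have := h a0 ha0 b hb
    simp only
    rwa [add_comm]

lemma sc_bm (t : ℝ) (ht0 : 0 < t) (ht1 : t < 1) (A B C : Set ℝ)
    (hA : MeasurableSet A) (hB : MeasurableSet B)
    (hAn : A.Nonempty) (hBn : B.Nonempty)
    (h : ∀ a ∈ A, ∀ b ∈ B, (1 - t) * a + t * b ∈ C) :
    ENNReal.ofReal (1 - t) * volume A + ENNReal.ofReal t * volume B ≤ volume C := by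
  obtain ⟨a, ha⟩ := hAn
  obtain ⟨b, hb⟩ := hBn
  have key : ∀ A' ⊆ A, IsCompact A' → ∀ B' ⊆ B, IsCompact B' →
      ENNReal.ofReal (1 - t) * volume A' + ENNReal.ofReal t * volume B' ≤ volume C := by
    intro A' hA' hA'c B' hB' hB'c
    refine le_trans ?_ (sc_bm_compact t ht0 ht1 (insert a A') (insert b B') C
      (hA'c.insert a) (hB'c.insert b) (insert_nonempty _ _) (insert_nonempty _ _) ?_)
    · gcongr <;> exact subset_insert _ _
    · intro x hx y hy
      exact h x (insert_subset ha hA' hx) y (insert_subset hb hB' hy)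
  rw [hA.measure_eq_iSup_isCompact volume, hB.measure_eq_iSup_isCompact volume]
  simp only [ENNReal.mul_iSup]
  simp only [iSup_and', iSup_subtype']
  have : Nonempty {K : Set ℝ // K ⊆ A ∧ IsCompact K} := ⟨⟨∅, by simp⟩⟩
  have : Nonempty {K : Set ℝ // K ⊆ B ∧ IsCompact K} := ⟨⟨∅, by simp⟩⟩
  apply ENNReal.iSup_add_iSup_le
  intro i j
  exact key _ i.2.1 i.2.2 _ j.2.1 j.2.2

lemma sc_amgm (t : ℝ) (ht0 : 0 < t) (ht1 : t < 1) (a b : ENNReal) :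
    a ^ (1 - t) * b ^ t ≤ ENNReal.ofReal (1 - t) * a + ENNReal.ofReal t * b := by
  have h1 : 0 < 1 - t := by linarith
  by_cases ha : a = ⊤
  · subst ha
    rw [ENNReal.mul_top (by simpa using h1)]; simp
  by_cases hb : b = ⊤
  · subst hb
    rw [ENNReal.mul_top (by simpa using ht0)]; simp
  lift a to NNReal using ha
  lift b to NNReal using hb
  have := Real.geom_mean_le_arith_mean2_weighted h1.le ht0.le a.2 b.2 (by ring)
  have h3 := ENNReal.ofReal_le_ofReal this
  simp only [NNReal.val_eq_coe] at h3
  rw [ENNReal.ofReal_mul (by positivity), ENNReal.ofReal_add (by positivity) (by positivity),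
    ENNReal.ofReal_mul (by positivity), ENNReal.ofReal_mul (by positivity),
    ← ENNReal.ofReal_rpow_of_nonneg (by positivity) h1.le,
    ← ENNReal.ofReal_rpow_of_nonneg (by positivity) ht0.le] at h3
  simpa using h3

/-- One-dimensional, normalised. -/
lemma sc_pl1_norm (t : ℝ) (ht0 : 0 < t) (ht1 : t < 1) (f g h : ℝ → ENNReal)
    (hf : Measurable f) (hg : Measurable g) (hh : Measurable h)
    (hf1 : ⨆ x, f x = 1) (hg1 : ⨆ x, g x = 1)
    (H : ∀ x y, f x ^ (1 - t) * g y ^ t ≤ h ((1 - t) * x + t * y)) :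
    (∫⁻ x, f x) ^ (1 - t) * (∫⁻ x, g x) ^ t ≤ ∫⁻ x, h x := by
  have h1 : 0 < 1 - t := by linarith
  refine (sc_amgm t ht0 ht1 _ _).trans ?_
  have hfle : ∀ x, f x ≤ 1 := fun x => hf1 ▸ le_iSup f x
  have hgle : ∀ x, g x ≤ 1 := fun x => hg1 ▸ le_iSup g x
  have lc : ∀ k : ℝ → ENNReal, Measurable k → (∀ x, k x ≤ 1) →
      ∫⁻ x, k x = ∫⁻ s in Ioi (0:ℝ), volume {a | ENNReal.ofReal s < k a} := by
    intro k hk hk1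
    have hkt : ∀ x, k x ≠ ⊤ := fun x => ((hk1 x).trans_lt ENNReal.one_lt_top).ne
    have := lintegral_eq_lintegral_meas_lt (f := fun x => (k x).toReal) volume
      (Filter.Eventually.of_forall fun x => ENNReal.toReal_nonneg) hk.ennreal_toReal.aemeasurable
    simp only [ENNReal.ofReal_toReal (hkt _)] at this
    rw [this]
    apply setLIntegral_congr_fun measurableSet_Ioi
    intro s hs
    have : {a | s < (k a).toReal} = {a | ENNReal.ofReal s < k a} := by
      ext a
      simp only [mem_ofPred_eq]
      rw [ENNReal.ofReal_lt_iff_lt_toReal (le_of_lt hs) (hkt a)]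
    simp only [this]
  have hhle : ∫⁻ x, min (h x) 1 ≤ ∫⁻ x, h x := lintegral_mono fun x => min_le_left _ _
  refine le_trans ?_ hhle
  rw [lc f hf hfle, lc g hg hgle, lc (fun x => min (h x) 1) (hh.min measurable_const)
    (fun x => min_le_right _ _)]
  have mf : Measurable fun s : ℝ => volume {a | ENNReal.ofReal s < f a} := by
    apply Antitone.measurable
    intro s s' hss
    apply measure_mono
    intro a ha
    exact lt_of_le_of_lt (ENNReal.ofReal_le_ofReal hss) ha
  rw [← lintegral_const_mul' _ _ ENNReal.ofReal_ne_top,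
    ← lintegral_const_mul' _ _ ENNReal.ofReal_ne_top, ← lintegral_add_left (by fun_prop)]
  apply setLIntegral_mono' measurableSet_Ioi
  intro s hs
  by_cases hs1 : s < 1
  · have hs1' : ENNReal.ofReal s < 1 := by simpa using hs1
    apply sc_bm t ht0 ht1
    · exact measurableSet_lt measurable_const hf
    · exact measurableSet_lt measurable_const hg
    · rw [← hf1] at hs1'
      obtain ⟨x, hx⟩ := lt_iSup_iff.1 hs1'
      exact ⟨x, hx⟩
    · rw [← hg1] at hs1'
      obtain ⟨x, hx⟩ := lt_iSup_iff.1 hs1'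
      exact ⟨x, hx⟩
    · intro a ha b hb
      simp only [mem_ofPred_eq] at ha hb ⊢
      refine lt_min (lt_of_lt_of_le ?_ (H a b)) hs1'
      have hs0 : ENNReal.ofReal s ≠ 0 := by simpa using hs
      calc ENNReal.ofReal s = ENNReal.ofReal s ^ (1 - t) * ENNReal.ofReal s ^ t := by
            rw [← ENNReal.rpow_add _ _ hs0 ENNReal.ofReal_ne_top]; simp
        _ < f a ^ (1 - t) * g b ^ t := by
            apply ENNReal.mul_lt_mul
            · exact ENNReal.rpow_lt_rpow ha h1
            · exact ENNReal.rpow_lt_rpow hb ht0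
  · have e1 : {a | ENNReal.ofReal s < f a} = ∅ := by
      ext a
      simp only [mem_ofPred_eq, mem_empty_iff_false, iff_false, not_lt]
      exact (hfle a).trans (by simpa using hs1)
    have e2 : {a | ENNReal.ofReal s < g a} = ∅ := by
      ext a
      simp only [mem_ofPred_eq, mem_empty_iff_false, iff_false, not_lt]
      exact (hgle a).trans (by simpa using hs1)
    simp [e1, e2]

lemma sc_pl1_bdd (t : ℝ) (ht0 : 0 < t) (ht1 : t < 1) (f g h : ℝ → ENNReal)
    (hf : Measurable f) (hg : Measurable g) (hh : Measurable h)
    (hf1 : ⨆ x, f x ≠ ⊤) (hg1 : ⨆ x, g x ≠ ⊤)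
    (H : ∀ x y, f x ^ (1 - t) * g y ^ t ≤ h ((1 - t) * x + t * y)) :
    (∫⁻ x, f x) ^ (1 - t) * (∫⁻ x, g x) ^ t ≤ ∫⁻ x, h x := by
  have h1 : 0 < 1 - t := by linarith
  set F := ⨆ x, f x with hF
  set G := ⨆ x, g x with hG
  by_cases hF0 : F = 0
  · have : ∀ x, f x = 0 := fun x => le_antisymm (hF0 ▸ le_iSup f x) (zero_le)
    simp [this, ENNReal.zero_rpow_of_pos h1]
  by_cases hG0 : G = 0
  · have : ∀ x, g x = 0 := fun x => le_antisymm (hG0 ▸ le_iSup g x) (zero_le)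
    simp [this, ENNReal.zero_rpow_of_pos ht0]
  have key := sc_pl1_norm t ht0 ht1 (fun x => F⁻¹ * f x) (fun x => G⁻¹ * g x)
    (fun x => (F⁻¹ ^ (1 - t) * G⁻¹ ^ t) * h x) (by fun_prop) (by fun_prop) (by fun_prop)
    (by rw [← ENNReal.mul_iSup]; exact ENNReal.inv_mul_cancel hF0 hf1)
    (by rw [← ENNReal.mul_iSup]; exact ENNReal.inv_mul_cancel hG0 hg1)
    (by
      intro x y
      rw [ENNReal.mul_rpow_of_nonneg _ _ h1.le, ENNReal.mul_rpow_of_nonneg _ _ ht0.le,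
        mul_mul_mul_comm]
      gcongr
      exact H x y)
  rw [lintegral_const_mul _ hf, lintegral_const_mul _ hg, lintegral_const_mul _ hh,
    ENNReal.mul_rpow_of_nonneg _ _ h1.le, ENNReal.mul_rpow_of_nonneg _ _ ht0.le,
        mul_mul_mul_comm] at key
  rwa [ENNReal.mul_le_mul_iff_right] at key
  · simp [hf1, hg1, ENNReal.rpow_eq_zero_iff, h1.le, ht0.le, h1, ht0, not_lt.2 h1.le,
      not_lt.2 ht0.le]
  · apply ENNReal.mul_ne_top <;> apply ENNReal.rpow_ne_top_of_nonneg <;> simp [hF0, hG0, h1.le, ht0.le, -ENNReal.iSup_eq_zero]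

lemma sc_pl1 (t : ℝ) (ht0 : 0 < t) (ht1 : t < 1) (f g h : ℝ → ENNReal)
    (hf : Measurable f) (hg : Measurable g) (hh : Measurable h)
    (H : ∀ x y, f x ^ (1 - t) * g y ^ t ≤ h ((1 - t) * x + t * y)) :
    (∫⁻ x, f x) ^ (1 - t) * (∫⁻ x, g x) ^ t ≤ ∫⁻ x, h x := by
  have h1 : 0 < 1 - t := by linarith
  by_cases hF0 : ∫⁻ x, f x = 0
  · simp [hF0, ENNReal.zero_rpow_of_pos h1]
  by_cases hG0 : ∫⁻ x, g x = 0
  · simp [hG0, ENNReal.zero_rpow_of_pos ht0]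
  have tr : ∀ k : ℝ → ENNReal, Measurable k →
      Filter.Tendsto (fun N : ℕ => ∫⁻ x, min (k x) N) Filter.atTop (nhds (∫⁻ x, k x)) := by
    intro k hk
    apply lintegral_tendsto_of_tendsto_of_monotone
    · intro N; exact (hk.min measurable_const).aemeasurable
    · refine Filter.Eventually.of_forall fun x => ?_
      intro a b hab
      exact min_le_min le_rfl (by exact_mod_cast hab)
    · refine Filter.Eventually.of_forall fun x => ?_
      have := (tendsto_const_nhds (x := k x)).min ENNReal.tendsto_nat_nhds_top
      simpa using this
  have key : ∀ N : ℕ, (∫⁻ x, min (f x) N) ^ (1 - t) * (∫⁻ x, min (g x) N) ^ t ≤ ∫⁻ x, h x := by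
    intro N
    apply sc_pl1_bdd t ht0 ht1 _ _ _ (hf.min measurable_const) (hg.min measurable_const) hh
    · exact ((iSup_le fun x => min_le_right _ _).trans_lt (ENNReal.natCast_lt_top N)).ne
    · exact ((iSup_le fun x => min_le_right _ _).trans_lt (ENNReal.natCast_lt_top N)).ne
    · intro x y
      refine le_trans ?_ (H x y)
      gcongr <;> exact min_le_left _ _
  refine le_of_tendsto' (ENNReal.Tendsto.mul ((ENNReal.continuous_rpow_const.tendsto _).comp
    (tr f hf)) ?_ ((ENNReal.continuous_rpow_const.tendsto _).comp (tr g hg)) ?_) key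
  · left
    simp [ENNReal.rpow_eq_zero_iff, hF0, h1.le, not_lt.2 h1.le]
  · left
    simp [ENNReal.rpow_eq_zero_iff, hG0, ht0.le, not_lt.2 ht0.le]

lemma sc_pl (t : ℝ) (ht0 : 0 < t) (ht1 : t < 1) (n : ℕ) : ∀ (f g h : (Fin n → ℝ) → ENNReal),
    Measurable f → Measurable g → Measurable h →
    (∀ x y, f x ^ (1 - t) * g y ^ t ≤ h ((1 - t) • x + t • y)) →
    (∫⁻ x, f x) ^ (1 - t) * (∫⁻ x, g x) ^ t ≤ ∫⁻ x, h x := by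
  induction n with
  | zero =>
    intro f g h hf hg hh H
    rw [Measure.volume_pi_eq_dirac]
    rw [lintegral_dirac, lintegral_dirac, lintegral_dirac]
    refine (H _ _).trans (le_of_eq ?_)
    congr 1
    exact Subsingleton.elim _ _
  | succ n ih =>
    intro f g h hf hg hh H
    have e := volume_preserving_piFinSuccAbove (fun _ : Fin (n + 1) => ℝ) 0
    set φ := MeasurableEquiv.piFinSuccAbove (fun _ : Fin (n + 1) => ℝ) 0
    have e' := e.symm
    have conv : ∀ k : (Fin (n + 1) → ℝ) → ENNReal, Measurable k →
        ∫⁻ x, k x = ∫⁻ a : ℝ, ∫⁻ v : Fin n → ℝ, k (φ.symm (a, v)) := by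
      intro k hk
      rw [← e'.lintegral_comp hk, Measure.volume_eq_prod]
      exact lintegral_prod _ (hk.comp φ.symm.measurable).aemeasurable
    rw [conv f hf, conv g hg, conv h hh]
    have mm : ∀ k : (Fin (n + 1) → ℝ) → ENNReal, Measurable k →
        Measurable fun a : ℝ => ∫⁻ v : Fin n → ℝ, k (φ.symm (a, v)) := by
      intro k hk
      exact Measurable.lintegral_prod_right' (hk.comp φ.symm.measurable)
    have mm2 : ∀ k : (Fin (n + 1) → ℝ) → ENNReal, Measurable k → ∀ a : ℝ,
        Measurable fun v : Fin n → ℝ => k (φ.symm (a, v)) := by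
      intro k hk a
      exact (hk.comp φ.symm.measurable).comp measurable_prodMk_left
    apply sc_pl1 t ht0 ht1 _ _ _ (mm f hf) (mm g hg) (mm h hh)
    intro x y
    apply ih _ _ _ (mm2 f hf x) (mm2 g hg y) (mm2 h hh _)
    intro u v
    refine (H _ _).trans (le_of_eq ?_)
    congr 1
    ext i
    refine Fin.cases ?_ (fun j => ?_) i
    · simp [φ, MeasurableEquiv.piFinSuccAbove, Fin.insertNthEquiv]
    · simp [φ, MeasurableEquiv.piFinSuccAbove, Fin.insertNthEquiv]

lemma sc_plE (t : ℝ) (ht0 : 0 < t) (ht1 : t < 1) (n : ℕ)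
    (f g h : EuclideanSpace ℝ (Fin n) → ENNReal)
    (hf : Measurable f) (hg : Measurable g) (hh : Measurable h)
    (H : ∀ x y, f x ^ (1 - t) * g y ^ t ≤ h ((1 - t) • x + t • y)) :
    (∫⁻ x, f x) ^ (1 - t) * (∫⁻ x, g x) ^ t ≤ ∫⁻ x, h x := by
  have e := PiLp.volume_preserving_toLp (Fin n)
  have em : Measurable (WithLp.toLp 2 : (Fin n → ℝ) → EuclideanSpace ℝ (Fin n)) := e.measurable
  rw [← e.lintegral_comp hf, ← e.lintegral_comp hg, ← e.lintegral_comp hh]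
  apply sc_pl t ht0 ht1 n _ _ _ (hf.comp em) (hg.comp em) (hh.comp em)
  intro x y
  exact H _ _
end PartA


lemma sc_hyp_null {n : ℕ} (u : EuclideanSpace ℝ (Fin n)) (hu : u ≠ 0) (c : ℝ) :
    volume {x : EuclideanSpace ℝ (Fin n) | inner ℝ u x = c} = 0 := by
  let s : AffineSubspace ℝ (EuclideanSpace ℝ (Fin n)) :=
    { carrier := {x | inner ℝ u x = c}
      smul_vsub_vadd_mem' := by
        intro k p1 p2 p3 h1 h2 h3
        simp only [mem_ofPred_eq, vsub_eq_sub, vadd_eq_add, inner_add_right, inner_smul_right,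
          inner_sub_right] at *
        rw [h1, h2, h3]; ring }
  have := Measure.addHaar_affineSubspace volume s (by
    intro h
    have h0 : ∀ x : EuclideanSpace ℝ (Fin n), inner ℝ u x = c := by
      intro x
      have : x ∈ s := h ▸ AffineSubspace.mem_top ℝ _ x
      exact this
    have h1 := h0 0
    have h2 := h0 u
    rw [inner_zero_right] at h1
    rw [← h1, inner_self_eq_zero] at h2
    exact hu h2)
  exact this

lemma sc_hyp_null2 {n : ℕ} (i j : Fin n) (hij : i ≠ j) (a b c : ℝ) (hab : a ≠ 0 ∨ b ≠ 0) :
    volume {x : EuclideanSpace ℝ (Fin n) | a * x i + b * x j = c} = 0 := by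
  have := sc_hyp_null (EuclideanSpace.single i a + EuclideanSpace.single j b) (by
    intro h
    have h1 := congrArg (fun z : EuclideanSpace ℝ (Fin n) => z i) h
    have h2 := congrArg (fun z : EuclideanSpace ℝ (Fin n) => z j) h
    simp [hij, hij.symm] at h1 h2
    rcases hab with h | h
    · exact h h1
    · exact h h2) c
  convert this using 3
  ext x
  simp only [mem_ofPred_eq, inner_add_left, EuclideanSpace.inner_single_left]
  simp

lemma sc_cut {n : ℕ} (μ : Measure (EuclideanSpace ℝ (Fin n))) (hμ : μ ≪ volume)
    (g1 g2 : EuclideanSpace ℝ (Fin n) → ℝ) (hg1 : Integrable g1 μ) (hg2 : Integrable g2 μ)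
    (P : Set (EuclideanSpace ℝ (Fin n))) (hP : MeasurableSet P)
    (h1 : ∫ x in P, g1 x ∂μ = 0) (h2 : ∫ x in P, g2 x ∂μ < 0)
    (i j : Fin n) (hij : i ≠ j) (q : EuclideanSpace ℝ (Fin n)) :
    ∃ a b : ℝ, (a ≠ 0 ∨ b ≠ 0) ∧
      ∫ x in P ∩ {x | 0 ≤ a * (x i - q i) + b * (x j - q j)}, g1 x ∂μ = 0 ∧
      ∫ x in P ∩ {x | 0 ≤ a * (x i - q i) + b * (x j - q j)}, g2 x ∂μ < 0 := by
  have hne : ∀ θ : ℝ, cos θ ≠ 0 ∨ sin θ ≠ 0 := by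
    intro θ
    by_contra! h
    have := Real.sin_sq_add_cos_sq θ
    rw [h.1, h.2] at this
    norm_num at this
  have hnull : ∀ a b : ℝ, (a ≠ 0 ∨ b ≠ 0) →
      μ {x | a * (x i - q i) + b * (x j - q j) = 0} = 0 := by
    intro a b hab
    apply hμ
    convert sc_hyp_null2 i j hij a b (a * q i + b * q j) hab using 3
    ext x
    constructor <;> intro h <;> linarith
  have hHm : ∀ a b : ℝ, MeasurableSet {x : EuclideanSpace ℝ (Fin n) |
      0 ≤ a * (x i - q i) + b * (x j - q j)} := by
    intro a b
    exact measurableSet_le measurable_const (by fun_prop)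
  have hsplit : ∀ (g : EuclideanSpace ℝ (Fin n) → ℝ), Integrable g μ →
      ∀ a b : ℝ, (a ≠ 0 ∨ b ≠ 0) →
      ∫ x in P ∩ {x | 0 ≤ a * (x i - q i) + b * (x j - q j)}, g x ∂μ +
      ∫ x in P ∩ {x | 0 ≤ (-a) * (x i - q i) + (-b) * (x j - q j)}, g x ∂μ
        = ∫ x in P, g x ∂μ := by
    intro g hg a b hab
    rw [← setIntegral_union₀ _ (hP.inter (hHm _ _)).nullMeasurableSet hg.integrableOn
      hg.integrableOn]
    · congr 2
      rw [← inter_union_distrib_left]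
      apply inter_eq_left.2
      intro x _
      rcases le_total 0 (a * (x i - q i) + b * (x j - q j)) with h | h
      · left; exact h
      · right
        simp only [mem_ofPred_eq]; linarith
    · refine measure_mono_null ?_ (hnull a b hab)
      rintro x ⟨⟨_, hx⟩, ⟨_, hy⟩⟩
      simp only [mem_ofPred_eq] at *
      linarith
  let D : ℝ → ℝ := fun θ =>
    ∫ x in P ∩ {x | 0 ≤ cos θ * (x i - q i) + sin θ * (x j - q j)}, g1 x ∂μ
  have hD : Continuous D := by
    have hDe : D = fun θ => ∫ x in P,
        ({x | 0 ≤ cos θ * (x i - q i) + sin θ * (x j - q j)} : Set _).indicator g1 x ∂μ := by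
      ext θ
      rw [integral_indicator (hHm _ _), Measure.restrict_restrict (hHm _ _), inter_comm]
    rw [hDe, continuous_iff_continuousAt]
    intro θ
    apply continuousAt_of_dominated (bound := fun x => ‖g1 x‖)
    · refine Filter.Eventually.of_forall fun θ' => ?_
      exact (hg1.integrableOn.aestronglyMeasurable).indicator (hHm _ _)
    · refine Filter.Eventually.of_forall fun θ' => Filter.Eventually.of_forall fun x => ?_
      exact norm_indicator_le_norm_self _ _
    · exact hg1.integrableOn.norm
    · have : ∀ᵐ x ∂(μ.restrict P), ¬ (cos θ * (x i - q i) + sin θ * (x j - q j) = 0) := by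
        apply ae_restrict_of_ae
        rw [ae_iff]
        simpa using hnull _ _ (hne θ)
      filter_upwards [this] with x hx
      have hc : Continuous fun θ' : ℝ => cos θ' * (x i - q i) + sin θ' * (x j - q j) := by
        fun_prop
      rcases lt_or_gt_of_ne hx with h | h
      · have : (fun θ' : ℝ => ({x | 0 ≤ cos θ' * (x i - q i) + sin θ' * (x j - q j)} :
            Set (EuclideanSpace ℝ (Fin n))).indicator g1 x) =ᶠ[nhds θ] fun _ => 0 := by
          filter_upwards [hc.continuousAt.eventually_lt continuousAt_const h] with θ' h'
          apply indicator_of_notMem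
          simpa using h'
        exact continuousAt_const.congr this.symm
      · have : (fun θ' : ℝ => ({x | 0 ≤ cos θ' * (x i - q i) + sin θ' * (x j - q j)} :
            Set (EuclideanSpace ℝ (Fin n))).indicator g1 x) =ᶠ[nhds θ] fun _ => g1 x := by
          filter_upwards [continuousAt_const.eventually_lt hc.continuousAt h] with θ' h'
          apply indicator_of_mem
          exact h'.le
        exact continuousAt_const.congr this.symm
  have hDpi : D π = - D 0 := by
    have := hsplit g1 hg1 (cos 0) (sin 0) (hne 0)
    rw [h1] at this
    simp only [D, cos_pi, sin_pi]
    simp only [cos_zero, sin_zero, neg_zero] at this ⊢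
    linarith
  obtain ⟨θ, hθ⟩ : ∃ θ, D θ = 0 := by
    rcases le_total (D 0) 0 with h | h
    · obtain ⟨θ, -, hθ⟩ := intermediate_value_Icc (f := D) pi_pos.le hD.continuousOn
        (show (0:ℝ) ∈ Icc (D 0) (D π) from ⟨h, by linarith⟩)
      exact ⟨θ, hθ⟩
    · obtain ⟨θ, -, hθ⟩ := intermediate_value_Icc' (f := D) pi_pos.le hD.continuousOn
        (show (0:ℝ) ∈ Icc (D π) (D 0) from ⟨by linarith, h⟩)
      exact ⟨θ, hθ⟩
  have s1 := hsplit g1 hg1 _ _ (hne θ)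
  have s2 := hsplit g2 hg2 _ _ (hne θ)
  simp only [D] at hθ
  by_cases hb : ∫ x in P ∩ {x | 0 ≤ cos θ * (x i - q i) + sin θ * (x j - q j)}, g2 x ∂μ < 0
  · exact ⟨cos θ, sin θ, hne θ, hθ, hb⟩
  · refine ⟨-cos θ, -sin θ, by simpa using hne θ, by linarith, by linarith⟩

lemma sc_line {n : ℕ} (hn : 0 < n) (Q : Set (EuclideanSpace ℝ (Fin n)))
    (hQ : ∀ (k : ℕ) (i j : Fin n), i ≠ j → ∃ a b : ℝ, (a ≠ 0 ∨ b ≠ 0) ∧ ∀ x ∈ Q,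
      0 ≤ a * (x i - TopologicalSpace.denseSeq (EuclideanSpace ℝ (Fin n)) k i) +
        b * (x j - TopologicalSpace.denseSeq (EuclideanSpace ℝ (Fin n)) k j)) :
    ∃ a v : EuclideanSpace ℝ (Fin n), ‖v‖ = 1 ∧ ∀ x ∈ Q, ∃ c : ℝ, x = a + c • v := by
  by_cases hs : Q.Subsingleton
  · have hv : ‖(EuclideanSpace.single (⟨0, hn⟩ : Fin n) (1:ℝ))‖ = 1 := by simp
    rcases Q.eq_empty_or_nonempty with h | ⟨x, hx⟩
    · exact ⟨0, _, hv, by simp [h]⟩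
    · exact ⟨x, _, hv, fun y hy => ⟨0, by simp [hs hy hx]⟩⟩
  · rw [not_subsingleton_iff] at hs
    obtain ⟨A, hA, B, hB, hAB⟩ := hs
    have hBA : B - A ≠ 0 := sub_ne_zero.2 hAB.symm
    obtain ⟨i, hi⟩ : ∃ i, (B - A) i ≠ 0 := by
      by_contra! h
      apply hBA
      ext i; exact h i
    have hpar : ∀ C ∈ Q, ∀ j, (B - A) i * (C - A) j = (B - A) j * (C - A) i := by
      intro C hC j
      by_contra hne
      have hij : i ≠ j := by
        rintro rfl
        exact hne rfl
      simp only [PiLp.sub_apply] at hne hi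
      set Δ : ℝ := (B i - A i) * (C j - A j) - (B j - A j) * (C i - A i) with hΔ
      have hΔ0 : Δ ≠ 0 := sub_ne_zero.2 hne
      -- barycentric coordinates
      let β : EuclideanSpace ℝ (Fin n) → ℝ := fun x =>
        ((x i - A i) * (C j - A j) - (x j - A j) * (C i - A i)) / Δ
      let γ : EuclideanSpace ℝ (Fin n) → ℝ := fun x =>
        ((B i - A i) * (x j - A j) - (B j - A j) * (x i - A i)) / Δ
      have hβ : Continuous β := by fun_prop
      have hγ : Continuous γ := by fun_prop
      let U : Set (EuclideanSpace ℝ (Fin n)) := {x | 0 < β x ∧ 0 < γ x ∧ β x + γ x < 1}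
      have hU : IsOpen U := by
        apply (isOpen_lt continuous_const hβ).inter
        apply (isOpen_lt continuous_const hγ).inter
        exact isOpen_lt (hβ.add hγ) continuous_const
      have hUn : U.Nonempty := by
        refine ⟨A + (1/3 : ℝ) • (B - A) + (1/3 : ℝ) • (C - A), ?_⟩
        have e1 : β (A + (1/3 : ℝ) • (B - A) + (1/3 : ℝ) • (C - A)) = 1/3 := by
          simp only [β, PiLp.add_apply, PiLp.smul_apply, PiLp.sub_apply, smul_eq_mul]
          rw [div_eq_iff hΔ0, hΔ]; ring
        have e2 : γ (A + (1/3 : ℝ) • (B - A) + (1/3 : ℝ) • (C - A)) = 1/3 := by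
          simp only [γ, PiLp.add_apply, PiLp.smul_apply, PiLp.sub_apply, smul_eq_mul]
          rw [div_eq_iff hΔ0, hΔ]; ring
        refine ⟨?_, ?_, ?_⟩ <;> simp only [e1, e2] <;> norm_num
      obtain ⟨k, hk⟩ := (TopologicalSpace.denseRange_denseSeq
        (EuclideanSpace ℝ (Fin n))).exists_mem_open hU hUn
      obtain ⟨a, b, hab, h⟩ := hQ k i j hij
      set q := TopologicalSpace.denseSeq (EuclideanSpace ℝ (Fin n)) k
      obtain ⟨hb0, hg0, hbg⟩ := hk
      have hqi : q i - A i = β q * (B i - A i) + γ q * (C i - A i) := by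
        simp only [β, γ]; field_simp; rw [hΔ]; ring
      have hqj : q j - A j = β q * (B j - A j) + γ q * (C j - A j) := by
        simp only [β, γ]; field_simp; rw [hΔ]; ring
      have hAq := h A hA
      have hBq := h B hB
      have hCq := h C hC
      set X := a * (A i - q i) + b * (A j - q j) with hX
      set Y := a * (B i - q i) + b * (B j - q j) with hY
      set W := a * (C i - q i) + b * (C j - q j) with hW
      have hsum : (1 - β q - γ q) * X + β q * Y + γ q * W = 0 := by
        rw [hX, hY, hW]
        linear_combination (-a) * hqi - b * hqj
      have hal : 0 < 1 - β q - γ q := by linarith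
      have hX0 : X = 0 := by
        by_contra hne
        have : 0 < X := lt_of_le_of_ne hAq (Ne.symm hne)
        nlinarith [mul_nonneg hb0.le hBq, mul_nonneg hg0.le hCq, mul_pos hal this]
      have hY0 : Y = 0 := by
        by_contra hne
        have : 0 < Y := lt_of_le_of_ne hBq (Ne.symm hne)
        nlinarith [mul_nonneg hal.le hAq, mul_nonneg hg0.le hCq, mul_pos hb0 this]
      have hW0 : W = 0 := by
        by_contra hne
        have : 0 < W := lt_of_le_of_ne hCq (Ne.symm hne)
        nlinarith [mul_nonneg hal.le hAq, mul_nonneg hb0.le hBq, mul_pos hg0 this]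
      have f1 : a * (B i - A i) + b * (B j - A j) = 0 := by
        rw [hX] at hX0; rw [hY] at hY0; linarith
      have f2 : a * (C i - A i) + b * (C j - A j) = 0 := by
        rw [hX] at hX0; rw [hW] at hW0; linarith
      have ga : a * Δ = 0 := by
        rw [hΔ]; linear_combination (C j - A j) * f1 - (B j - A j) * f2
      have gb : b * Δ = 0 := by
        rw [hΔ]; linear_combination (B i - A i) * f2 - (C i - A i) * f1
      rcases hab with h | h
      · exact (mul_ne_zero h hΔ0) ga
      · exact (mul_ne_zero h hΔ0) gb
    refine ⟨A, (‖B - A‖)⁻¹ • (B - A), ?_, ?_⟩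
    · rw [norm_smul, norm_inv, norm_norm, inv_mul_cancel₀ (norm_ne_zero_iff.2 hBA)]
    · intro C hC
      refine ⟨((C - A) i / (B - A) i) * ‖B - A‖, ?_⟩
      rw [smul_smul, mul_assoc, mul_inv_cancel₀ (norm_ne_zero_iff.2 hBA), mul_one]
      ext j
      have := hpar C hC j
      simp only [PiLp.add_apply, PiLp.smul_apply, smul_eq_mul]
      have e : (C - A) j = (C - A) i / (B - A) i * (B - A) j := by
        field_simp; linarith
      rw [← e]; simp

lemma sc_localize {n : ℕ} (hn : 0 < n)
    (μ : Measure (EuclideanSpace ℝ (Fin n))) (hμ : μ ≪ volume)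
    (g1 g2 : EuclideanSpace ℝ (Fin n) → ℝ) (hg1 : Integrable g1 μ) (hg2 : Integrable g2 μ)
    (K : Set (EuclideanSpace ℝ (Fin n))) (hK : IsCompact K) (hKc : Convex ℝ K)
    (h1 : ∫ x in K, g1 x ∂μ = 0) (h2 : ∫ x in K, g2 x ∂μ < 0) (ε : ℝ) (hε : 0 < ε) :
    ∃ P ⊆ K, IsCompact P ∧ Convex ℝ P ∧
      (∃ a v : EuclideanSpace ℝ (Fin n), ‖v‖ = 1 ∧
        ∀ x ∈ P, ‖(x - a) - (inner ℝ v (x - a) : ℝ) • v‖ < ε) ∧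
      ∫ x in P, g1 x ∂μ = 0 ∧ ∫ x in P, g2 x ∂μ < 0 := by
  let Bad : Set (EuclideanSpace ℝ (Fin n)) → Prop := fun P =>
    P ⊆ K ∧ IsCompact P ∧ Convex ℝ P ∧ ∫ x in P, g1 x ∂μ = 0 ∧ ∫ x in P, g2 x ∂μ < 0
  let T := ℕ × Fin n × Fin n
  have : Nonempty (Fin n) := ⟨⟨0, hn⟩⟩
  obtain ⟨en, hen⟩ := exists_surjective_nat T
  have step : ∀ (k : ℕ) (P : {P // Bad P}), ∃ P' : {P // Bad P}, P'.1 ⊆ P.1 ∧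
      ((en k).2.1 ≠ (en k).2.2 → ∃ a b : ℝ, (a ≠ 0 ∨ b ≠ 0) ∧ ∀ x ∈ P'.1,
      0 ≤ a * (x (en k).2.1 -
          TopologicalSpace.denseSeq (EuclideanSpace ℝ (Fin n)) (en k).1 (en k).2.1) +
        b * (x (en k).2.2 -
          TopologicalSpace.denseSeq (EuclideanSpace ℝ (Fin n)) (en k).1 (en k).2.2)) := by
    intro k P
    by_cases hij : (en k).2.1 = (en k).2.2
    · exact ⟨P, subset_rfl, fun h => absurd hij h⟩
    · obtain ⟨hPK, hPc, hPcv, hP1, hP2⟩ := P.2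
      obtain ⟨a, b, hab, hc1, hc2⟩ := sc_cut μ hμ g1 g2 hg1 hg2 P.1 hPc.measurableSet hP1 hP2 _ _ hij
        (TopologicalSpace.denseSeq (EuclideanSpace ℝ (Fin n)) (en k).1)
      refine ⟨⟨_, inter_subset_left.trans hPK, ?_, ?_, hc1, hc2⟩, inter_subset_left,
        fun _ => ⟨a, b, hab, fun x hx => hx.2⟩⟩
      · apply hPc.inter_right
        exact isClosed_le continuous_const (by fun_prop)
      · apply hPcv.inter
        intro x hx y hy s t hs ht hst
        simp only [mem_ofPred_eq, PiLp.add_apply, PiLp.smul_apply, smul_eq_mul] at *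
        have e : s = 1 - t := by linarith
        have := add_nonneg (mul_nonneg hs hx) (mul_nonneg ht hy)
        subst e
        linarith
  choose nx hnx1 hnx2 using step
  let seq : ℕ → {P // Bad P} := fun k => Nat.rec ⟨K, subset_rfl, hK, hKc, h1, h2⟩
    (fun k P => nx k P) k
  have hseq : ∀ k, seq (k + 1) = nx k (seq k) := fun k => rfl
  have hanti : Antitone fun k => (seq k).1 := antitone_nat_of_succ_le fun k => by
    rw [hseq]; exact hnx1 k _
  obtain ⟨a, v, hv, hline⟩ := sc_line hn (⋂ k, (seq k).1) (by
    intro m i j hij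
    obtain ⟨k, hk⟩ := hen (m, i, j)
    have := hnx2 k (seq k)
    rw [hk] at this
    obtain ⟨a, b, hab, h⟩ := this hij
    refine ⟨a, b, hab, fun x hx => h x ?_⟩
    exact mem_iInter.1 hx (k + 1))
  let U : Set (EuclideanSpace ℝ (Fin n)) :=
    {x | ‖(x - a) - (inner ℝ v (x - a) : ℝ) • v‖ < ε}
  have hU : IsOpen U := isOpen_lt (by fun_prop) continuous_const
  obtain ⟨k, hk⟩ := exists_subset_nhds_of_isCompact (V := fun k => (seq k).1)
    hanti.directed_ge (fun k => (seq k).2.2.1) (U := U) (by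
      intro x hx
      obtain ⟨c, rfl⟩ := hline x hx
      apply hU.mem_nhds
      simp [U, inner_smul_right, hv, hε])
  obtain ⟨p1, p2, p3, p4, p5⟩ := (seq k).2
  exact ⟨(seq k).1, p1, p2, p3, ⟨a, v, hv, fun x hx => hk hx⟩, p4, p5⟩


lemma sc_vK_lc {n : ℕ} (K : Set (EuclideanSpace ℝ (Fin n))) (hKc : Convex ℝ K) (hK : IsCompact K)
    (δ : ℝ) (t : ℝ) (ht0 : 0 < t) (ht1 : t < 1) (x y : EuclideanSpace ℝ (Fin n)) :
    volume (K ∩ closedBall x δ) ^ (1 - t) * volume (K ∩ closedBall y δ) ^ t ≤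
      volume (K ∩ closedBall ((1 - t) • x + t • y) δ) := by
  have hm : ∀ z, MeasurableSet (K ∩ closedBall z δ) := fun z =>
    hK.measurableSet.inter measurableSet_closedBall
  have := sc_plE t ht0 ht1 n ((K ∩ closedBall x δ).indicator 1) ((K ∩ closedBall y δ).indicator 1)
    ((K ∩ closedBall ((1 - t) • x + t • y) δ).indicator 1)
    (measurable_one.indicator (hm _)) (measurable_one.indicator (hm _))
    (measurable_one.indicator (hm _)) (by
      intro p q
      by_cases hp : p ∈ K ∩ closedBall x δ
      · by_cases hq : q ∈ K ∩ closedBall y δ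
        · rw [indicator_of_mem hp, indicator_of_mem hq, indicator_of_mem]
          · simp
          · refine ⟨hKc hp.1 hq.1 (by linarith) ht0.le (by ring), ?_⟩
            have h1 := hp.2
            have h2 := hq.2
            rw [mem_closedBall, dist_eq_norm] at h1 h2 ⊢
            calc ‖(1 - t) • p + t • q - ((1 - t) • x + t • y)‖
                = ‖(1 - t) • (p - x) + t • (q - y)‖ := by congr 1; module
              _ ≤ ‖(1 - t) • (p - x)‖ + ‖t • (q - y)‖ := norm_add_le _ _
              _ = (1 - t) * ‖p - x‖ + t * ‖q - y‖ := by
                rw [norm_smul, norm_smul, Real.norm_of_nonneg ht0.le,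
                  Real.norm_of_nonneg (by linarith)]
              _ ≤ (1 - t) * δ + t * δ := by
                have : 0 ≤ 1 - t := by linarith
                gcongr
              _ = δ := by ring
        · rw [indicator_of_notMem hq, ENNReal.zero_rpow_of_pos ht0]; simp
      · rw [indicator_of_notMem hp, ENNReal.zero_rpow_of_pos (by linarith)]; simp)
  simpa [lintegral_indicator_one, hm] using this

lemma sc_vK_cont {n : ℕ} (hn : 0 < n) (K : Set (EuclideanSpace ℝ (Fin n))) (hK : IsCompact K)
    (δ : ℝ) (hδ : 0 < δ) :
    Continuous fun x => (volume (K ∩ closedBall x δ)).toReal := by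
  haveI : Nonempty (Fin n) := ⟨⟨0, hn⟩⟩
  have hm : ∀ z, MeasurableSet (K ∩ closedBall z δ) := fun z =>
    hK.measurableSet.inter measurableSet_closedBall
  have heq : (fun x => (volume (K ∩ closedBall x δ)).toReal) =
      fun x => ∫ y in K, (closedBall x δ).indicator (fun _ => (1:ℝ)) y := by
    funext x
    rw [setIntegral_indicator measurableSet_closedBall]
    simp [Measure.real]
  rw [heq, continuous_iff_continuousAt]
  intro x0
  apply continuousAt_of_dominated (bound := fun _ => (1:ℝ))
  · exact Filter.Eventually.of_forall fun x =>
      (stronglyMeasurable_const.indicator measurableSet_closedBall).aestronglyMeasurable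
  · refine Filter.Eventually.of_forall fun x => Filter.Eventually.of_forall fun y => ?_
    refine (norm_indicator_le_norm_self _ _).trans (by simp)
  · exact integrableOn_const hK.measure_lt_top.ne
  · have h0 : volume (sphere x0 δ) = 0 := Measure.addHaar_sphere volume x0 δ
    have h1 : ∀ᵐ y ∂(volume.restrict K), y ∉ sphere x0 δ := by
      apply ae_restrict_of_ae
      exact measure_eq_zero_iff_ae_notMem.1 h0
    filter_upwards [h1] with y hy
    rw [mem_sphere] at hy
    rcases lt_or_gt_of_ne hy with h | h
    · have : (fun x => (closedBall x δ).indicator (fun _ => (1:ℝ)) y) =ᶠ[nhds x0] fun _ => 1 := by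
        have hev : ∀ᶠ x in nhds x0, dist y x < δ :=
          (continuous_const.dist continuous_id).continuousAt.eventually (gt_mem_nhds h)
        filter_upwards [hev] with x hx
        rw [indicator_of_mem]; exact mem_closedBall.2 (le_of_lt hx)
      exact continuousAt_const.congr this.symm
    · have : (fun x => (closedBall x δ).indicator (fun _ => (1:ℝ)) y) =ᶠ[nhds x0] fun _ => 0 := by
        have hev : ∀ᶠ x in nhds x0, δ < dist y x :=
          (continuous_const.dist continuous_id).continuousAt.eventually (lt_mem_nhds h)
        filter_upwards [hev] with x hx
        rw [indicator_of_notMem]; exact fun h => absurd (mem_closedBall.1 h) (not_le.2 hx)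
      exact continuousAt_const.congr this.symm

lemma sc_vK_lt_top {n : ℕ} (K : Set (EuclideanSpace ℝ (Fin n))) 
    (δ : ℝ) (x : EuclideanSpace ℝ (Fin n)) : volume (K ∩ closedBall x δ) < ⊤ :=
  lt_of_le_of_lt (measure_mono inter_subset_right) measure_closedBall_lt_top

lemma sc_vK_pos {n : ℕ} (K : Set (EuclideanSpace ℝ (Fin n))) (hKc : Convex ℝ K) 
    (hKb : closedBall 0 1 ⊆ K)
    (δ : ℝ) (hδ : 0 < δ) (x : EuclideanSpace ℝ (Fin n)) (hx : x ∈ K) :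
    0 < (volume (K ∩ closedBall x δ)).toReal := by
  apply ENNReal.toReal_pos _ (sc_vK_lt_top K δ x).ne
  set t := min 1 (δ / (1 + ‖x‖)) with ht
  have hx1 : 0 < 1 + ‖x‖ := by positivity
  have ht0 : 0 < t := lt_min one_pos (by positivity)
  have ht1 : t ≤ 1 := min_le_left _ _
  have ht2 : t * (1 + ‖x‖) ≤ δ := by
    rw [← le_div_iff₀ hx1]; exact min_le_right _ _
  have hsub : closedBall ((1 - t) • x) t ⊆ K ∩ closedBall x δ := by
    intro y hy
    rw [mem_closedBall, dist_eq_norm] at hy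
    set z := t⁻¹ • (y - (1 - t) • x) with hz
    have hyz : y = (1 - t) • x + t • z := by
      rw [hz, smul_inv_smul₀ ht0.ne']; module
    have hz1 : ‖z‖ ≤ 1 := by
      rw [hz, norm_smul, norm_inv, Real.norm_of_nonneg ht0.le, inv_mul_le_iff₀ ht0]; simpa using hy
    refine ⟨?_, ?_⟩
    · rw [hyz]
      exact hKc hx (hKb (by simpa using hz1)) (by linarith) ht0.le (by ring)
    · rw [mem_closedBall, dist_eq_norm, hyz]
      calc ‖(1 - t) • x + t • z - x‖ = ‖t • (z - x)‖ := by congr 1; module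
        _ = t * ‖z - x‖ := by rw [norm_smul, Real.norm_of_nonneg ht0.le]
        _ ≤ t * (‖z‖ + ‖x‖) := by gcongr; exact norm_sub_le _ _
        _ ≤ t * (1 + ‖x‖) := by gcongr
        _ ≤ δ := ht2
  exact (lt_of_lt_of_le (measure_closedBall_pos volume _ ht0) (measure_mono hsub)).ne'

lemma sc_vK_contr {n : ℕ} (K : Set (EuclideanSpace ℝ (Fin n))) (hKc : Convex ℝ K) 
    (δ : ℝ) (w a : EuclideanSpace ℝ (Fin n)) (hw : w ∈ K) (t : ℝ)
    (ht0 : 0 < t) (ht1 : t ≤ 1) :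
    t ^ n * (volume (K ∩ closedBall a δ)).toReal ≤
      (volume (K ∩ closedBall ((1 - t) • w + t • a) δ)).toReal := by
  have h := Measure.addHaar_image_homothety volume w t (K ∩ closedBall a δ)
  have hsub : AffineMap.homothety w t '' (K ∩ closedBall a δ) ⊆
      K ∩ closedBall ((1 - t) • w + t • a) δ := by
    rintro _ ⟨z, hz, rfl⟩
    have hz2 := hz.2
    rw [mem_closedBall, dist_eq_norm] at hz2
    have e : AffineMap.homothety w t z = (1 - t) • w + t • z := by
      rw [AffineMap.homothety_apply, vsub_eq_sub, vadd_eq_add]; module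
    rw [e]
    refine ⟨hKc hw hz.1 (by linarith) ht0.le (by ring), ?_⟩
    rw [mem_closedBall, dist_eq_norm]
    calc ‖(1 - t) • w + t • z - ((1 - t) • w + t • a)‖ = ‖t • (z - a)‖ := by congr 1; module
      _ = t * ‖z - a‖ := by rw [norm_smul, Real.norm_of_nonneg ht0.le]
      _ ≤ 1 * ‖z - a‖ := by gcongr
      _ ≤ δ := by simpa using hz2
  have h2 := measure_mono (μ := volume) hsub
  rw [h] at h2
  have h3 := ENNReal.toReal_mono (sc_vK_lt_top K δ _).ne h2
  rw [ENNReal.toReal_mul, ENNReal.toReal_ofReal (abs_nonneg _), finrank_euclideanSpace_fin,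
    abs_of_pos (by positivity)] at h3
  exact h3

noncomputable def sc_mu {n : ℕ} (K : Set (EuclideanSpace ℝ (Fin n))) (δ σ : ℝ) :
    Measure (EuclideanSpace ℝ (Fin n)) :=
  (volume.restrict K).withDensity fun x =>
    volume (K ∩ closedBall x δ) * ENNReal.ofReal (exp (-‖x‖ ^ 2 / (2 * σ ^ 2)))

lemma sc_dens_meas {n : ℕ} (hn : 0 < n) (K : Set (EuclideanSpace ℝ (Fin n))) (hK : IsCompact K)
    (δ σ : ℝ) (hδ : 0 < δ) : Measurable fun x : EuclideanSpace ℝ (Fin n) =>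
    volume (K ∩ closedBall x δ) * ENNReal.ofReal (exp (-‖x‖ ^ 2 / (2 * σ ^ 2))) := by
  have h1 : Measurable fun x => volume (K ∩ closedBall x δ) := by
    have : (fun x => volume (K ∩ closedBall x δ)) =
        fun x => ENNReal.ofReal (volume (K ∩ closedBall x δ)).toReal := by
      funext x
      rw [ENNReal.ofReal_toReal (sc_vK_lt_top K δ x).ne]
    rw [this]
    exact (sc_vK_cont hn K hK δ hδ).measurable.ennreal_ofReal
  exact h1.mul (by fun_prop)

lemma sc_mu_ac {n : ℕ} (K : Set (EuclideanSpace ℝ (Fin n))) (δ σ : ℝ) : sc_mu K δ σ ≪ volume :=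
  (withDensity_absolutelyContinuous _ _).trans Measure.absolutelyContinuous_restrict

lemma sc_mu_finite {n : ℕ} (K : Set (EuclideanSpace ℝ (Fin n))) (hK : IsCompact K) (δ σ : ℝ) :
    IsFiniteMeasure (sc_mu K δ σ) := by
  apply isFiniteMeasure_withDensity
  have h1 : ∀ x ∈ K, volume (K ∩ closedBall x δ) * ENNReal.ofReal (exp (-‖x‖ ^ 2 / (2 * σ ^ 2)))
      ≤ volume K := by
    intro x _
    calc _ ≤ volume K * 1 := by
          gcongr
          · exact inter_subset_left
          · rw [ENNReal.ofReal_le_one, exp_le_one_iff]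
            exact div_nonpos_of_nonpos_of_nonneg (by simp) (by positivity)
      _ = _ := mul_one _
  refine (lt_of_le_of_lt (setLIntegral_mono measurable_const h1) ?_).ne
  rw [setLIntegral_const]
  exact ENNReal.mul_lt_top hK.measure_lt_top hK.measure_lt_top

lemma sc_mu_apply {n : ℕ} (K : Set (EuclideanSpace ℝ (Fin n))) (hK : IsCompact K) (δ σ : ℝ)
    (A : Set (EuclideanSpace ℝ (Fin n))) (hA : MeasurableSet A) :
    sc_mu K δ σ A = ∫⁻ x, (A ∩ K).indicator (fun x =>
      volume (K ∩ closedBall x δ) * ENNReal.ofReal (exp (-‖x‖ ^ 2 / (2 * σ ^ 2)))) x := by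
  rw [sc_mu, withDensity_apply _ hA, Measure.restrict_restrict hA,
    lintegral_indicator (hA.inter hK.measurableSet)]

lemma sc_M {n : ℕ} (hn : 0 < n) (K : Set (EuclideanSpace ℝ (Fin n))) (hKc : Convex ℝ K)
    (hK : IsCompact K) (δ σ : ℝ) (hδ : 0 < δ) (hσ : 0 < σ)
    (A B C : Set (EuclideanSpace ℝ (Fin n))) (hA : MeasurableSet A) (hB : MeasurableSet B)
    (hC : MeasurableSet C) (t r : ℝ) (ht0 : 0 < t) (ht1 : t < 1) (hr : 0 ≤ r)
    (H : ∀ x ∈ A ∩ K, ∀ y ∈ B ∩ K, (1 - t) • x + t • y ∈ C ∧ r ≤ ‖x - y‖) :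
    ENNReal.ofReal (exp (t * (1 - t) * r ^ 2 / (2 * σ ^ 2))) *
      (sc_mu K δ σ A ^ (1 - t) * sc_mu K δ σ B ^ t) ≤ sc_mu K δ σ C := by
  have hmD := sc_dens_meas hn K hK δ σ hδ
  rw [sc_mu_apply K hK δ σ A hA, sc_mu_apply K hK δ σ B hB, sc_mu_apply K hK δ σ C hC]
  set c := t * (1 - t) * r ^ 2 / (2 * σ ^ 2) with hc
  have hmi : ∀ A, MeasurableSet A → Measurable ((A ∩ K).indicator (fun x =>
      volume (K ∩ closedBall x δ) * ENNReal.ofReal (exp (-‖x‖ ^ 2 / (2 * σ ^ 2))))) :=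
    fun A hA => hmD.indicator (hA.inter hK.measurableSet)
  have := sc_plE t ht0 ht1 n _ _ (fun z => ENNReal.ofReal (exp (-c)) * (C ∩ K).indicator (fun x =>
      volume (K ∩ closedBall x δ) * ENNReal.ofReal (exp (-‖x‖ ^ 2 / (2 * σ ^ 2)))) z)
      (hmi A hA) (hmi B hB) ((hmi C hC).const_mul _) (by
    intro x y
    by_cases hx : x ∈ A ∩ K
    swap
    · rw [indicator_of_notMem hx, ENNReal.zero_rpow_of_pos (by linarith)]; simp
    by_cases hy : y ∈ B ∩ K
    swap
    · rw [indicator_of_notMem hy, ENNReal.zero_rpow_of_pos ht0]; simp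
    obtain ⟨h1, h2⟩ := H x hx y hy
    have hz : (1 - t) • x + t • y ∈ C ∩ K :=
      ⟨h1, hKc hx.2 hy.2 (by linarith) ht0.le (by ring)⟩
    rw [indicator_of_mem hx, indicator_of_mem hy, indicator_of_mem hz]
    set z := (1 - t) • x + t • y with hzdef
    rw [ENNReal.mul_rpow_of_nonneg _ _ (by linarith : 0 ≤ 1 - t), ENNReal.mul_rpow_of_nonneg _ _ ht0.le,
      ENNReal.ofReal_rpow_of_pos (exp_pos _), ENNReal.ofReal_rpow_of_pos (exp_pos _),
      ← Real.exp_mul, ← Real.exp_mul]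
    have hlc := sc_vK_lc K hKc hK δ t ht0 ht1 x y
    have hexp : exp (-‖x‖ ^ 2 / (2 * σ ^ 2) * (1 - t)) * exp (-‖y‖ ^ 2 / (2 * σ ^ 2) * t) ≤
        exp (-c) * exp (-‖z‖ ^ 2 / (2 * σ ^ 2)) := by
      rw [← exp_add, ← exp_add, exp_le_exp, hc]
      have hzn : ‖z‖ ^ 2 = (1 - t) * ‖x‖ ^ 2 + t * ‖y‖ ^ 2 - t * (1 - t) * ‖x - y‖ ^ 2 := by
        rw [hzdef, norm_add_sq_real, norm_sub_sq_real, norm_smul, norm_smul, inner_smul_left,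
          inner_smul_right, Real.norm_of_nonneg ht0.le, Real.norm_of_nonneg (by linarith)]
        simp
        ring
      rw [hzn]
      have h3 : t * (1 - t) * r ^ 2 ≤ t * (1 - t) * ‖x - y‖ ^ 2 := by
        have : 0 ≤ t * (1 - t) := mul_nonneg ht0.le (by linarith)
        gcongr
      have h4 : t * (1 - t) * r ^ 2 / (2 * σ ^ 2) ≤ t * (1 - t) * ‖x - y‖ ^ 2 / (2 * σ ^ 2) := by
        gcongr
      have h5 : -((1 - t) * ‖x‖ ^ 2 + t * ‖y‖ ^ 2 - t * (1 - t) * ‖x - y‖ ^ 2) / (2 * σ ^ 2) =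
        -‖x‖ ^ 2 / (2 * σ ^ 2) * (1 - t) + -‖y‖ ^ 2 / (2 * σ ^ 2) * t +
          t * (1 - t) * ‖x - y‖ ^ 2 / (2 * σ ^ 2) := by ring
      rw [h5]; linarith
    calc _ = (volume (K ∩ closedBall x δ) ^ (1 - t) * volume (K ∩ closedBall y δ) ^ t) *
          ENNReal.ofReal (exp (-‖x‖ ^ 2 / (2 * σ ^ 2) * (1 - t)) * exp (-‖y‖ ^ 2 / (2 * σ ^ 2) * t)) := by
          rw [ENNReal.ofReal_mul (exp_pos _).le]; ring
      _ ≤ volume (K ∩ closedBall z δ) * ENNReal.ofReal (exp (-c) * exp (-‖z‖ ^ 2 / (2 * σ ^ 2))) :=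
          mul_le_mul' hlc (ENNReal.ofReal_le_ofReal hexp)
      _ = _ := by rw [ENNReal.ofReal_mul (exp_pos _).le]; ring)
  rw [lintegral_const_mul _ (hmi C hC)] at this
  calc _ ≤ ENNReal.ofReal (exp c) * (ENNReal.ofReal (exp (-c)) * _) := by gcongr
    _ = _ := by
      rw [← mul_assoc, ← ENNReal.ofReal_mul (exp_pos _).le, ← exp_add]; simp


lemma sc_core (T F lam : ℝ → ℝ) (M α β σ d m : ℝ) (n : ℕ) (hn : 0 < n) (hσ : 0 < σ)
    (hd0 : 0 < d) (hd : d ≤ σ / (8 * n)) (hM : 0 < M)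
    (hT0 : ∀ s, 0 ≤ T s) (hF0 : ∀ s, 0 ≤ F s) (hTF : ∀ s, T s + F s = M)
    (hTa : Antitone T) (hα : T α = M) (hβ : T β = 0)
    (h1 : ∀ a b t : ℝ, 0 < t → t < 1 → 0 < T a → 0 < T b →
      (1 - t) * log (T a) + t * log (T b) ≤ log (T ((1 - t) * a + t * b)))
    (h2 : ∀ a b t : ℝ, 0 < t → t < 1 → 0 < F a → 0 < F b →
      (1 - t) * log (F a) + t * log (F b) ≤ log (F ((1 - t) * a + t * b)))
    (h3 : ∀ a b : ℝ, a < b → exp ((b - a) ^ 2 / (4 * σ ^ 2)) * (F a * T b) ≤ M ^ 2)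
    (hl : ∀ w ∈ Icc α β, ∀ a ∈ Icc α β, ∀ t : ℝ, 0 < t → t ≤ 1 →
      lam a + n * log t ≤ lam ((1 - t) * w + t * a))
    (hm : T m = M / 2) (hαm : α ≤ m) (s' s : ℝ) (hms : m ≤ s') (hss : s' < s) (hsβ : s ≤ β)
    (hsep : d / 2 ≤ s - s' ∨ 1 / 2 ≤ |lam s' - lam s|) :
    d / (20 * σ) * T s ≤ T s' - T s := by
  have hn' : (1 : ℝ) ≤ n := by exact_mod_cast hn
  have hTs' : T s ≤ T s' := hTa hss.le
  rcases (hT0 s).eq_or_lt with h0 | h0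
  · rw [← h0]; simp; exact hT0 _
  have hTs'0 : 0 < T s' := lt_of_lt_of_le h0 hTs'
  have hTm : T s' ≤ M / 2 := hm ▸ hTa hms
  have hc : d / (20 * σ) ≤ 1 / (160 * n) := by
    calc d / (20 * σ) ≤ (σ / (8 * n)) / (20 * σ) := by gcongr
      _ = 1 / (160 * n) := by field_simp; norm_num
  have key : ∀ e : ℝ, d / (20 * σ) ≤ e → e ≤ log (T s') - log (T s) →
      d / (20 * σ) * T s ≤ T s' - T s := by
    intro e he1 he2
    have h4 : d / (20 * σ) ≤ log (T s' / T s) := by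
      rw [log_div hTs'0.ne' h0.ne']; linarith
    have h5 := log_le_sub_one_of_pos (div_pos hTs'0 h0)
    have h6 : d / (20 * σ) + 1 ≤ T s' / T s := by linarith
    rw [le_div_iff₀ h0] at h6
    linarith
  rcases hsep with hsep | hsep
  · -- case 1
    have hconc : ConcaveOn ℝ (Iic s) (fun x => log (T x)) := by
      refine ⟨convex_Iic s, ?_⟩
      intro x hx y hy a b ha hb hab
      rcases ha.eq_or_lt with ha | ha
      · have : b = 1 := by linarith
        simp [← ha, this]
      rcases hb.eq_or_lt with hb | hb
      · have : a = 1 := by linarith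
        simp [← hb, this]
      have := h1 x y b hb (by linarith) (lt_of_lt_of_le h0 (hTa hx)) (lt_of_lt_of_le h0 (hTa hy))
      have ha' : a = 1 - b := by linarith
      simpa [ha'] using this
    have hms4 : m - 4 * σ < m := by linarith
    have hF := h3 (m - 4 * σ) m hms4
    have e1 : (m - (m - 4 * σ)) ^ 2 / (4 * σ ^ 2) = 4 := by field_simp; ring
    rw [e1, hm] at hF
    have e2 : (50 : ℝ) ≤ exp 4 := by
      have : exp 4 = exp 1 ^ 4 := by rw [← exp_nat_mul]; norm_num
      rw [this]
      have := exp_one_gt_d9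
      calc (50 : ℝ) ≤ 2.7 ^ 4 := by norm_num
        _ ≤ _ := by gcongr; linarith
    have hFa : F (m - 4 * σ) ≤ M / 25 := by
      have : 50 * (F (m - 4 * σ) * (M / 2)) ≤ M ^ 2 :=
        le_trans (mul_le_mul_of_nonneg_right e2 (by have := hF0 (m - 4 * σ); positivity)) hF
      have h7 : M * (25 * F (m - 4 * σ)) ≤ M * M := by nlinarith
      have := le_of_mul_le_mul_left h7 hM
      linarith
    have hTa' : 9 / 5 * (M / 2) ≤ T (m - 4 * σ) := by have := hTF (m - 4 * σ); linarith
    have hl2 : 2 / 5 ≤ log (T (m - 4 * σ)) - log (T m) := by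
      rw [hm, ← log_div (by linarith) (by linarith)]
      have h8 : 9 / 5 ≤ T (m - 4 * σ) / (M / 2) := by rw [le_div_iff₀ (by linarith)]; exact hTa'
      have := one_sub_inv_le_log_of_pos (lt_of_lt_of_le (by norm_num) h8)
      have h9 : (T (m - 4 * σ) / (M / 2))⁻¹ ≤ (9 / 5)⁻¹ := by
        apply inv_anti₀ (by norm_num) h8
      have h10 : ((9:ℝ) / 5)⁻¹ = 5 / 9 := by norm_num
      rw [h10] at h9
      linarith
    have a1 := hconc.slope_anti_adjacent (x := m - 4 * σ) (y := s') (z := s)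
      (show m - 4 * σ ≤ s by linarith) (show s ≤ s from le_rfl) (by linarith) hss
    have a2 : (log (T s') - log (T (m - 4 * σ))) / (s' - (m - 4 * σ)) ≤
        (log (T m) - log (T (m - 4 * σ))) / (m - (m - 4 * σ)) := by
      rcases hms.eq_or_lt with h | h
      · rw [h]
      · have := hconc.neg.secant_mono (a := m - 4 * σ) (x := m) (y := s')
          (show m - 4 * σ ≤ s by linarith) (show m ≤ s by linarith) (show s' ≤ s by linarith)
          (by linarith) (by linarith) hms
        simp only [Pi.neg_apply] at this
        have r1 : ∀ p q r : ℝ, (-p - -q) / r = -((p - q) / r) := by intros; ring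
        rw [r1, r1] at this
        linarith
    have a3 : (log (T m) - log (T (m - 4 * σ))) / (m - (m - 4 * σ)) ≤ - (1 / (10 * σ)) := by
      rw [show m - (m - 4 * σ) = 4 * σ by ring, div_le_iff₀ (by linarith)]
      have : - (1 / (10 * σ)) * (4 * σ) = - (2 / 5) := by field_simp; norm_num
      rw [this]; linarith
    have a4 : (log (T s) - log (T s')) / (s - s') ≤ - (1 / (10 * σ)) :=
      a1.trans (a2.trans a3)
    rw [div_le_iff₀ (by linarith)] at a4
    apply key (1 / (10 * σ) * (s - s'))
    · calc d / (20 * σ) = 1 / (10 * σ) * (d / 2) := by field_simp; norm_num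
        _ ≤ _ := by gcongr
    · linarith
  have hlogt : ∀ t : ℝ, 0 < t → 1 / 2 + n * log t ≤ 0 → 1 / (2 * n) ≤ t⁻¹ - 1 := by
    intro t ht h
    have h5 := log_le_sub_one_of_pos (inv_pos.2 ht)
    rw [log_inv] at h5
    have : 1 / (2 * (n:ℝ)) ≤ - log t := by
      rw [div_le_iff₀ (by positivity)]
      nlinarith
    linarith
  rcases le_abs.1 hsep with hsep | hsep
  · -- lam s' ≥ lam s + 1/2
    have hsβ' : s < β := by
      rcases hsβ.eq_or_lt with h | h
      · rw [h, hβ] at h0; exact absurd h0 (lt_irrefl _)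
      · exact h
    set t := (β - s) / (β - s') with ht
    have hb' : 0 < β - s' := by linarith
    have ht0 : 0 < t := by apply div_pos <;> linarith
    have ht1 : t < 1 := by rw [ht, div_lt_one hb']; linarith
    have hts : (1 - t) * β + t * s' = s := by rw [ht]; field_simp; ring
    have hll := hl β ⟨by linarith, le_rfl⟩ s' ⟨by linarith, by linarith⟩ t ht0 ht1.le
    rw [hts] at hll
    have hti := hlogt t ht0 (by linarith)
    have hτ : 1 / (3 * (n:ℝ)) ≤ 1 - t := by
      have h5 : t * (1 / (2 * n)) ≤ 1 - t := by
        calc t * (1 / (2 * n)) ≤ t * (t⁻¹ - 1) := by gcongr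
          _ = 1 - t := by field_simp
      have h6 : t * (1 + 1 / (2 * (n:ℝ))) ≤ 1 := by linarith
      have h7 : t ≤ 1 / (1 + 1 / (2 * (n:ℝ))) := by rw [le_div_iff₀ (by positivity)]; exact h6
      have h8 : 1 / (1 + 1 / (2 * (n:ℝ))) ≤ 1 - 1 / (3 * n) := by
        rw [div_le_iff₀ (by positivity)]
        have : (1 - 1 / (3 * (n:ℝ))) * (1 + 1 / (2 * n)) = 1 + (n - 1) / (6 * n ^ 2) := by
          field_simp; ring
        rw [this]
        have : 0 ≤ ((n:ℝ) - 1) / (6 * n ^ 2) := div_nonneg (by linarith) (by positivity)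
        linarith
      linarith
    have hFs' : M / 2 ≤ F s' := by have := hTF s'; linarith
    have hFβ : F β = M := by have := hTF β; linarith
    have hFs'0 : 0 < F s' := by linarith
    have hFs0 : 0 < F s := by have := hTF s; have := hTF s'; linarith
    have hc2 := h2 β s' t ht0 ht1 (by rw [hFβ]; exact hM) hFs'0
    rw [hts, hFβ] at hc2
    have b1 : T s' / M ≤ log M - log (F s') := by
      have h5 := log_le_sub_one_of_pos (div_pos hFs'0 hM)
      rw [log_div hFs'0.ne' hM.ne'] at h5
      have : F s' / M = 1 - T s' / M := by
        rw [eq_sub_iff_add_eq, ← add_div, add_comm, hTF, div_self hM.ne']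
      linarith
    have b2 : (1 - t) * (T s' / M) ≤ log (F s / F s') := by
      rw [log_div hFs0.ne' hFs'0.ne']
      have := mul_le_mul_of_nonneg_left b1 (show 0 ≤ 1 - t by linarith)
      linarith
    have b3 := b2.trans (log_le_sub_one_of_pos (div_pos hFs0 hFs'0))
    have b4 : F s' * ((1 - t) * (T s' / M)) ≤ F s - F s' := by
      calc _ ≤ F s' * (F s / F s' - 1) := by gcongr
        _ = _ := by field_simp
    have b5 : 1 / (6 * n) * T s ≤ F s' * ((1 - t) * (T s' / M)) := by
      calc 1 / (6 * n) * T s ≤ 1 / (6 * n) * T s' := by gcongr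
        _ = M / 2 * (1 / (3 * n) * (T s' / M)) := by field_simp; norm_num
        _ ≤ _ := by gcongr
    have b6 : d / (20 * σ) * T s ≤ 1 / (6 * n) * T s := by
      refine mul_le_mul_of_nonneg_right (hc.trans ?_) h0.le
      gcongr; norm_num
    have := hTF s; have := hTF s'
    linarith
  · -- lam s ≥ lam s' + 1/2
    have hs'α : α < s' := by
      rcases (hαm.trans hms).eq_or_lt with h | h
      · rw [← h, hα] at hTm; linarith
      · exact h
    set t := (s' - α) / (s - α) with ht
    have hb' : 0 < s - α := by linarith
    have ht0 : 0 < t := by apply div_pos <;> linarith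
    have ht1 : t < 1 := by rw [ht, div_lt_one hb']; linarith
    have hts : (1 - t) * α + t * s = s' := by rw [ht]; field_simp; ring
    have hll := hl α ⟨le_rfl, by linarith⟩ s ⟨by linarith, by linarith⟩ t ht0 ht1.le
    rw [hts] at hll
    have hti := hlogt t ht0 (by linarith)
    have hc1 := h1 α s t ht0 ht1 (by rw [hα]; exact hM) h0
    rw [hts, hα] at hc1
    have b1 : log 2 ≤ log M - log (T s') := by
      rw [← log_div hM.ne' hTs'0.ne']
      apply log_le_log (by norm_num)
      rw [le_div_iff₀ hTs'0]; linarith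
    have b2 : (1 - t) * log 2 ≤ t * (log (T s') - log (T s)) := by
      have := mul_le_mul_of_nonneg_left b1 (show 0 ≤ 1 - t by linarith)
      linarith
    apply key (1 / (4 * n))
    · refine hc.trans ?_
      gcongr; norm_num
    · have h5 : (t⁻¹ - 1) * log 2 ≤ log (T s') - log (T s) := by
        have : t⁻¹ * ((1 - t) * log 2) ≤ t⁻¹ * (t * (log (T s') - log (T s))) := by gcongr
        rw [inv_mul_cancel_left₀ ht0.ne'] at this
        calc _ = t⁻¹ * ((1 - t) * log 2) := by field_simp
          _ ≤ _ := this
      refine le_trans ?_ h5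
      calc 1 / (4 * (n:ℝ)) = 1 / (2 * n) * (1 / 2) := by field_simp; norm_num
        _ ≤ _ := by
          have := log_two_gt_d9
          have h7 : 0 < 1 / (2 * (n:ℝ)) := by positivity
          exact mul_le_mul hti (by linarith) (by norm_num) (h7.le.trans hti)

lemma sc_side (ν : Measure ℝ) [IsFiniteMeasure ν] [NullSingletonClass ν] (lam : ℝ → ℝ) (α β σ d m : ℝ)
    (n : ℕ) (hn : 0 < n) (hσ : 0 < σ)
    (hd0 : 0 < d) (hd : d ≤ σ / (8 * n)) (hM : 0 < ν.real univ)
    (hα : ν (Iio α) = 0) (hβ : ν (Ioi β) = 0)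
    (h1 : ∀ a b t : ℝ, 0 < t → t < 1 → 0 < ν.real (Ici a) → 0 < ν.real (Ici b) →
      (1 - t) * log (ν.real (Ici a)) + t * log (ν.real (Ici b)) ≤
        log (ν.real (Ici ((1 - t) * a + t * b))))
    (h2 : ∀ a b t : ℝ, 0 < t → t < 1 → 0 < ν.real (Iic a) → 0 < ν.real (Iic b) →
      (1 - t) * log (ν.real (Iic a)) + t * log (ν.real (Iic b)) ≤
        log (ν.real (Iic ((1 - t) * a + t * b))))
    (h3 : ∀ a b : ℝ, a < b → exp ((b - a) ^ 2 / (4 * σ ^ 2)) *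
      (ν.real (Iic a) * ν.real (Ici b)) ≤ ν.real univ ^ 2)
    (hlc : ContinuousOn lam (Icc α β))
    (hl : ∀ w ∈ Icc α β, ∀ a ∈ Icc α β, ∀ t : ℝ, 0 < t → t ≤ 1 →
      lam a + n * log t ≤ lam ((1 - t) * w + t * a))
    (hm : ν.real (Ici m) = ν.real univ / 2) (hmI : m ∈ Icc α β)
    (A1 A2 : Set ℝ) (hA2 : IsClosed A2) (hA2s : A2 ⊆ Icc α β)
    (hsep : ∀ s ∈ A1, ∀ t ∈ A2, d ≤ |s - t| ∨ 1 ≤ |lam s - lam t|)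
    (hfar : ∀ t ∈ A2, d / 2 ≤ |m - t| ∨ 1 / 2 ≤ |lam m - lam t|) :
    d / (20 * σ) * ν.real (A2 ∩ Ici m) ≤ ν.real (Ioi m \ (A1 ∪ A2)) := by
  rcases (A2 ∩ Ici m).eq_empty_or_nonempty with he | hne
  · rw [he]; simp
  have hcl : IsClosed (A2 ∩ Ici m) := hA2.inter isClosed_Ici
  have hbdd : BddBelow (A2 ∩ Ici m) := ⟨m, fun x hx => hx.2⟩
  set s := sInf (A2 ∩ Ici m) with hs
  have hsm : s ∈ A2 ∩ Ici m := hcl.csInf_mem hne hbdd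
  have hsI := hA2s hsm.1
  have hsubI : Icc m s ⊆ Icc α β := Icc_subset_Icc hmI.1 hsI.2
  have hlc' : ContinuousOn lam (Icc m s) := hlc.mono hsubI
  let Q : Set ℝ := {t ∈ Icc m s | d / 2 ≤ s - t ∨ 1 / 2 ≤ |lam t - lam s|}
  have hQc : IsCompact Q := by
    have hcl1 : IsClosed {t ∈ Icc m s | d / 2 ≤ s - t} :=
      isClosed_Icc.isClosed_le continuousOn_const (by fun_prop)
    have hcl2 : IsClosed {t ∈ Icc m s | 1 / 2 ≤ |lam t - lam s|} :=
      isClosed_Icc.isClosed_le continuousOn_const ((hlc'.sub continuousOn_const).abs)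
    have : Q = {t ∈ Icc m s | d / 2 ≤ s - t} ∪ {t ∈ Icc m s | 1 / 2 ≤ |lam t - lam s|} := by
      ext t
      simp only [Q, mem_union, mem_ofPred_eq]
      tauto
    have hcQ : IsClosed Q := this ▸ hcl1.union hcl2
    exact isCompact_Icc.of_isClosed_subset hcQ (fun x hx => hx.1)
  have hms : m ≤ s := hsm.2
  have hmQ : m ∈ Q := by
    refine ⟨⟨le_rfl, hms⟩, ?_⟩
    have := hfar s hsm.1
    rwa [abs_sub_comm, abs_of_nonneg (by linarith : 0 ≤ s - m)] at this
  have hs'Q := hQc.sSup_mem ⟨m, hmQ⟩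
  set s' := sSup Q with hs'
  have hss : s' < s := by
    rcases hs'Q.1.2.eq_or_lt with h | h
    · have := hs'Q.2
      rw [h] at this
      simp at this
      rcases this with h | h
      · linarith
      · norm_num at h
    · exact h
  have hTF : ∀ u, ν.real (Ici u) + ν.real (Iic u) = ν.real univ := by
    intro u
    rw [measureReal_congr (Iio_ae_eq_Iic (μ := ν) (a := u)).symm, ← compl_Ici]
    exact measureReal_add_measureReal_compl measurableSet_Ici
  have hTa : Antitone fun u => ν.real (Ici u) := fun a b hab =>
    measureReal_mono (Ici_subset_Ici.2 hab)
  have hTα : ν.real (Ici α) = ν.real univ := by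
    have := hTF α
    rw [← measureReal_congr (Iio_ae_eq_Iic (μ := ν) (a := α))] at this
    rw [← this]; simp [Measure.real, hα]
  have hTβ : ν.real (Ici β) = 0 := by
    rw [← measureReal_congr (Ioi_ae_eq_Ici (μ := ν) (a := β))]; simp [Measure.real, hβ]
  have hcore := sc_core (fun u => ν.real (Ici u)) (fun u => ν.real (Iic u)) lam (ν.real univ) α β σ d m
    n hn hσ hd0 hd hM (fun _ => measureReal_nonneg) (fun _ => measureReal_nonneg) hTF hTa hTα hTβ
    h1 h2 h3 hl hm hmI.1 s' s hs'Q.1.1 hss hsI.2 hs'Q.2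
  have hA : ν.real (A2 ∩ Ici m) ≤ ν.real (Ici s) :=
    measureReal_mono (fun x hx => csInf_le hbdd hx)
  have hJ : ν.real (Ioo s' s) = ν.real (Ici s') - ν.real (Ici s) := by
    rw [← measureReal_diff (Ici_subset_Ici.2 hss.le) measurableSet_Ici]
    rw [measureReal_congr (Ioo_ae_eq_Ico (μ := ν) (a := s') (b := s))]
    congr 1
    ext x; simp
  have hsub : Ioo s' s ⊆ Ioi m \ (A1 ∪ A2) := by
    intro x hx
    have hxm : m < x := lt_of_le_of_lt hs'Q.1.1 hx.1
    have hxQ : x ∉ Q := fun h => absurd (le_csSup hQc.bddAbove h) (not_le.2 hx.1)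
    have hxQ' : ¬ (d / 2 ≤ s - x ∨ 1 / 2 ≤ |lam x - lam s|) := fun h => hxQ ⟨⟨hxm.le, hx.2.le⟩, h⟩
    push Not at hxQ'
    refine ⟨hxm, ?_⟩
    rintro (h | h)
    · rcases hsep x h s hsm.1 with h' | h'
      · rw [abs_sub_comm, abs_of_nonneg (by linarith [hx.2])] at h'
        linarith [hxQ'.1]
      · linarith [hxQ'.2]
    · exact absurd (csInf_le hbdd ⟨h, hxm.le⟩) (not_le.2 hx.2)
  calc _ ≤ d / (20 * σ) * ν.real (Ici s) := by gcongr
    _ ≤ ν.real (Ici s') - ν.real (Ici s) := hcore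
    _ = ν.real (Ioo s' s) := hJ.symm
    _ ≤ _ := measureReal_mono hsub


lemma sc_median (ν : Measure ℝ) [IsFiniteMeasure ν] [NullSingletonClass ν] (α β : ℝ) (hab : α ≤ β)
    (hα : ν (Iio α) = 0) (hβ : ν (Ioi β) = 0) :
    ∃ m ∈ Icc α β, ν.real (Ici m) = ν.real univ / 2 ∧ ν.real (Iic m) = ν.real univ / 2 := by
  have hTF : ∀ u, ν.real (Ici u) + ν.real (Iic u) = ν.real univ := by
    intro u
    rw [measureReal_congr (Iio_ae_eq_Iic (μ := ν) (a := u)).symm, ← compl_Ici]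
    exact measureReal_add_measureReal_compl measurableSet_Ici
  have hFα : ν (Iic α) = 0 := by
    rw [← measure_congr (Iio_ae_eq_Iic (μ := ν) (a := α))]; exact hα
  have hFβ : ν.real (Iic β) = ν.real univ := by
    have := hTF β
    rw [← measureReal_congr (Ioi_ae_eq_Ici (μ := ν) (a := β))] at this
    rw [← this]; simp [Measure.real, hβ]
  have hF : ∀ u, α ≤ u → ∫ x in α..u, (1:ℝ) ∂ν = ν.real (Iic u) := by
    intro u hu
    rw [intervalIntegral.integral_of_le hu]
    simp only [integral_const, smul_eq_mul, mul_one, measureReal_restrict_apply_univ]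
    have : ν.real (Iic α) = 0 := by simp [Measure.real, hFα]
    rw [← Iic_union_Ioc_eq_Iic hu, measureReal_union]
    · rw [this, zero_add]
    · exact Iic_disjoint_Ioc le_rfl
    · exact measurableSet_Ioc
  have hc : Continuous fun u => ∫ x in α..u, (1:ℝ) ∂ν :=
    intervalIntegral.continuous_primitive (fun a b => intervalIntegrable_const) α
  have := intermediate_value_Icc hab hc.continuousOn
  have hmem : ν.real univ / 2 ∈ Icc (∫ x in α..α, (1:ℝ) ∂ν) (∫ x in α..β, (1:ℝ) ∂ν) := by
    rw [hF β hab, hFβ, intervalIntegral.integral_same]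
    have : 0 ≤ ν.real univ := measureReal_nonneg
    constructor <;> linarith
  obtain ⟨m, hm, h⟩ := this hmem
  simp only [hF m hm.1] at h
  refine ⟨m, hm, ?_, h⟩
  have := hTF m
  linarith

lemma sc_twosided (ν : Measure ℝ) [IsFiniteMeasure ν] [NullSingletonClass ν] (lam : ℝ → ℝ)
    (α β σ d m : ℝ)
    (n : ℕ) (hn : 0 < n) (hσ : 0 < σ)
    (hd0 : 0 < d) (hd : d ≤ σ / (8 * n)) (hM : 0 < ν.real univ)
    (hα : ν (Iio α) = 0) (hβ : ν (Ioi β) = 0)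
    (h1 : ∀ a b t : ℝ, 0 < t → t < 1 → 0 < ν.real (Ici a) → 0 < ν.real (Ici b) →
      (1 - t) * log (ν.real (Ici a)) + t * log (ν.real (Ici b)) ≤
        log (ν.real (Ici ((1 - t) * a + t * b))))
    (h2 : ∀ a b t : ℝ, 0 < t → t < 1 → 0 < ν.real (Iic a) → 0 < ν.real (Iic b) →
      (1 - t) * log (ν.real (Iic a)) + t * log (ν.real (Iic b)) ≤
        log (ν.real (Iic ((1 - t) * a + t * b))))
    (h3 : ∀ a b : ℝ, a < b → exp ((b - a) ^ 2 / (4 * σ ^ 2)) *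
      (ν.real (Iic a) * ν.real (Ici b)) ≤ ν.real univ ^ 2)
    (hlc : ContinuousOn lam (Icc α β))
    (hl : ∀ w ∈ Icc α β, ∀ a ∈ Icc α β, ∀ t : ℝ, 0 < t → t ≤ 1 →
      lam a + n * log t ≤ lam ((1 - t) * w + t * a))
    (hm : ν.real (Ici m) = ν.real univ / 2) (hm' : ν.real (Iic m) = ν.real univ / 2)
    (hmI : m ∈ Icc α β)
    (A1 A2 : Set ℝ) (hA1 : IsClosed A1) (hA2 : IsClosed A2) (hA2s : A2 ⊆ Icc α β)
    (hsep : ∀ s ∈ A1, ∀ t ∈ A2, d ≤ |s - t| ∨ 1 ≤ |lam s - lam t|)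
    (hfar : ∀ t ∈ A2, d / 2 ≤ |m - t| ∨ 1 / 2 ≤ |lam m - lam t|) :
    d / (20 * σ) * ν.real A2 ≤ ν.real ((A1 ∪ A2)ᶜ) := by
  have hR := sc_side ν lam α β σ d m n hn hσ hd0 hd hM hα hβ h1 h2 h3 hlc hl hm hmI A1 A2 hA2 hA2s
    hsep hfar
  have hLe : d / (20 * σ) * ν.real (A2 ∩ Iic m) ≤ ν.real (Iio m \ (A1 ∪ A2)) := by
    have hmap : ∀ A, MeasurableSet A → (ν.map (fun x => -x)).real A = ν.real ((fun x => -x) ⁻¹' A) := by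
      intro A hA
      rw [map_measureReal_apply measurable_neg hA]
    have hmap0 : ∀ A, MeasurableSet A → (ν.map (fun x => -x)) A = ν ((fun x => -x) ⁻¹' A) := by
      intro A hA
      rw [Measure.map_apply measurable_neg hA]
    have pIci : ∀ a : ℝ, (fun x : ℝ => -x) ⁻¹' (Ici a) = Iic (-a) := by
      intro a; ext x; simp only [mem_preimage, mem_Ici, mem_Iic]; constructor <;> intro <;> linarith
    have pIic : ∀ a : ℝ, (fun x : ℝ => -x) ⁻¹' (Iic a) = Ici (-a) := by
      intro a; ext x; simp only [mem_preimage, mem_Ici, mem_Iic]; constructor <;> intro <;> linarith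
    have mIci : ∀ a : ℝ, (ν.map (fun x => -x)).real (Ici a) = ν.real (Iic (-a)) := by
      intro a; rw [hmap _ measurableSet_Ici, pIci]
    have mIic : ∀ a : ℝ, (ν.map (fun x => -x)).real (Iic a) = ν.real (Ici (-a)) := by
      intro a; rw [hmap _ measurableSet_Iic, pIic]
    have muniv : (ν.map (fun x => -x)).real univ = ν.real univ := by
      rw [hmap _ MeasurableSet.univ]; simp
    haveI : NullSingletonClass (ν.map (fun x => -x)) := ⟨fun x => by
      rw [hmap0 _ (measurableSet_singleton x)]
      have : (fun x : ℝ => -x) ⁻¹' {x} = {-x} := by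
        ext y; simp only [mem_preimage, mem_singleton_iff]; constructor <;> intro h <;> linarith
      rw [this]; simp⟩
    have hI : ∀ x, x ∈ Icc (-β) (-α) → -x ∈ Icc α β := fun x hx => ⟨by linarith [hx.2], by linarith [hx.1]⟩
    have := sc_side (ν.map (fun x => -x)) (fun x => lam (-x)) (-β) (-α) σ d (-m) n hn hσ hd0 hd
      (by rw [muniv]; exact hM)
      (by
        rw [hmap0 _ measurableSet_Iio]
        convert hβ using 2
        ext x; simp)
      (by
        rw [hmap0 _ measurableSet_Ioi]
        convert hα using 2
        ext x; simp)
      (by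
        intro a b t ht0 ht1
        rw [mIci, mIci, mIci, show -((1 - t) * a + t * b) = (1 - t) * (-a) + t * (-b) by ring]
        exact h2 _ _ t ht0 ht1)
      (by
        intro a b t ht0 ht1
        rw [mIic, mIic, mIic, show -((1 - t) * a + t * b) = (1 - t) * (-a) + t * (-b) by ring]
        exact h1 _ _ t ht0 ht1)
      (by
        intro a b hab
        rw [mIic, mIci, muniv, mul_comm (ν.real (Ici (-a)))]
        have := h3 (-b) (-a) (by linarith)
        rwa [show -a - -b = b - a by ring] at this)
      (hlc.comp continuousOn_neg hI)
      (by
        intro w hw a ha t ht0 ht1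
        have := hl (-w) (hI w hw) (-a) (hI a ha) t ht0 ht1
        rwa [show -((1 - t) * w + t * a) = (1 - t) * (-w) + t * (-a) by ring])
      (by rw [mIci, muniv, neg_neg]; exact hm')
      ⟨by linarith [hmI.2], by linarith [hmI.1]⟩
      ((fun x => -x) ⁻¹' A1) ((fun x => -x) ⁻¹' A2) (hA2.preimage continuous_neg)
      (by
        intro x hx
        have := hA2s hx
        exact ⟨by linarith [this.2], by linarith [this.1]⟩)
      (by
        intro s hs t ht
        have := hsep (-s) hs (-t) ht
        rwa [show -s - -t = -(s - t) by ring, abs_neg] at this)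
      (by
        intro t ht
        have := hfar (-t) ht
        simp only [neg_neg]
        rwa [show m - -t = -(-m - t) by ring, abs_neg] at this)
    rw [hmap _ ((hA2.preimage continuous_neg).measurableSet.inter measurableSet_Ici),
      hmap _ (measurableSet_Ioi.diff ((hA1.preimage continuous_neg).measurableSet.union
        (hA2.preimage continuous_neg).measurableSet))] at this
    have i1 : (fun x : ℝ => -x) ⁻¹' ((fun a => -a) ⁻¹' A2 ∩ Ici (-m)) = A2 ∩ Iic m := by
      ext x; simp only [mem_preimage, mem_inter_iff, mem_Ici, mem_Iic, neg_neg, neg_le_neg_iff]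
    have i2 : (fun x : ℝ => -x) ⁻¹' (Ioi (-m) \ ((fun a => -a) ⁻¹' A1 ∪ (fun a => -a) ⁻¹' A2)) =
        Iio m \ (A1 ∪ A2) := by
      ext x; simp only [mem_preimage, mem_sdiff, mem_union, mem_Ioi, mem_Iio, neg_neg, neg_lt_neg_iff]
    rwa [i1, i2] at this
  have e1 : ν.real A2 ≤ ν.real (A2 ∩ Ici m) + ν.real (A2 ∩ Iic m) := by
    refine le_trans (measureReal_mono ?_) (measureReal_union_le _ _)
    intro x hx
    rcases le_total m x with h | h
    · left; exact ⟨hx, h⟩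
    · right; exact ⟨hx, h⟩
  have e2 : ν.real (Ioi m \ (A1 ∪ A2)) + ν.real (Iio m \ (A1 ∪ A2)) ≤ ν.real ((A1 ∪ A2)ᶜ) := by
    rw [← measureReal_union _ (measurableSet_Iio.diff (hA1.measurableSet.union hA2.measurableSet))]
    · refine measureReal_mono ?_
      rintro x (h | h) <;> exact h.2
    · rw [Set.disjoint_left]
      intro x hx hx'
      exact lt_asymm (show m < x from hx.1) (show x < m from hx'.1)
  have : 0 ≤ d / (20 * σ) := by positivity
  nlinarith

lemma sc_oned (ν : Measure ℝ) [IsFiniteMeasure ν] [NullSingletonClass ν] (lam : ℝ → ℝ)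
    (α β σ d : ℝ) (hab : α ≤ β)
    (n : ℕ) (hn : 0 < n) (hσ : 0 < σ)
    (hd0 : 0 < d) (hd : d ≤ σ / (8 * n)) 
    (hα : ν (Iio α) = 0) (hβ : ν (Ioi β) = 0)
    (h1 : ∀ a b t : ℝ, 0 < t → t < 1 → 0 < ν.real (Ici a) → 0 < ν.real (Ici b) →
      (1 - t) * log (ν.real (Ici a)) + t * log (ν.real (Ici b)) ≤
        log (ν.real (Ici ((1 - t) * a + t * b))))
    (h2 : ∀ a b t : ℝ, 0 < t → t < 1 → 0 < ν.real (Iic a) → 0 < ν.real (Iic b) →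
      (1 - t) * log (ν.real (Iic a)) + t * log (ν.real (Iic b)) ≤
        log (ν.real (Iic ((1 - t) * a + t * b))))
    (h3 : ∀ a b : ℝ, a < b → exp ((b - a) ^ 2 / (4 * σ ^ 2)) *
      (ν.real (Iic a) * ν.real (Ici b)) ≤ ν.real univ ^ 2)
    (hlc : ContinuousOn lam (Icc α β))
    (hl : ∀ w ∈ Icc α β, ∀ a ∈ Icc α β, ∀ t : ℝ, 0 < t → t ≤ 1 →
      lam a + n * log t ≤ lam ((1 - t) * w + t * a))
    (A1 A2 : Set ℝ) (hA1 : IsClosed A1) (hA2 : IsClosed A2) (hA1s : A1 ⊆ Icc α β)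
    (hA2s : A2 ⊆ Icc α β)
    (hsep : ∀ s ∈ A1, ∀ t ∈ A2, d ≤ |s - t| ∨ 1 ≤ |lam s - lam t|) :
    d / (20 * σ) * min (ν.real A1) (ν.real A2) ≤ ν.real ((A1 ∪ A2)ᶜ) := by
  have hc0 : 0 ≤ d / (20 * σ) := by positivity
  rcases (measureReal_nonneg (μ := ν) (s := univ)).eq_or_lt with hM | hM
  · have : ν.real A1 ≤ 0 := hM ▸ measureReal_mono (subset_univ _)
    have h0 : min (ν.real A1) (ν.real A2) ≤ 0 := (min_le_left _ _).trans this
    exact (mul_nonpos_of_nonneg_of_nonpos hc0 h0).trans measureReal_nonneg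
  obtain ⟨m, hmI, hm, hm'⟩ := sc_median ν α β hab hα hβ
  by_cases hfar : ∀ t ∈ A2, d / 2 ≤ |m - t| ∨ 1 / 2 ≤ |lam m - lam t|
  · refine le_trans ?_ (sc_twosided ν lam α β σ d m n hn hσ hd0 hd hM hα hβ h1 h2 h3 hlc hl hm hm' hmI
      A1 A2 hA1 hA2 hA2s hsep hfar)
    gcongr
    exact min_le_right _ _
  · push Not at hfar
    obtain ⟨t, ht, ht1, ht2⟩ := hfar
    rw [union_comm]
    refine le_trans ?_ (sc_twosided ν lam α β σ d m n hn hσ hd0 hd hM hα hβ h1 h2 h3 hlc hl hm hm' hmI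
      A2 A1 hA2 hA1 hA1s ?_ ?_)
    · gcongr
      exact min_le_left _ _
    · intro s hs t ht
      rw [abs_sub_comm s, abs_sub_comm (lam s)]
      exact hsep t ht s hs
    · intro s hs
      by_contra! hcon
      have e1 : |s - t| ≤ |m - s| + |m - t| := by
        rw [abs_sub_comm m s]; exact abs_sub_le s m t
      have e2 : |lam s - lam t| ≤ |lam m - lam s| + |lam m - lam t| := by
        rw [abs_sub_comm (lam m) (lam s)]; exact abs_sub_le _ _ _
      rcases hsep s hs t ht with h | h <;> linarith [hcon.1, hcon.2]


lemma sc_M_real {n : ℕ} (hn : 0 < n) (K : Set (EuclideanSpace ℝ (Fin n))) (hKc : Convex ℝ K)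
    (hK : IsCompact K) (δ σ : ℝ) (hδ : 0 < δ) (hσ : 0 < σ)
    (A B C : Set (EuclideanSpace ℝ (Fin n))) (hA : MeasurableSet A) (hB : MeasurableSet B)
    (hC : MeasurableSet C) (t r : ℝ) (ht0 : 0 < t) (ht1 : t < 1) (hr : 0 ≤ r)
    (H : ∀ x ∈ A ∩ K, ∀ y ∈ B ∩ K, (1 - t) • x + t • y ∈ C ∧ r ≤ ‖x - y‖) :
    exp (t * (1 - t) * r ^ 2 / (2 * σ ^ 2)) *
      ((sc_mu K δ σ).real A ^ (1 - t) * (sc_mu K δ σ).real B ^ t) ≤ (sc_mu K δ σ).real C := by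
  haveI := sc_mu_finite K hK δ σ
  have h := sc_M hn K hKc hK δ σ hδ hσ A B C hA hB hC t r ht0 ht1 hr H
  have h2 := ENNReal.toReal_mono (measure_ne_top _ _) h
  rw [ENNReal.toReal_mul, ENNReal.toReal_mul, ENNReal.toReal_ofReal (exp_pos _).le,
    ← ENNReal.toReal_rpow, ← ENNReal.toReal_rpow] at h2
  exact h2

lemma sc_M_log {n : ℕ} (hn : 0 < n) (K : Set (EuclideanSpace ℝ (Fin n))) (hKc : Convex ℝ K)
    (hK : IsCompact K) (δ σ : ℝ) (hδ : 0 < δ) (hσ : 0 < σ)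
    (A B C : Set (EuclideanSpace ℝ (Fin n))) (hA : MeasurableSet A) (hB : MeasurableSet B)
    (hC : MeasurableSet C) (t : ℝ) (ht0 : 0 < t) (ht1 : t < 1)
    (H : ∀ x ∈ A ∩ K, ∀ y ∈ B ∩ K, (1 - t) • x + t • y ∈ C)
    (hA0 : 0 < (sc_mu K δ σ).real A) (hB0 : 0 < (sc_mu K δ σ).real B) :
    (1 - t) * log ((sc_mu K δ σ).real A) + t * log ((sc_mu K δ σ).real B) ≤
      log ((sc_mu K δ σ).real C) := by
  have h := sc_M_real hn K hKc hK δ σ hδ hσ A B C hA hB hC t 0 ht0 ht1 le_rfl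
    (fun x hx y hy => ⟨H x hx y hy, norm_nonneg _⟩)
  have h0 : t * (1 - t) * 0 ^ 2 / (2 * σ ^ 2) = 0 := by simp
  rw [h0, exp_zero, one_mul] at h
  have := log_le_log (by positivity) h
  rwa [log_mul (by positivity) (by positivity), log_rpow hA0, log_rpow hB0] at this

lemma sc_needle {n : ℕ} (hn : 0 < n) (K : Set (EuclideanSpace ℝ (Fin n))) (hKc : Convex ℝ K)
    (hK : IsCompact K) (hKb : closedBall 0 1 ⊆ K) (δ σ : ℝ) (hδ : 0 < δ) (hσ : 0 < σ)
    (d d' ε : ℝ) (hd0 : 0 < d') (hd' : d' ≤ σ / (8 * n)) (hdε : d' + 2 * ε ≤ d)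
    (hω : ∀ x ∈ K, ∀ y ∈ K, ‖x - y‖ < 2 * ε →
      |log (volume (K ∩ closedBall x δ)).toReal - log (volume (K ∩ closedBall y δ)).toReal| ≤
        (log 3 - 1) / 2)
    (S1 S2 : Set (EuclideanSpace ℝ (Fin n))) 
    (hsep : ∀ x ∈ S1, ∀ y ∈ S2, d ≤ ‖x - y‖ ∨ log 3 ≤
      |log (volume (K ∩ closedBall x δ)).toReal - log (volume (K ∩ closedBall y δ)).toReal|)
    (P : Set (EuclideanSpace ℝ (Fin n))) (hPK : P ⊆ K) (hPc : IsCompact P) (hPconv : Convex ℝ P)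
    (hPne : P.Nonempty) (a v : EuclideanSpace ℝ (Fin n)) (hv : ‖v‖ = 1)
    (hthin : ∀ x ∈ P, ‖(x - a) - (inner ℝ v (x - a) : ℝ) • v‖ < ε) :
    d' / (20 * σ) * min ((sc_mu K δ σ).real (S1 ∩ P)) ((sc_mu K δ σ).real (S2 ∩ P)) ≤
      (sc_mu K δ σ).real (P \ (S1 ∪ S2)) := by
  haveI := sc_mu_finite K hK δ σ
  set μ := sc_mu K δ σ with hμ
  let p : EuclideanSpace ℝ (Fin n) → ℝ := fun x => inner ℝ v x
  have hp : ∀ x, p x = inner ℝ v x := fun x => rfl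
  have hpc : Continuous p := by fun_prop
  have hpm : Measurable p := hpc.measurable
  have hPm : MeasurableSet P := hPc.measurableSet
  have hplin : ∀ (s t : ℝ) x y, p (s • x + t • y) = s * p x + t * p y := by
    intro s t x y
    simp only [hp, inner_add_right, inner_smul_right]
  have hvv : (inner ℝ v v : ℝ) = 1 := by rw [real_inner_self_eq_norm_sq, hv]; norm_num
  have hdiff : ∀ x ∈ P, ∀ y ∈ P, ‖x - y - (p x - p y) • v‖ < 2 * ε := by
    intro x hx y hy
    have e : x - y - (p x - p y) • v = ((x - a) - (inner ℝ v (x - a) : ℝ) • v) -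
        ((y - a) - (inner ℝ v (y - a) : ℝ) • v) := by
      simp only [hp, inner_sub_right]; module
    rw [e]
    calc _ ≤ _ := norm_sub_le _ _
      _ < 2 * ε := by linarith [hthin x hx, hthin y hy]
  have hdist : ∀ x ∈ P, ∀ y ∈ P, ‖x - y‖ ≤ |p x - p y| + 2 * ε := by
    intro x hx y hy
    have e : x - y = (p x - p y) • v + (x - y - (p x - p y) • v) := by module
    calc ‖x - y‖ ≤ ‖(p x - p y) • v‖ + ‖x - y - (p x - p y) • v‖ := by
          conv_lhs => rw [e]
          exact norm_add_le _ _
      _ ≤ _ := by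
        rw [norm_smul, hv, mul_one, Real.norm_eq_abs]
        linarith [hdiff x hx y hy]
  obtain ⟨x0, hx0, hmin⟩ := hPc.exists_isMinOn hPne hpc.continuousOn
  obtain ⟨x1, hx1, hmax⟩ := hPc.exists_isMaxOn hPne hpc.continuousOn
  have hmin' : ∀ x ∈ P, p x0 ≤ p x := fun x hx => hmin hx
  have hmax' : ∀ x ∈ P, p x ≤ p x1 := fun x hx => hmax hx
  have hαβ : p x0 ≤ p x1 := hmin' x1 hx1
  let w : ℝ → ℝ := fun t => (t - p x0) / (p x1 - p x0)
  let c : ℝ → EuclideanSpace ℝ (Fin n) := fun t => (1 - w t) • x0 + w t • x1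
  have hcc : Continuous c := by
    have : Continuous w := by fun_prop
    fun_prop
  have hw : ∀ t ∈ Icc (p x0) (p x1), 0 ≤ w t ∧ w t ≤ 1 := by
    intro t ht
    refine ⟨div_nonneg (by linarith [ht.1]) (by linarith), ?_⟩
    apply div_le_one_of_le₀ (by linarith [ht.2]) (by linarith)
  have hcP : ∀ t ∈ Icc (p x0) (p x1), c t ∈ P := by
    intro t ht
    obtain ⟨h1, h2⟩ := hw t ht
    exact hPconv hx0 hx1 (by linarith) h1 (by ring)
  have hpcx : ∀ t ∈ Icc (p x0) (p x1), p (c t) = t := by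
    intro t ht
    simp only [c]
    rw [hplin]
    rcases hαβ.eq_or_lt with h | h
    · have : t = p x0 := le_antisymm (h ▸ ht.2) ht.1
      rw [← h, this]; ring
    · have : p x1 - p x0 ≠ 0 := by linarith
      simp only [w]
      field_simp
      ring
  let lam : ℝ → ℝ := fun t => log (volume (K ∩ closedBall (c t) δ)).toReal
  have hpos : ∀ x ∈ K, 0 < (volume (K ∩ closedBall x δ)).toReal := sc_vK_pos K hKc hKb δ hδ
  have hlc : ContinuousOn lam (Icc (p x0) (p x1)) := by
    apply ContinuousOn.log
    · exact ((sc_vK_cont hn K hK δ hδ).comp hcc).continuousOn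
    · intro t ht
      exact (hpos _ (hPK (hcP t ht))).ne'
  have hl : ∀ u ∈ Icc (p x0) (p x1), ∀ b ∈ Icc (p x0) (p x1), ∀ t : ℝ, 0 < t → t ≤ 1 →
      lam b + n * log t ≤ lam ((1 - t) * u + t * b) := by
    intro u hu b hb t ht0 ht1
    have e : c ((1 - t) * u + t * b) = (1 - t) • c u + t • c b := by
      have : w ((1 - t) * u + t * b) = (1 - t) * w u + t * w b := by
        simp only [w]; ring
      simp only [c, this]; module
    have := sc_vK_contr K hKc δ (c u) (c b) (hPK (hcP u hu)) t ht0 ht1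
    rw [← e] at this
    have hb0 := hpos _ (hPK (hcP b hb))
    have h2 := log_le_log (by positivity) this
    rw [log_mul (by positivity) hb0.ne', log_pow] at h2
    simp only [lam]
    linarith
  have hlx : ∀ x ∈ P, |log (volume (K ∩ closedBall x δ)).toReal - lam (p x)| ≤ (log 3 - 1) / 2 := by
    intro x hx
    have hI : p x ∈ Icc (p x0) (p x1) := ⟨hmin' x hx, hmax' x hx⟩
    apply hω x (hPK hx) _ (hPK (hcP _ hI))
    have := hdiff x hx _ (hcP _ hI)
    rwa [hpcx _ hI, sub_self, zero_smul, sub_zero] at this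
  let ν : Measure ℝ := (μ.restrict P).map p
  have hν0 : ∀ A, MeasurableSet A → ν A = μ (p ⁻¹' A ∩ P) := by
    intro A hA
    simp only [ν]
    rw [Measure.map_apply hpm hA, Measure.restrict_apply (hpm hA)]
  have hν : ∀ A, MeasurableSet A → ν.real A = μ.real (p ⁻¹' A ∩ P) := by
    intro A hA
    rw [Measure.real, hν0 A hA, Measure.real]
  haveI : NullSingletonClass ν := ⟨fun u => by
    rw [hν0 _ (measurableSet_singleton u)]
    apply measure_mono_null inter_subset_left
    apply sc_mu_ac K δ σ
    refine sc_hyp_null v ?_ u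
    intro h; rw [h] at hv; simp at hv⟩
  let A1 := closure (p '' (S1 ∩ P))
  let A2 := closure (p '' (S2 ∩ P))
  have hA1s : A1 ⊆ Icc (p x0) (p x1) := closure_minimal (by
    rintro _ ⟨x, hx, rfl⟩; exact ⟨hmin' x hx.2, hmax' x hx.2⟩) isClosed_Icc
  have hA2s : A2 ⊆ Icc (p x0) (p x1) := closure_minimal (by
    rintro _ ⟨x, hx, rfl⟩; exact ⟨hmin' x hx.2, hmax' x hx.2⟩) isClosed_Icc
  have hsepA : ∀ s ∈ A1, ∀ t ∈ A2, d' ≤ |s - t| ∨ 1 ≤ |lam s - lam t| := by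
    let II : Set (ℝ × ℝ) := Icc (p x0) (p x1) ×ˢ Icc (p x0) (p x1)
    have hII : IsClosed II := isClosed_Icc.prod isClosed_Icc
    have hR1 : IsClosed {z ∈ II | d' ≤ |z.1 - z.2|} :=
      hII.isClosed_le continuousOn_const (by fun_prop)
    have hR2 : IsClosed {z ∈ II | 1 ≤ |lam z.1 - lam z.2|} :=
      hII.isClosed_le continuousOn_const (ContinuousOn.abs (ContinuousOn.sub
        (hlc.comp continuousOn_fst (fun z hz => hz.1))
        (hlc.comp continuousOn_snd (fun z hz => hz.2))))
    have hsub : A1 ×ˢ A2 ⊆ {z ∈ II | d' ≤ |z.1 - z.2|} ∪ {z ∈ II | 1 ≤ |lam z.1 - lam z.2|} := by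
      rw [← closure_prod_eq]
      apply closure_minimal _ (hR1.union hR2)
      rintro ⟨_, _⟩ ⟨⟨x, hx, rfl⟩, ⟨y, hy, rfl⟩⟩
      have hI : (p x, p y) ∈ II := ⟨⟨hmin' x hx.2, hmax' x hx.2⟩, ⟨hmin' y hy.2, hmax' y hy.2⟩⟩
      rcases hsep x hx.1 y hy.1 with h | h
      · left
        refine ⟨hI, ?_⟩
        have := hdist x hx.2 y hy.2
        show d' ≤ |p x - p y|
        linarith
      · right
        refine ⟨hI, ?_⟩
        show 1 ≤ |lam (p x) - lam (p y)|
        have e1 := hlx x hx.2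
        have e2 := hlx y hy.2
        rw [abs_le] at e1 e2
        rcases le_abs.1 h with h | h
        · exact le_abs.2 (Or.inl (by linarith [e1.1, e1.2, e2.1, e2.2]))
        · exact le_abs.2 (Or.inr (by linarith [e1.1, e1.2, e2.1, e2.2]))
    intro s hs t ht
    rcases hsub (show (s, t) ∈ A1 ×ˢ A2 from ⟨hs, ht⟩) with h | h
    · left; exact h.2
    · right; exact h.2
  have huniv : ν.real univ = μ.real P := by rw [hν _ MeasurableSet.univ]; simp
  have hIci : ∀ s, ν.real (Ici s) = μ.real (p ⁻¹' (Ici s) ∩ P) := fun s => hν _ measurableSet_Ici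
  have hIic : ∀ s, ν.real (Iic s) = μ.real (p ⁻¹' (Iic s) ∩ P) := fun s => hν _ measurableSet_Iic
  have hmI : ∀ s, MeasurableSet (p ⁻¹' (Ici s) ∩ P) := fun s => (hpm measurableSet_Ici).inter hPm
  have hmI' : ∀ s, MeasurableSet (p ⁻¹' (Iic s) ∩ P) := fun s => (hpm measurableSet_Iic).inter hPm
  have main := sc_oned ν lam (p x0) (p x1) σ d' hαβ n hn hσ hd0 hd'
    (by
      rw [hν0 _ measurableSet_Iio]
      convert measure_empty (μ := μ)
      rw [eq_empty_iff_forall_notMem]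
      rintro x ⟨h1, h2⟩
      exact absurd (hmin' x h2) (not_le.2 h1))
    (by
      rw [hν0 _ measurableSet_Ioi]
      convert measure_empty (μ := μ)
      rw [eq_empty_iff_forall_notMem]
      rintro x ⟨h1, h2⟩
      exact absurd (hmax' x h2) (not_le.2 h1))
    (by
      intro a b t ht0 ht1 ha hb
      rw [hIci] at ha hb
      rw [hIci, hIci, hIci]
      refine sc_M_log hn K hKc hK δ σ hδ hσ _ _ _ (hmI _) (hmI _) (hmI _) t ht0 ht1 ?_ ha hb
      rintro x ⟨⟨hx1, hx2⟩, _⟩ y ⟨⟨hy1, hy2⟩, _⟩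
      refine ⟨?_, hPconv hx2 hy2 (by linarith) ht0.le (by ring)⟩
      have hx1' : a ≤ p x := hx1
      have hy1' : b ≤ p y := hy1
      show _ ≤ p _
      rw [hplin]
      have : 0 ≤ 1 - t := by linarith
      gcongr)
    (by
      intro a b t ht0 ht1 ha hb
      rw [hIic] at ha hb
      rw [hIic, hIic, hIic]
      refine sc_M_log hn K hKc hK δ σ hδ hσ _ _ _ (hmI' _) (hmI' _) (hmI' _) t ht0 ht1 ?_ ha hb
      rintro x ⟨⟨hx1, hx2⟩, _⟩ y ⟨⟨hy1, hy2⟩, _⟩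
      refine ⟨?_, hPconv hx2 hy2 (by linarith) ht0.le (by ring)⟩
      have hx1' : p x ≤ a := hx1
      have hy1' : p y ≤ b := hy1
      show p _ ≤ _
      rw [hplin]
      have : 0 ≤ 1 - t := by linarith
      gcongr)
    (by
      intro a b hab
      rw [hIic, hIci, huniv]
      have := sc_M_real hn K hKc hK δ σ hδ hσ _ _ P (hmI' a) (hmI b) hPm (1 / 2) (b - a)
        (by norm_num) (by norm_num) (by linarith) (by
          rintro x ⟨⟨hx1, hx2⟩, _⟩ y ⟨⟨hy1, hy2⟩, _⟩
          refine ⟨hPconv hx2 hy2 (by norm_num) (by norm_num) (by norm_num), ?_⟩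
          have hx1' : p x ≤ a := hx1
          have hy1' : b ≤ p y := hy1
          have h5 : |p y - p x| ≤ ‖y - x‖ := by
            have := abs_real_inner_le_norm v (y - x)
            rw [inner_sub_right, hv, one_mul] at this
            exact this
          rw [norm_sub_rev]
          refine le_trans ?_ h5
          refine le_trans ?_ (le_abs_self _)
          linarith)
      rw [show (1:ℝ) - 1 / 2 = 1 / 2 by norm_num, ← sqrt_eq_rpow, ← sqrt_eq_rpow] at this
      have h6 := pow_le_pow_left₀ (by positivity) this 2
      rw [mul_pow, mul_pow, sq_sqrt measureReal_nonneg, sq_sqrt measureReal_nonneg, ← exp_nat_mul] at h6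
      have h7 : ((2:ℕ):ℝ) * (1 / 2 * (1 / 2) * (b - a) ^ 2 / (2 * σ ^ 2)) =
          (b - a) ^ 2 / (4 * σ ^ 2) := by
        push_cast
        field_simp
        ring
      rw [h7] at h6
      exact h6)
    hlc hl A1 A2 isClosed_closure isClosed_closure hA1s hA2s hsepA
  have g1 : μ.real (S1 ∩ P) ≤ ν.real A1 := by
    rw [hν _ isClosed_closure.measurableSet]
    refine measureReal_mono ?_
    intro x hx
    exact ⟨subset_closure ⟨x, hx, rfl⟩, hx.2⟩
  have g2 : μ.real (S2 ∩ P) ≤ ν.real A2 := by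
    rw [hν _ isClosed_closure.measurableSet]
    refine measureReal_mono ?_
    intro x hx
    exact ⟨subset_closure ⟨x, hx, rfl⟩, hx.2⟩
  have g3 : ν.real ((A1 ∪ A2)ᶜ) ≤ μ.real (P \ (S1 ∪ S2)) := by
    rw [hν _ (isClosed_closure.union isClosed_closure).measurableSet.compl]
    refine measureReal_mono ?_
    rintro x ⟨hx1, hx2⟩
    refine ⟨hx2, ?_⟩
    rintro (h | h)
    · exact hx1 (Or.inl (subset_closure ⟨x, ⟨h, hx2⟩, rfl⟩))
    · exact hx1 (Or.inr (subset_closure ⟨x, ⟨h, hx2⟩, rfl⟩))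
  refine le_trans ?_ (main.trans g3)
  gcongr

lemma sc_iso {n : ℕ} (hn : 0 < n) (K : Set (EuclideanSpace ℝ (Fin n))) (hKc : Convex ℝ K)
    (hK : IsCompact K) (hKb : closedBall 0 1 ⊆ K) (δ σ : ℝ) (hδ : 0 < δ) (hσ : 0 < σ)
    (d : ℝ) (hd0 : 0 < d) (hd' : d / 2 ≤ σ / (8 * n))
    (S1 S2 : Set (EuclideanSpace ℝ (Fin n))) (hS1 : MeasurableSet S1) (hS2 : MeasurableSet S2)
    (hS1K : S1 ⊆ K) (hS2K : S2 ⊆ K) (hdisj : Disjoint S1 S2)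
    (hsep : ∀ x ∈ S1, ∀ y ∈ S2, d ≤ ‖x - y‖ ∨ log 3 ≤
      |log (volume (K ∩ closedBall x δ)).toReal - log (volume (K ∩ closedBall y δ)).toReal|) :
    d / 2 / (20 * σ) * min ((sc_mu K δ σ).real S1) ((sc_mu K δ σ).real S2) ≤
      (sc_mu K δ σ).real (K \ (S1 ∪ S2)) := by
  haveI := sc_mu_finite K hK δ σ
  set μ := sc_mu K δ σ with hμ
  by_contra! hcon
  have hc : 0 < d / 2 / (20 * σ) := by positivity
  set c := d / 2 / (20 * σ) with hcdef
  have hmin0 : 0 < min (μ.real S1) (μ.real S2) := by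
    by_contra! h
    have h5 : c * min (μ.real S1) (μ.real S2) ≤ 0 := mul_nonpos_of_nonneg_of_nonpos hc.le h
    have : 0 ≤ μ.real (K \ (S1 ∪ S2)) := measureReal_nonneg
    linarith
  have hm1 : 0 < μ.real S1 := lt_of_lt_of_le hmin0 (min_le_left _ _)
  have hm2 : 0 < μ.real S2 := lt_of_lt_of_le hmin0 (min_le_right _ _)
  set m1 := μ.real S1
  set m2 := μ.real S2
  -- uniform continuity
  have hcont : ContinuousOn (fun x => log (volume (K ∩ closedBall x δ)).toReal) K :=
    ContinuousOn.log (sc_vK_cont hn K hK δ hδ).continuousOn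
      (fun x hx => (sc_vK_pos K hKc hKb δ hδ x hx).ne')
  have huc := hK.uniformContinuousOn_of_continuous hcont
  rw [Metric.uniformContinuousOn_iff] at huc
  have hlog3 : 0 < (log 3 - 1) / 2 := by
    have : 1 < log 3 := by
      rw [lt_log_iff_exp_lt (by norm_num)]
      linarith [exp_one_lt_d9]
    linarith
  obtain ⟨η, hη, huc⟩ := huc _ hlog3
  set ε := min (η / 2) (d / 4) with hε
  have hε0 : 0 < ε := lt_min (by positivity) (by positivity)
  have hε1 : 2 * ε ≤ η := by have := min_le_left (η / 2) (d / 4); linarith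
  have hε2 : d / 2 + 2 * ε ≤ d := by have := min_le_right (η / 2) (d / 4); linarith
  let S3 := K \ (S1 ∪ S2)
  have hS3 : MeasurableSet S3 := hK.measurableSet.diff (hS1.union hS2)
  let k := c * min 1 (m2 / m1)
  have hIgr : ∀ (A : Set (EuclideanSpace ℝ (Fin n))) (r : ℝ), MeasurableSet A →
      Integrable (A.indicator (fun _ => r)) μ := fun A r hA =>
    (integrable_const r).indicator hA
  have hInt : ∀ (A Q : Set (EuclideanSpace ℝ (Fin n))) (r : ℝ), MeasurableSet A →
      ∫ x in Q, A.indicator (fun _ => r) x ∂μ = r * μ.real (A ∩ Q) := by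
    intro A Q r hA
    rw [integral_indicator hA, Measure.restrict_restrict hA]
    simp [mul_comm]
  have hsplit : ∀ (A B Q : Set (EuclideanSpace ℝ (Fin n))) (r s : ℝ), MeasurableSet A → MeasurableSet B →
      ∫ x in Q, (A.indicator (fun _ => r) x - B.indicator (fun _ => s) x) ∂μ =
        r * μ.real (A ∩ Q) - s * μ.real (B ∩ Q) := by
    intro A B Q r s hA hB
    rw [integral_sub (hIgr A r hA).integrableOn (hIgr B s hB).integrableOn, hInt A Q r hA, hInt B Q s hB]
  obtain ⟨P, hPK, hPc, hPconv, ⟨a, v, hv, hthin⟩, hP1, hP2⟩ := sc_localize hn μ (sc_mu_ac K δ σ)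
    (fun x => S1.indicator (fun _ => m2) x - S2.indicator (fun _ => m1) x)
    (fun x => S3.indicator (fun _ => 1) x - S1.indicator (fun _ => k) x)
    ((hIgr _ _ hS1).sub (hIgr _ _ hS2)) ((hIgr _ _ hS3).sub (hIgr _ _ hS1))
    K hK hKc (by
      rw [hsplit _ _ _ _ _ hS1 hS2, inter_eq_left.2 hS1K, inter_eq_left.2 hS2K]
      show m2 * m1 - m1 * m2 = 0
      ring)
    (by
      rw [hsplit _ _ _ _ _ hS3 hS1, inter_eq_left.2 hS1K, inter_eq_left.2 sdiff_subset]
      show 1 * μ.real (K \ (S1 ∪ S2)) - c * min 1 (m2 / m1) * m1 < 0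
      have : min 1 (m2 / m1) * m1 = min m1 m2 := by
        rw [min_mul_of_nonneg _ _ hm1.le, one_mul, div_mul_cancel₀ _ hm1.ne']
      rw [mul_assoc, this]
      linarith)
    ε hε0
  rw [hsplit _ _ _ _ _ hS1 hS2] at hP1
  rw [hsplit _ _ _ _ _ hS3 hS1] at hP2
  have hne : P.Nonempty := by
    by_contra! h
    rw [h] at hP2
    simp at hP2
  have hneedle := sc_needle hn K hKc hK hKb δ σ hδ hσ d (d / 2) ε (by positivity) hd' hε2
    (by
      intro x hx y hy hxy
      have := huc x hx y hy (by rw [dist_eq_norm]; linarith)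
      rw [Real.dist_eq] at this
      exact this.le)
    S1 S2 hsep P hPK hPc hPconv hne a v hv hthin
  have hS3P : S3 ∩ P = P \ (S1 ∪ S2) := by
    ext x
    constructor
    · rintro ⟨h1, h2⟩; exact ⟨h2, h1.2⟩
    · rintro ⟨h1, h2⟩; exact ⟨⟨hPK h1, h2⟩, h1⟩
  rw [hS3P] at hP2
  rw [← hμ, ← hcdef] at hneedle
  have e1 : m2 / m1 * μ.real (S1 ∩ P) = μ.real (S2 ∩ P) := by
    field_simp
    linarith
  have e2 : min 1 (m2 / m1) * μ.real (S1 ∩ P) = min (μ.real (S1 ∩ P)) (μ.real (S2 ∩ P)) := by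
    rw [min_mul_of_nonneg _ _ measureReal_nonneg, one_mul, e1]
  have e3 : k * μ.real (S1 ∩ P) = c * min (μ.real (S1 ∩ P)) (μ.real (S2 ∩ P)) := by
    rw [← e2]; simp only [k]; ring
  rw [e3] at hP2
  linarith


lemma sc_geom {n : ℕ} (A B e : EuclideanSpace ℝ (Fin n)) (δ : ℝ) (hA : ‖A‖ ≤ δ) (hB : ‖B‖ ≤ δ)
    (h : ‖A‖ ≤ ‖A - e‖) : ‖(1 / 2 : ℝ) • (A + B + e)‖ ^ 2 ≤ δ ^ 2 + ‖e‖ ^ 2 := by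
  have h1 : ‖A‖ ^ 2 ≤ ‖A - e‖ ^ 2 := by gcongr
  rw [norm_sub_sq_real] at h1
  have h2 : 0 ≤ ‖(A - B) + e‖ ^ 2 := by positivity
  rw [norm_add_sq_real, norm_sub_sq_real, inner_sub_left] at h2
  have hA2 : ‖A‖ ^ 2 ≤ δ ^ 2 := by gcongr
  have hB2 : ‖B‖ ^ 2 ≤ δ ^ 2 := by gcongr
  rw [norm_smul, mul_pow, norm_add_sq_real, norm_add_sq_real, inner_add_left]
  norm_num
  nlinarith

lemma sc_cx {n : ℕ} (a b : EuclideanSpace ℝ (Fin n)) (t : ℝ) (h0 : 0 ≤ t) (h1 : t ≤ 1) :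
    ‖(1 - t) • a + t • b‖ ^ 2 ≤ (1 - t) * ‖a‖ ^ 2 + t * ‖b‖ ^ 2 := by
  have e : ‖(1 - t) • a + t • b‖ ^ 2 = (1 - t) * ‖a‖ ^ 2 + t * ‖b‖ ^ 2 - t * (1 - t) * ‖a - b‖ ^ 2 := by
    rw [norm_add_sq_real, norm_sub_sq_real, norm_smul, norm_smul, inner_smul_left,
          inner_smul_right, Real.norm_of_nonneg h0, Real.norm_of_nonneg (by linarith)]
    simp
    ring
  have : 0 ≤ t * (1 - t) * ‖a - b‖ ^ 2 := by
    have : 0 ≤ 1 - t := by linarith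
    positivity
  linarith

lemma sc_overlap {n : ℕ} (hn : 0 < n) (K : Set (EuclideanSpace ℝ (Fin n))) (hKc : Convex ℝ K)
    (hK : IsCompact K) (δ : ℝ) (hδ : 0 < δ) (x y : EuclideanSpace ℝ (Fin n)) (hx : x ∈ K) (hy : y ∈ K)
    (hxy : ‖x - y‖ ≤ δ / (2 * √n)) :
    3 / 7 * min (volume (K ∩ closedBall x δ)).toReal (volume (K ∩ closedBall y δ)).toReal ≤
      (volume (K ∩ closedBall x δ ∩ closedBall y δ)).toReal := by
  have hn1 : (1:ℝ) ≤ n := by exact_mod_cast hn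
  have hKm := hK.measurableSet
  set C := K ∩ closedBall x δ ∩ closedBall y δ with hC
  set M0 := (K ∩ closedBall x δ) \ closedBall y δ with hM0
  set M1 := (K ∩ closedBall y δ) \ closedBall x δ with hM1
  have hmB : ∀ z, MeasurableSet (K ∩ closedBall z δ) := fun z => hKm.inter measurableSet_closedBall
  have hmC : MeasurableSet C := (hmB _).inter measurableSet_closedBall
  have hm0 : MeasurableSet M0 := (hmB _).diff measurableSet_closedBall
  have hm1 : MeasurableSet M1 := (hmB _).diff measurableSet_closedBall
  set z := (1 / 2 : ℝ) • (x + y) with hz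
  set t : ℝ := 1 / (4 * n) with ht
  have ht0 : 0 < t := by positivity
  have ht1 : t ≤ 1 / 4 := by
    rw [ht]
    apply one_div_le_one_div_of_le (by norm_num)
    linarith
  have hzK : z ∈ K := by
    have := hKc hx hy (a := 1 / 2) (b := 1 / 2) (by norm_num) (by norm_num) (by norm_num)
    rw [hz, smul_add]; exact this
  have hd2 : ‖x - y‖ ^ 2 ≤ t * δ ^ 2 := by
    have : ‖x - y‖ ^ 2 ≤ (δ / (2 * √n)) ^ 2 := by gcongr
    rw [div_pow, mul_pow, sq_sqrt (by linarith)] at this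
    rw [ht]
    calc _ ≤ _ := this
      _ = _ := by ring
  let φ : EuclideanSpace ℝ (Fin n) → EuclideanSpace ℝ (Fin n) := fun w => (1 - t) • w + t • z
  have hφc : Continuous φ := by fun_prop
  let C' := φ ⁻¹' C
  have hmC' : MeasurableSet C' := hφc.measurable hmC
  have hkey : ∀ p ∈ M0, ∀ q ∈ M1, (1 - (1 / 2 : ℝ)) • p + (1 / 2 : ℝ) • q ∈ C' := by
    intro p hp q hq
    have hp1 : ‖p - x‖ ≤ δ := by simpa [dist_eq_norm] using hp.1.2
    have hq1 : ‖q - y‖ ≤ δ := by simpa [dist_eq_norm] using hq.1.2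
    have hp2 : δ < ‖p - y‖ := by simpa [dist_eq_norm] using hp.2
    have hq2 : δ < ‖q - x‖ := by simpa [dist_eq_norm] using hq.2
    set w := (1 - (1 / 2 : ℝ)) • p + (1 / 2 : ℝ) • q with hw
    have hwK : w ∈ K := hKc hp.1.1 hq.1.1 (by norm_num) (by norm_num) (by norm_num)
    have g1 : ‖w - x‖ ^ 2 ≤ δ ^ 2 + ‖x - y‖ ^ 2 := by
      have := sc_geom (p - x) (q - y) (y - x) δ hp1 hq1 (by
        rw [sub_sub_sub_cancel_right]; linarith)
      rw [norm_sub_rev y x] at this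
      convert this using 3
      rw [hw]; module
    have g2 : ‖w - y‖ ^ 2 ≤ δ ^ 2 + ‖x - y‖ ^ 2 := by
      have := sc_geom (q - y) (p - x) (x - y) δ hq1 hp1 (by
        rw [sub_sub_sub_cancel_right]; linarith)
      convert this using 3
      rw [hw]; module
    have g3 : ‖z - x‖ ^ 2 = ‖x - y‖ ^ 2 / 4 := by
      have : z - x = (-(1 / 2) : ℝ) • (x - y) := by rw [hz]; module
      rw [this, norm_smul, mul_pow]; norm_num; ring
    have g4 : ‖z - y‖ ^ 2 = ‖x - y‖ ^ 2 / 4 := by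
      have : z - y = ((1 / 2) : ℝ) • (x - y) := by rw [hz]; module
      rw [this, norm_smul, mul_pow]; norm_num; ring
    have gen : ∀ u, ‖w - u‖ ^ 2 ≤ δ ^ 2 + ‖x - y‖ ^ 2 → ‖z - u‖ ^ 2 = ‖x - y‖ ^ 2 / 4 →
        φ w ∈ closedBall u δ := by
      intro u h1 h2
      rw [mem_closedBall, dist_eq_norm]
      refine (pow_le_pow_iff_left₀ (norm_nonneg _) hδ.le two_ne_zero).1 ?_
      have e : φ w - u = (1 - t) • (w - u) + t • (z - u) := by simp only [φ]; module
      rw [e]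
      have h3 := sc_cx (w - u) (z - u) t ht0.le (by linarith)
      rw [h2] at h3
      have h4 : (1 - t) * ‖w - u‖ ^ 2 ≤ (1 - t) * (δ ^ 2 + ‖x - y‖ ^ 2) :=
        mul_le_mul_of_nonneg_left h1 (by linarith)
      have h5 : 0 ≤ t * ‖x - y‖ ^ 2 := by positivity
      nlinarith
    refine ⟨⟨?_, gen x g1 g3⟩, gen y g2 g4⟩
    exact hKc hwK hzK (by linarith) ht0.le (by ring)
  have hpl := sc_plE (1 / 2) (by norm_num) (by norm_num) n (M0.indicator 1) (M1.indicator 1)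
    (C'.indicator 1) (measurable_one.indicator hm0) (measurable_one.indicator hm1)
    (measurable_one.indicator hmC') (by
      intro p q
      by_cases hp : p ∈ M0
      swap
      · rw [indicator_of_notMem hp, ENNReal.zero_rpow_of_pos (by norm_num)]; simp
      by_cases hq : q ∈ M1
      swap
      · rw [indicator_of_notMem hq, ENNReal.zero_rpow_of_pos (by norm_num)]; simp
      rw [indicator_of_mem hp, indicator_of_mem hq, indicator_of_mem (hkey p hp q hq)]
      simp)
  rw [lintegral_indicator_one hm0, lintegral_indicator_one hm1, lintegral_indicator_one hmC'] at hpl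
  have hmin : min (volume M0) (volume M1) ≤ volume C' := by
    refine le_trans ?_ hpl
    calc min (volume M0) (volume M1) = (min (volume M0) (volume M1)) ^ (1 - 1 / 2 : ℝ) *
          (min (volume M0) (volume M1)) ^ (1 / 2 : ℝ) := by
          rw [← ENNReal.rpow_add_of_nonneg _ _ (by norm_num) (by norm_num)]
          norm_num
      _ ≤ _ := by
        gcongr
        · exact min_le_left _ _
        · exact min_le_right _ _
  have hhom := Measure.addHaar_image_homothety volume z (1 - t) C'
  have hsub : AffineMap.homothety z (1 - t) '' C' ⊆ C := by
    rintro _ ⟨u, hu, rfl⟩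
    have e : AffineMap.homothety z (1 - t) u = φ u := by
      rw [AffineMap.homothety_apply, vsub_eq_sub, vadd_eq_add]; simp only [φ]; module
    rw [e]; exact hu
  have h2 := measure_mono (μ := volume) hsub
  rw [hhom, finrank_euclideanSpace_fin, abs_of_pos (pow_pos (by linarith) n)] at h2
  have hbern : 3 / 4 ≤ (1 - t) ^ n := by
    have := one_add_mul_le_pow (a := -t) (by linarith) n
    have e : (n:ℝ) * -t = -(1 / 4) := by rw [ht]; field_simp
    rw [e] at this
    rw [sub_eq_add_neg]; linarith
  have hCtop : volume C ≠ ⊤ := (lt_of_le_of_lt (measure_mono inter_subset_right)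
    measure_closedBall_lt_top).ne
  have h0top : volume M0 ≠ ⊤ := (lt_of_le_of_lt (measure_mono sdiff_subset) (sc_vK_lt_top K δ x)).ne
  have h1top : volume M1 ≠ ⊤ := (lt_of_le_of_lt (measure_mono sdiff_subset) (sc_vK_lt_top K δ y)).ne
  have h3 : ENNReal.ofReal ((1 - t) ^ n) * min (volume M0) (volume M1) ≤ volume C :=
    le_trans (by gcongr) h2
  have h4 := ENNReal.toReal_mono hCtop h3
  rw [ENNReal.toReal_mul, ENNReal.toReal_ofReal (by positivity), ENNReal.toReal_min h0top h1top] at h4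
  have ex : (volume (K ∩ closedBall x δ)).toReal = (volume C).toReal + (volume M0).toReal := by
    rw [← ENNReal.toReal_add hCtop h0top, measure_inter_add_sdiff _ measurableSet_closedBall]
  have ey : (volume (K ∩ closedBall y δ)).toReal = (volume C).toReal + (volume M1).toReal := by
    have : C = (K ∩ closedBall y δ) ∩ closedBall x δ := by
      rw [hC, inter_assoc, inter_assoc, inter_comm (closedBall x δ)]
    rw [← ENNReal.toReal_add hCtop h1top, this, measure_inter_add_sdiff _ measurableSet_closedBall]
  rw [ex, ey, min_add_add_left]
  have h5 : 0 ≤ min (volume M0).toReal (volume M1).toReal := le_min ENNReal.toReal_nonneg ENNReal.toReal_nonneg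
  have h6 := mul_le_mul_of_nonneg_right hbern h5
  linarith


lemma sc_numeric (a b s1 s2 s3 J1 J2 c q : ℝ) (hq0 : 0 ≤ q) (hq : q ≤ 1) (hc : c = q / 80)
    (hs1 : s1 ≤ a) (hs2 : s2 ≤ b) (hs3 : s3 = (a - s1) + (b - s2)) 
    (h : c * min s1 s2 ≤ s3) (hJ1 : 1 / 16 * (a - s1) ≤ J1) (hJ2 : 1 / 16 * (b - s2) ≤ J2) 
    (ha : 0 ≤ a) (hb : 0 ≤ b) :
    1 / 10000 * q * min a b ≤ 1 / 2 * (J1 + J2) := by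
  have h1 : min a b - s3 ≤ min s1 s2 := by
    apply le_min
    · have := min_le_left a b; linarith
    · have := min_le_right a b; linarith
  have hc0 : 0 ≤ c := by rw [hc]; positivity
  have h2 : c * (min a b - s3) ≤ s3 := (mul_le_mul_of_nonneg_left h1 hc0).trans h
  have hs30 : 0 ≤ s3 := by linarith
  have h3 : c * s3 ≤ 1 / 80 * s3 := by
    apply mul_le_mul_of_nonneg_right _ hs30
    rw [hc]; linarith
  have hm : 0 ≤ min a b := le_min ha hb
  have h4 : c * min a b ≤ 81 / 80 * s3 := by linarith
  have h5 : 0 ≤ q * min a b := by positivity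
  rw [hc] at h4
  linarith

lemma sc_fratio {n : ℕ} (σ δ : ℝ) (hσ : 0 < σ) (hn : 0 < n) (hδ : 0 < δ) (hδσ : δ ≤ σ / (8 * √n))
    (x y : EuclideanSpace ℝ (Fin n)) (hx : ‖x‖ ≤ 4 * σ * √n) (hy : ‖y‖ ≤ 4 * σ * √n)
    (hxy : ‖y - x‖ ≤ δ) :
    3 / 5 ≤ min 1 (exp (-‖y‖ ^ 2 / (2 * σ ^ 2)) / exp (-‖x‖ ^ 2 / (2 * σ ^ 2))) := by
  have hs : 0 < √(n:ℝ) := sqrt_pos.2 (by exact_mod_cast hn)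
  apply le_min (by norm_num)
  rw [← exp_sub]
  have h1 : ‖y‖ - ‖x‖ ≤ δ := (norm_sub_norm_le y x).trans hxy
  have h2 : ‖y‖ ^ 2 - ‖x‖ ^ 2 ≤ σ ^ 2 := by
    have e : ‖y‖ ^ 2 - ‖x‖ ^ 2 = (‖y‖ - ‖x‖) * (‖y‖ + ‖x‖) := by ring
    have h3 : 0 ≤ ‖y‖ + ‖x‖ := by positivity
    calc ‖y‖ ^ 2 - ‖x‖ ^ 2 ≤ δ * (‖y‖ + ‖x‖) := by rw [e]; gcongr
      _ ≤ δ * (8 * σ * √n) := by gcongr; linarith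
      _ ≤ (σ / (8 * √n)) * (8 * σ * √n) := by gcongr
      _ = σ ^ 2 := by field_simp
  have h3 : -(1 / 2) ≤ -‖y‖ ^ 2 / (2 * σ ^ 2) - -‖x‖ ^ 2 / (2 * σ ^ 2) := by
    rw [← sub_div, le_div_iff₀ (by positivity)]
    linarith
  refine le_trans ?_ (exp_le_exp.2 h3)
  have h4 : exp (-(1 / 2)) ^ 2 * exp 1 = 1 := by
    rw [← exp_nat_mul, ← exp_add]; norm_num
  have h5 := exp_one_lt_d9
  by_contra! hcon
  have h6 : exp (-(1 / 2)) ^ 2 ≤ (3 / 5) ^ 2 := by gcongr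
  have h7 := exp_pos (1:ℝ)
  nlinarith

lemma sc_P_bounds {n : ℕ} (hn : 0 < n) (K : Set (EuclideanSpace ℝ (Fin n))) (hKc : Convex ℝ K)
    (hK : IsCompact K) (hKb : closedBall 0 1 ⊆ K) (δ σ : ℝ) (hδ : 0 < δ) (hσ : 0 < σ)
    (hKbdd : K ⊆ closedBall (0 : EuclideanSpace ℝ (Fin n)) (4 * σ * √n))
    (hδσ : δ ≤ σ / (8 * √n))
    (f : EuclideanSpace ℝ (Fin n) → ℝ)
    (hf : ∀ x, f x = Real.exp (-‖x‖^2 / (2 * σ^2)))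
    (A : Set (EuclideanSpace ℝ (Fin n))) (hA : MeasurableSet A) (hAK : A ⊆ K)
    (Q : EuclideanSpace ℝ (Fin n) → ℝ)
    (hQ : ∀ x, Q x = (∫ y in A ∩ K ∩ closedBall x δ, min 1 (f y / f x)) /
      (volume (K ∩ closedBall x δ)).toReal) :
    Measurable Q ∧ (∀ x, 0 ≤ Q x) ∧ (∀ x, Q x ≤ 1) ∧
    (∀ x ∈ K, 3 / 5 * (volume (A ∩ closedBall x δ)).toReal ≤ Q x * (volume (K ∩ closedBall x δ)).toReal) := by
  have hAKe : A ∩ K = A := inter_eq_left.2 hAK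
  simp only [hAKe] at hQ
  have hfc : Continuous f := by
    have : f = fun x => Real.exp (-‖x‖^2 / (2 * σ^2)) := funext hf
    rw [this]; fun_prop
  have hfpos : ∀ x, 0 < f x := fun x => by rw [hf]; exact exp_pos _
  have htop : ∀ x, volume (A ∩ closedBall x δ) ≠ ⊤ := fun x => (sc_vK_lt_top A δ x).ne
  have hle : ∀ x, (volume (A ∩ closedBall x δ)).toReal ≤ (volume (K ∩ closedBall x δ)).toReal :=
    fun x => ENNReal.toReal_mono (sc_vK_lt_top K δ x).ne (measure_mono (inter_subset_inter_left _ hAK))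
  have hmeas : ∀ x, MeasurableSet (A ∩ closedBall x δ) := fun x => hA.inter measurableSet_closedBall
  have hIgr : ∀ x, IntegrableOn (fun y => min 1 (f y / f x)) (A ∩ closedBall x δ) := by
    intro x
    refine Integrable.mono' (g := fun _ => (1:ℝ)) (integrableOn_const (htop x)) ?_ ?_
    · exact (continuous_const.min (hfc.div_const _)).aestronglyMeasurable
    · refine Filter.Eventually.of_forall fun y => ?_
      have h0 : 0 ≤ min 1 (f y / f x) := le_min zero_le_one (div_pos (hfpos y) (hfpos x)).le
      rw [Real.norm_of_nonneg h0]
      exact min_le_left _ _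
  have hN0 : ∀ x, 0 ≤ ∫ y in A ∩ closedBall x δ, min 1 (f y / f x) := fun x =>
    integral_nonneg fun y => le_min zero_le_one (div_pos (hfpos y) (hfpos x)).le
  have hN1 : ∀ x, ∫ y in A ∩ closedBall x δ, min 1 (f y / f x) ≤ (volume (A ∩ closedBall x δ)).toReal := by
    intro x
    have := setIntegral_mono (hIgr x) (integrableOn_const (htop x) (C := (1:ℝ)))
      (fun y => min_le_left 1 (f y / f x))
    simpa [Measure.real] using this
  refine ⟨?_, ?_, ?_, ?_⟩
  · have hQ' : Q = fun x => (∫ y in A, ({z : EuclideanSpace ℝ (Fin n) × EuclideanSpace ℝ (Fin n) |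
        dist z.2 z.1 ≤ δ}.indicator (fun z => min 1 (f z.2 / f z.1))) (x, y)) /
        (volume (K ∩ closedBall x δ)).toReal := by
      funext x
      rw [hQ, ← setIntegral_indicator measurableSet_closedBall]
      rfl
    rw [hQ']
    apply Measurable.div
    · apply StronglyMeasurable.measurable
      apply StronglyMeasurable.integral_prod_right'
      apply Measurable.stronglyMeasurable
      apply Measurable.indicator
      · exact measurable_const.min ((hfc.measurable.comp measurable_snd).div
          (hfc.measurable.comp measurable_fst))
      · exact measurableSet_le (measurable_snd.dist measurable_fst) measurable_const
    · exact (sc_vK_cont hn K hK δ hδ).measurable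
  · intro x
    rw [hQ]
    exact div_nonneg (hN0 x) ENNReal.toReal_nonneg
  · intro x
    rw [hQ]
    exact div_le_one_of_le₀ ((hN1 x).trans (hle x)) ENNReal.toReal_nonneg
  · intro x hx
    rw [hQ, div_mul_cancel₀ _ (sc_vK_pos K hKc hKb δ hδ x hx).ne']
    have := setIntegral_mono_on (integrableOn_const (htop x) (C := (3 / 5:ℝ))) (hIgr x) (hmeas x)
      (by
        intro y hy
        rw [hf, hf]
        apply sc_fratio σ δ hσ hn hδ hδσ x y
        · simpa using hKbdd hx
        · simpa using hKbdd (hAK hy.1)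
        · simpa [dist_eq_norm] using hy.2)
    simpa [Measure.real, mul_comm] using this

lemma sc_main
    (n : ℕ) (σ δ : ℝ) (hσ : 0 < σ)
    (K : Set (EuclideanSpace ℝ (Fin n)))
    (hKconv : Convex ℝ K) (hKcomp : IsCompact K)
    (hKball : closedBall (0 : EuclideanSpace ℝ (Fin n)) 1 ⊆ K)
    (hKbdd : K ⊆ closedBall (0 : EuclideanSpace ℝ (Fin n)) (4 * σ * Real.sqrt n))
    (hδ : 0 < δ) (hδσ : δ ≤ σ / (8 * Real.sqrt n))
    (f : EuclideanSpace ℝ (Fin n) → ℝ)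
    (hf : ∀ x, f x = Real.exp (-‖x‖^2 / (2 * σ^2)))
    (ℓ : EuclideanSpace ℝ (Fin n) → ℝ)
    (hℓ : ∀ x, ℓ x = (volume (K ∩ closedBall x δ)).toReal /
      (volume (closedBall (0 : EuclideanSpace ℝ (Fin n)) δ)).toReal)
    (P : EuclideanSpace ℝ (Fin n) → Set (EuclideanSpace ℝ (Fin n)) → ℝ)
    (hP : ∀ x S, P x S = (∫ y in S ∩ K ∩ closedBall x δ, min 1 (f y / f x)) /
      (volume (K ∩ closedBall x δ)).toReal)
    (Z : ℝ) (hZ : Z = ∫ x in K, ℓ x * f x) (hZpos : 0 < Z)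
    (pi : Set (EuclideanSpace ℝ (Fin n)) → ℝ)
    (hpi : ∀ S, pi S = (∫ x in S, ℓ x * f x) / Z)
    (S : Set (EuclideanSpace ℝ (Fin n))) (hS : MeasurableSet S) (hSK : S ⊆ K)
    (hS0 : 0 < pi S) (hS1 : pi S < 1) :
    (1 / 10000 : ℝ) * (δ / (σ * Real.sqrt n)) * min (pi S) (pi (K \ S)) ≤
      (1 / 2) * ((∫ x in S, P x (K \ S) * (ℓ x * f x)) / Z +
        (∫ x in K \ S, P x S * (ℓ x * f x)) / Z) := by
  have hn : 0 < n := by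
    rcases Nat.eq_zero_or_pos n with h | h
    · rw [h] at hδσ
      simp at hδσ
      linarith
    · exact h
  have hn1 : (1:ℝ) ≤ n := by exact_mod_cast hn
  have hs1 : 1 ≤ √(n:ℝ) := one_le_sqrt.2 hn1
  have hs0 : 0 < √(n:ℝ) := by linarith
  have hss : √(n:ℝ) * √n = n := mul_self_sqrt (by linarith)
  haveI := sc_mu_finite K hKcomp δ σ
  set μ := sc_mu K δ σ with hμ
  have hKm := hKcomp.measurableSet
  have hTm : MeasurableSet (K \ S) := hKm.diff hS
  set V := (volume (closedBall (0 : EuclideanSpace ℝ (Fin n)) δ)).toReal with hV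
  have hV0 : 0 < V := ENNReal.toReal_pos (measure_closedBall_pos volume _ hδ).ne'
    measure_closedBall_lt_top.ne
  have hconv : ∀ (A : Set (EuclideanSpace ℝ (Fin n))) (g : EuclideanSpace ℝ (Fin n) → ℝ),
      MeasurableSet A → A ⊆ K → ∫ x in A, g x * (ℓ x * f x) = (∫ x in A, g x ∂μ) / V := by
    intro A g hA hAK
    have e1 : μ.restrict A = (volume.restrict A).withDensity fun x =>
        volume (K ∩ closedBall x δ) * ENNReal.ofReal (exp (-‖x‖ ^ 2 / (2 * σ ^ 2))) := by
      rw [hμ, sc_mu, restrict_withDensity hA, Measure.restrict_restrict hA, inter_eq_left.2 hAK]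
    rw [e1, integral_withDensity_eq_integral_toReal_smul (sc_dens_meas hn K hKcomp δ σ hδ)
      (Filter.Eventually.of_forall fun x => ENNReal.mul_lt_top (sc_vK_lt_top K δ x) ENNReal.ofReal_lt_top),
      ← integral_div]
    congr 1
    funext x
    rw [hℓ, hf, ENNReal.toReal_mul, ENNReal.toReal_ofReal (exp_pos _).le, smul_eq_mul]
    ring
  have hpiA : ∀ A, MeasurableSet A → A ⊆ K → pi A = μ.real A / V / Z := by
    intro A hA hAK
    have := hconv A (fun _ => 1) hA hAK
    simp only [one_mul] at this
    rw [hpi, this]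
    simp
  rw [hpiA S hS hSK, hpiA _ hTm sdiff_subset, hconv S _ hS hSK, hconv _ _ hTm sdiff_subset]
  obtain ⟨m1, p1, q1, l1⟩ := sc_P_bounds hn K hKconv hKcomp hKball δ σ hδ hσ hKbdd hδσ f hf (K \ S) hTm
    sdiff_subset (fun x => P x (K \ S)) (fun x => hP x _)
  obtain ⟨m2, p2, q2, l2⟩ := sc_P_bounds hn K hKconv hKcomp hKball δ σ hδ hσ hKbdd hδσ f hf S hS
    hSK (fun x => P x S) (fun x => hP x _)
  let S1 := S ∩ {x | P x (K \ S) < 1 / 16}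
  let S2 := (K \ S) ∩ {x | P x S < 1 / 16}
  have hmS1 : MeasurableSet S1 := hS.inter (measurableSet_lt m1 measurable_const)
  have hmS2 : MeasurableSet S2 := hTm.inter (measurableSet_lt m2 measurable_const)
  have hS1S : S1 ⊆ S := inter_subset_left
  have hS2T : S2 ⊆ K \ S := inter_subset_left
  have hJ : ∀ (A B : Set (EuclideanSpace ℝ (Fin n))) (Q : EuclideanSpace ℝ (Fin n) → ℝ),
      MeasurableSet A → MeasurableSet B → B ⊆ A → Measurable Q → (∀ x, 0 ≤ Q x) → (∀ x, Q x ≤ 1) →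
      (∀ x ∈ A \ B, 1 / 16 ≤ Q x) → 1 / 16 * (μ.real A - μ.real B) ≤ ∫ x in A, Q x ∂μ := by
    intro A B Q hA hB hBA hQm hQ0 hQ1 hQ
    have hi : Integrable Q μ := Integrable.mono' (integrable_const (1:ℝ)) hQm.aestronglyMeasurable
      (Filter.Eventually.of_forall fun x => by rw [Real.norm_of_nonneg (hQ0 x)]; exact hQ1 x)
    rw [← measureReal_diff hBA hB]
    calc 1 / 16 * μ.real (A \ B) = ∫ x in A \ B, (1 / 16 : ℝ) ∂μ := by simp [mul_comm]
      _ ≤ ∫ x in A \ B, Q x ∂μ := setIntegral_mono_on (integrable_const _).integrableOn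
          hi.integrableOn (hA.diff hB) hQ
      _ ≤ ∫ x in A, Q x ∂μ := setIntegral_mono_set hi.integrableOn
          (Filter.Eventually.of_forall fun x => hQ0 x) (sdiff_subset.eventuallyLE)
  have hJ1 := hJ S S1 _ hS hmS1 hS1S m1 p1 q1 (by
    rintro x ⟨h1, h2⟩
    by_contra! h
    exact h2 ⟨h1, h⟩)
  have hJ2 := hJ (K \ S) S2 _ hTm hmS2 hS2T m2 p2 q2 (by
    rintro x ⟨h1, h2⟩
    by_contra! h
    exact h2 ⟨h1, h⟩)
  have hiso := sc_iso hn K hKconv hKcomp hKball δ σ hδ hσ (δ / (2 * √n)) (by positivity)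
    (by
      calc δ / (2 * √n) / 2 ≤ (σ / (8 * √n)) / (2 * √n) / 2 := by gcongr
        _ = σ / (32 * (√n * √n)) := by field_simp; norm_num
        _ ≤ σ / (8 * n) := by rw [hss]; gcongr; norm_num)
    S1 S2 hmS1 hmS2 (hS1S.trans hSK) (hS2T.trans sdiff_subset)
    (Set.disjoint_left.2 fun x h1 h2 => (hS2T h2).2 (hS1S h1))
    (by
      intro x hx y hy
      by_contra! hcon
      obtain ⟨hd, hlog⟩ := hcon
      have hxK : x ∈ K := hSK hx.1
      have hyK : y ∈ K := hy.1.1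
      have hov := sc_overlap hn K hKconv hKcomp δ hδ x y hxK hyK hd.le
      have hvx := sc_vK_pos K hKconv hKball δ hδ x hxK
      have hvy := sc_vK_pos K hKconv hKball δ hδ y hyK
      have hx1 : P x (K \ S) < 1 / 16 := hx.2
      have hy1 : P y S < 1 / 16 := hy.2
      have hcov : (volume (K ∩ closedBall x δ ∩ closedBall y δ)).toReal ≤
          (volume ((K \ S) ∩ closedBall x δ)).toReal + (volume (S ∩ closedBall y δ)).toReal := by
        rw [← ENNReal.toReal_add (sc_vK_lt_top _ δ x).ne (sc_vK_lt_top _ δ y).ne]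
        apply ENNReal.toReal_mono
          (ENNReal.add_ne_top.2 ⟨(sc_vK_lt_top _ δ x).ne, (sc_vK_lt_top _ δ y).ne⟩)
        refine le_trans (measure_mono ?_) (measure_union_le _ _)
        rintro u ⟨⟨h1, h2⟩, h3⟩
        by_cases hu : u ∈ S
        · right; exact ⟨hu, h3⟩
        · left; exact ⟨⟨h1, hu⟩, h2⟩
      have hlx := l1 x hxK
      have hly := l2 y hyK
      set a := (volume (K ∩ closedBall x δ)).toReal
      set b := (volume (K ∩ closedBall y δ)).toReal
      have e1 : P x (K \ S) * a ≤ 1 / 16 * a := by gcongr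
      have e2 : P y S * b ≤ 1 / 16 * b := by gcongr
      rw [abs_lt, ← log_div hvx.ne' hvy.ne'] at hlog
      have f1 : a < 3 * b := by
        have := (log_lt_log_iff (div_pos hvx hvy) (by norm_num)).1 hlog.2
        rwa [div_lt_iff₀ hvy] at this
      have f2 : b < 3 * a := by
        have h7 : log (b / a) < log 3 := by
          have : log (b / a) = - log (a / b) := by rw [← log_inv, inv_div]
          linarith [hlog.1]
        have := (log_lt_log_iff (div_pos hvy hvx) (by norm_num)).1 h7
        rwa [div_lt_iff₀ hvx] at this
      rcases min_cases a b with ⟨h, h'⟩ | ⟨h, h'⟩ <;> rw [h] at hov <;> linarith)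
  have hq1 : δ / (σ * √n) ≤ 1 := by
    rw [div_le_one (by positivity)]
    calc δ ≤ σ / (8 * √n) := hδσ
      _ ≤ σ / 1 := by gcongr; linarith
      _ ≤ σ * √n := by rw [div_one]; exact le_mul_of_one_le_right hσ.le hs1
  have hs3 : μ.real (K \ (S1 ∪ S2)) = (μ.real S - μ.real S1) + (μ.real (K \ S) - μ.real S2) := by
    rw [← measureReal_diff hS1S hmS1, ← measureReal_diff hS2T hmS2, ← measureReal_union]
    · congr 1
      ext x
      constructor
      · rintro ⟨h1, h2⟩
        by_cases hx : x ∈ S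
        · left; exact ⟨hx, fun h => h2 (Or.inl h)⟩
        · right; exact ⟨⟨h1, hx⟩, fun h => h2 (Or.inr h)⟩
      · rintro (⟨h1, h2⟩ | ⟨h1, h2⟩)
        · exact ⟨hSK h1, fun h => h.elim h2 (fun h => (hS2T h).2 h1)⟩
        · exact ⟨h1.1, fun h => h.elim (fun h => h1.2 (hS1S h)) h2⟩
    · rw [Set.disjoint_left]
      rintro x ⟨h1, _⟩ ⟨h2, _⟩
      exact h2.2 h1
    · exact hTm.diff hmS2
  have hfin := sc_numeric (μ.real S) (μ.real (K \ S)) (μ.real S1) (μ.real S2) (μ.real (K \ (S1 ∪ S2)))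
    _ _ (δ / (2 * √n) / 2 / (20 * σ)) (δ / (σ * √n)) (by positivity) hq1 (by field_simp; norm_num)
    (measureReal_mono hS1S) (measureReal_mono hS2T) hs3 hiso hJ1 hJ2 measureReal_nonneg measureReal_nonneg
  have hVZ : 0 < V * Z := by positivity
  simp only [div_div]
  rw [min_div_div_right hVZ.le, ← add_div]
  calc _ = 1 / 10000 * (δ / (σ * √n)) * min (μ.real S) (μ.real (K \ S)) / (V * Z) := by ring
    _ ≤ (1 / 2 * ((∫ x in S, P x (K \ S) ∂μ) + ∫ x in K \ S, P x S ∂μ)) / (V * Z) := by gcongr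
    _ = _ := by ring

/-- Conductance of the speedy walk (Theorem 5.3 of the paper): for a convex body `K`
with `B_n ⊆ K ⊆ 4σ√n B_n`, step size `δ ≤ σ/(8√n)`, Gaussian weight
`f(x) = e^{-‖x‖²/(2σ²)}`, local conductance `ℓ`, one-step distribution `P`, and
stationary measure `π` with density proportional to `ℓ · f` on `K`, for every
measurable `S ⊆ K` with `0 < π(S) < 1`, the ergodic flow satisfies
`(1/2)(∫_S P_x(K∖S) dπ + ∫_{K∖S} P_x(S) dπ) ≥ 10⁻⁴ · (δ/(σ√n)) · min{π(S), π(K∖S)}`. -/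
theorem speedy_conductance
    (n : ℕ) (σ δ : ℝ) (hσ : 0 < σ)
    (K : Set (EuclideanSpace ℝ (Fin n)))
    (hKconv : Convex ℝ K) (hKcomp : IsCompact K)
    (hKball : closedBall (0 : EuclideanSpace ℝ (Fin n)) 1 ⊆ K)
    (hKbdd : K ⊆ closedBall (0 : EuclideanSpace ℝ (Fin n)) (4 * σ * Real.sqrt n))
    (hδ : 0 < δ) (hδσ : δ ≤ σ / (8 * Real.sqrt n))
    (f : EuclideanSpace ℝ (Fin n) → ℝ)
    (hf : ∀ x, f x = Real.exp (-‖x‖^2 / (2 * σ^2)))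
    (ℓ : EuclideanSpace ℝ (Fin n) → ℝ)
    (hℓ : ∀ x, ℓ x = (volume (K ∩ closedBall x δ)).toReal /
      (volume (closedBall (0 : EuclideanSpace ℝ (Fin n)) δ)).toReal)
    (P : EuclideanSpace ℝ (Fin n) → Set (EuclideanSpace ℝ (Fin n)) → ℝ)
    (hP : ∀ x S, P x S = (∫ y in S ∩ K ∩ closedBall x δ, min 1 (f y / f x)) /
      (volume (K ∩ closedBall x δ)).toReal)
    (Z : ℝ) (hZ : Z = ∫ x in K, ℓ x * f x) (hZpos : 0 < Z)
    (pi : Set (EuclideanSpace ℝ (Fin n)) → ℝ)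
    (hpi : ∀ S, pi S = (∫ x in S, ℓ x * f x) / Z)
    (S : Set (EuclideanSpace ℝ (Fin n))) (hS : MeasurableSet S) (hSK : S ⊆ K)
    (hS0 : 0 < pi S) (hS1 : pi S < 1) :
    (1 / 10000 : ℝ) * (δ / (σ * Real.sqrt n)) * min (pi S) (pi (K \ S)) ≤
      (1 / 2) * ((∫ x in S, P x (K \ S) * (ℓ x * f x)) / Z +
        (∫ x in K \ S, P x S * (ℓ x * f x)) / Z) := by
  exact sc_main n σ δ hσ K hKconv hKcomp hKball hKbdd hδ hδσ f hf ℓ hℓ P hP Z hZ hZpos pi hpi S hS hSK hS0 hS1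
end

section
/- Let a > 0, δ > 0, and let f : ℝⁿ → ℝ≥0 be an a-rounded logconcave probability density with convex support K; that is, for every level t > 0 the level set L_t = {x : f(x) ≥ t} contains a ball of radius a·π_f(L_t), where π_f is the probability measure with density f. Define the local conductance ℓ(x) = vol(K ∩ (x + δB_n))/vol(δB_n) and the average local conductance λ(f) = ∫_K ℓ(x) f(x) dx / ∫_K f(x) dx. Then λ(f) ≥ 1 − 32 δ^{1/2} n^{1/4} / a^{1/2}. -/
open MeasureTheory Real Set Metric

lemma alc_cap {n : ℕ} {L : Set (EuclideanSpace ℝ (Fin n))} (hLo : IsOpen L) (hLc : Convex ℝ L)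
    {z : EuclideanSpace ℝ (Fin n)} {r δ s : ℝ} (hr : 0 < r) (hδ : 0 < δ) (hs : 1 ≤ s)
    (hz : ball z r ⊆ L) {y : EuclideanSpace ℝ (Fin n)}
    (hy : y ∉ AffineMap.homothety z s '' L) :
    volume (L ∩ closedBall y δ) ≤
      ENNReal.ofReal (exp (-(n * (r * (s - 1)) ^ 2 / (2 * δ ^ 2)))) *
        volume (closedBall (0 : EuclideanSpace ℝ (Fin n)) δ) := by
  have hs0 : 0 < s := by linarith
  have hAo : IsOpen (AffineMap.homothety z s '' L) :=
    AffineMap.homothety_isOpenMap z s hs0.ne' _ hLo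
  have hAc : Convex ℝ (AffineMap.homothety z s '' L) := hLc.affine_image _
  obtain ⟨φ, hφ⟩ := geometric_hahn_banach_open_point hAc hAo hy
  set ν := (InnerProductSpace.toDual ℝ (EuclideanSpace ℝ (Fin n))).symm φ with hν
  have hνφ : ∀ x, inner ℝ ν x = φ x := fun x => by
    rw [hν, InnerProductSpace.toDual_symm_apply]
  have hzL : z ∈ L := hz (mem_ball_self hr)
  have hφ' : ∀ x ∈ L, s * inner ℝ ν (x - z) < inner ℝ ν (y - z) := by
    intro x hx
    have := hφ _ (mem_image_of_mem _ hx)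
    rw [AffineMap.homothety_apply, vsub_eq_sub, vadd_eq_add, map_add, map_smul, smul_eq_mul] at this
    rw [hνφ, hνφ, map_sub φ y]
    linarith
  have hν0 : ν ≠ 0 := by
    intro h
    have := hφ' z hzL
    simp [h] at this
  have hνp : 0 < ‖ν‖ := norm_pos_iff.mpr hν0
  set e := ‖ν‖⁻¹ • ν with he
  have hen : ‖e‖ = 1 := by
    rw [he, norm_smul, norm_inv, norm_norm, inv_mul_cancel₀ hνp.ne']
  have hφe : ∀ x ∈ L, s * inner ℝ e (x - z) < inner ℝ e (y - z) := by
    intro x hx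
    have := hφ' x hx
    rw [he, real_inner_smul_left, real_inner_smul_left]
    have h2 := mul_lt_mul_of_pos_left this (inv_pos.mpr hνp)
    linarith
  have hh : s * r ≤ inner ℝ e (y - z) := by
    apply le_of_forall_lt_imp_le_of_dense
    intro c hc
    by_cases hc0 : c < 0
    · have := hφe z hzL
      simp at this
      linarith
    have hcs : c / s < r := by rw [div_lt_iff₀ hs0]; linarith
    have hm : z + (c / s) • e ∈ L := by
      apply hz
      rw [mem_ball, dist_eq_norm, add_sub_cancel_left, norm_smul, hen, mul_one, Real.norm_eq_abs,
        abs_of_nonneg (div_nonneg (not_lt.mp hc0) hs0.le)]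
      exact hcs
    have := hφe _ hm
    rw [add_sub_cancel_left, real_inner_smul_right, real_inner_self_eq_norm_sq, hen] at this
    have h3 : s * (c / s * 1 ^ 2) = c := by field_simp
    linarith
  set t := r * (s - 1) with ht
  have ht0 : 0 ≤ t := mul_nonneg hr.le (by linarith)
  have hsub : L ∩ closedBall y δ ⊆ closedBall (y - t • e) (δ * exp (-(t ^ 2 / (2 * δ ^ 2)))) := by
    rintro x ⟨hx, hxy⟩
    rw [mem_closedBall, dist_eq_norm] at hxy ⊢
    have h1 := hφe x hx
    have h2 : t ≤ inner ℝ e (y - x) := by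
      have : inner ℝ e (y - x) = inner ℝ e (y - z) - inner ℝ e (x - z) := by
        rw [← inner_sub_right]; congr 1; abel
      rw [this]
      have : s * t ≤ s * (inner ℝ e (y - z) - inner ℝ e (x - z)) := by
        rw [ht]
        nlinarith
      exact le_of_mul_le_mul_left this hs0
    have h4 : ‖x - (y - t • e)‖ ^ 2 ≤ δ ^ 2 - t ^ 2 := by
      have : x - (y - t • e) = (x - y) + t • e := by abel
      rw [this, norm_add_sq_real, real_inner_smul_right, norm_smul, hen, real_inner_comm]
      have h5 : inner ℝ e (x - y) = - inner ℝ e (y - x) := by rw [← inner_neg_right, neg_sub]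
      rw [h5, mul_one, Real.norm_eq_abs, sq_abs]
      have h6 : ‖x - y‖ ^ 2 ≤ δ ^ 2 := by gcongr
      nlinarith
    have h7 : δ ^ 2 - t ^ 2 ≤ (δ * exp (-(t ^ 2 / (2 * δ ^ 2)))) ^ 2 := by
      have h8 := add_one_le_exp (-(t ^ 2 / δ ^ 2))
      have h9 : exp (-(t ^ 2 / (2 * δ ^ 2))) ^ 2 = exp (-(t ^ 2 / δ ^ 2)) := by
        rw [← exp_nat_mul]; congr 1; push_cast; field_simp
      rw [mul_pow δ, h9]
      calc δ ^ 2 - t ^ 2 = δ ^ 2 * (-(t ^ 2 / δ ^ 2) + 1) := by field_simp; ring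
        _ ≤ _ := by gcongr
    exact le_of_sq_le_sq (h4.trans h7) (by positivity) 
  refine (measure_mono hsub).trans ?_
  rw [Measure.addHaar_closedBall' _ _ (by positivity), Measure.addHaar_closedBall' _ _ hδ.le,
    ← mul_assoc, ← ENNReal.ofReal_mul (by positivity), finrank_euclideanSpace_fin]
  apply le_of_eq
  congr 2
  rw [mul_pow, ← exp_nat_mul, mul_comm]
  congr 2
  ring

lemma alc_pow {n k : ℕ} {η θ : ℝ} (hη : 0 ≤ η) (hθ : n * η = θ) (h1 : θ ≤ 1) :
    (1 + (k + 1 : ℕ) * η) ^ n - (1 + k * η) ^ n ≤ θ * exp (k + 1) := by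
  set b := 1 + (k + 1 : ℕ) * η with hb
  have hb1 : 1 ≤ b := by rw [hb]; linarith [mul_nonneg (Nat.cast_nonneg (α := ℝ) (k+1)) hη]
  have hb0 : 0 < b := by linarith
  have e1 : 1 + k * η = b * (1 + (-(η / b))) := by
    rw [hb]; push_cast; field_simp; ring
  have hbη : η ≤ b := by
    rw [hb]; push_cast; nlinarith [mul_nonneg (Nat.cast_nonneg (α := ℝ) k) hη]
  have h2 := one_add_mul_le_pow (a := -(η / b)) (by
    have : η / b ≤ 1 := (div_le_one hb0).2 hbη
    linarith) n
  have h3 : b ^ n ≤ exp (k + 1) := by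
    have : b ≤ exp ((k + 1 : ℕ) * η) := by rw [hb]; linarith [add_one_le_exp ((k + 1 : ℕ) * η)]
    calc b ^ n ≤ exp ((k + 1 : ℕ) * η) ^ n := by gcongr
      _ = exp ((k + 1) * θ) := by rw [← exp_nat_mul, ← hθ]; congr 1; push_cast; ring
      _ ≤ exp (k + 1) := by
        apply exp_le_exp.2
        have : (0:ℝ) ≤ k + 1 := by positivity
        nlinarith
  have hθ0 : 0 ≤ θ := by rw [← hθ]; positivity
  have h4 : η / b ≤ η := div_le_self hη hb1
  rw [e1, mul_pow]
  calc b ^ n - b ^ n * (1 + -(η / b)) ^ n ≤ b ^ n - b ^ n * (1 + n * -(η / b)) := by gcongr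
    _ = (n * (η / b)) * b ^ n := by ring
    _ ≤ (n * η) * exp (k + 1) := by gcongr
    _ = _ := by rw [hθ]

lemma alc_term (k : ℕ) {θ : ℝ} (h0 : 0 ≤ θ) :
    exp (-((k:ℝ) ^ 2 / 2)) * (θ * exp (k + 1)) ≤ 32 * θ * (1 / 2) ^ k := by
  have h1 : exp (-((k:ℝ) ^ 2 / 2)) * exp (k + 1) ≤ exp 3 * exp (-1) ^ k := by
    rw [← exp_add, ← exp_nat_mul, ← exp_add]
    apply exp_le_exp.2
    nlinarith [sq_nonneg ((k:ℝ) - 2)]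
  have h2 : exp 3 ≤ 32 := by
    have : exp 3 = exp 1 ^ 3 := by rw [← exp_nat_mul]; norm_num
    rw [this]
    have := exp_one_lt_d9
    calc exp 1 ^ 3 ≤ 3 ^ 3 := by gcongr; linarith
      _ ≤ 32 := by norm_num
  have h3 : exp (-1) ≤ 1 / 2 := by
    rw [exp_neg, one_div]
    apply inv_anti₀ (by norm_num)
    linarith [exp_one_gt_d9]
  calc _ = θ * (exp (-((k:ℝ) ^ 2 / 2)) * exp (k + 1)) := by ring
    _ ≤ θ * (32 * (1 / 2) ^ k) := by
      refine mul_le_mul_of_nonneg_left (h1.trans ?_) h0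
      gcongr
    _ = _ := by ring

lemma alc_body {n : ℕ} (hn : 1 ≤ n) {L : Set (EuclideanSpace ℝ (Fin n))} (hLo : IsOpen L)
    (hLc : Convex ℝ L) {z : EuclideanSpace ℝ (Fin n)} {r δ : ℝ} (hr : 0 < r) (hδ : 0 < δ)
    (hz : ball z r ⊆ L) (hfin : volume L ≠ ⊤) :
    ∫⁻ x in L, volume (closedBall x δ \ L) ≤
      ENNReal.ofReal (64 * (δ * √n / r)) *
        (volume L * volume (closedBall (0 : EuclideanSpace ℝ (Fin n)) δ)) := by
  set V := volume (closedBall (0 : EuclideanSpace ℝ (Fin n)) δ) with hV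
  have hn0 : (0:ℝ) < n := by exact_mod_cast hn
  have hsn : 0 < √(n:ℝ) := sqrt_pos.2 hn0
  set θ := δ * √n / r with hθ
  have hθ0 : 0 < θ := by positivity
  have hball : ∀ x : EuclideanSpace ℝ (Fin n), volume (closedBall x δ) = V := fun x => by
    rw [hV, Measure.addHaar_closedBall' _ _ hδ.le, Measure.addHaar_closedBall' _ _ hδ.le]
  rcases lt_or_ge 1 θ with h1 | h1
  · calc ∫⁻ x in L, volume (closedBall x δ \ L) ≤ ∫⁻ x in L, V := by
          apply lintegral_mono
          intro x
          exact (measure_mono sdiff_subset).trans (hball x).le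
      _ = 1 * (volume L * V) := by rw [setLIntegral_const, one_mul, mul_comm]
      _ ≤ _ := by
        gcongr
        rw [← ENNReal.ofReal_one]
        apply ENNReal.ofReal_le_ofReal
        linarith
  set η := θ / n with hη
  have hη0 : 0 < η := by positivity
  have hnη : n * η = θ := by rw [hη]; field_simp
  set σ : ℕ → ℝ := fun k => 1 + k * η with hσ
  have hσ1 : ∀ k, 1 ≤ σ k := fun k => by
    have : 0 ≤ k * η := by positivity
    simp only [hσ]; linarith
  set A : ℕ → Set (EuclideanSpace ℝ (Fin n)) := fun k => AffineMap.homothety z (σ k) '' L with hA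
  have hzL : z ∈ L := hz (mem_ball_self hr)
  have hmem : ∀ k y, y ∈ A k ↔ z + (σ k)⁻¹ • (y - z) ∈ L := by
    intro k y
    have hk : σ k ≠ 0 := by linarith [hσ1 k]
    simp only [hA, mem_image, AffineMap.homothety_apply, vsub_eq_sub, vadd_eq_add]
    constructor
    · rintro ⟨x, hx, rfl⟩
      simpa [smul_smul, hk] using hx
    · intro h
      exact ⟨_, h, by simp [smul_smul, hk]⟩
  have hA0 : A 0 = L := by
    ext y; rw [hmem]; simp [hσ]
  have hAo : ∀ k, IsOpen (A k) := fun k =>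
    AffineMap.homothety_isOpenMap z _ (by linarith [hσ1 k]) _ hLo
  have hAmono : ∀ k, A k ⊆ A (k + 1) := by
    intro k y hy
    rw [hmem] at hy ⊢
    have hk := hσ1 k
    have hk' := hσ1 (k+1)
    have hkk : σ k ≤ σ (k + 1) := by simp only [hσ]; push_cast; nlinarith
    have hc := hLc.add_smul_sub_mem hzL hy (t := σ k / σ (k+1))
      ⟨by positivity, (div_le_one (by linarith)).2 hkk⟩
    have h0 : σ k ≠ 0 := by linarith
    convert hc using 2
    rw [add_sub_cancel_left, smul_smul]
    congr 1
    field_simp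
  have hAvol : ∀ k, volume (A k) = ENNReal.ofReal ((σ k) ^ n) * volume L := by
    intro k
    simp only [hA]
    rw [Measure.addHaar_image_homothety, finrank_euclideanSpace_fin, abs_of_nonneg]
    have := hσ1 k
    positivity
  have hcover : Lᶜ ⊆ ⋃ k, A (k + 1) \ A k := by
    intro y hy
    have hex : ∃ k, y ∈ A k := by
      obtain ⟨k, hk⟩ := exists_nat_gt (‖y - z‖ / r / η)
      refine ⟨k, ?_⟩
      rw [hmem]
      apply hz
      have hk0 : 0 < σ k := by linarith [hσ1 k]
      rw [mem_ball, dist_eq_norm, add_sub_cancel_left, norm_smul, norm_inv, Real.norm_eq_abs,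
        abs_of_pos hk0, inv_mul_lt_iff₀ hk0]
      rw [div_lt_iff₀ hη0, div_lt_iff₀ hr] at hk
      simp only [hσ]
      nlinarith
    classical
    have hne : Nat.find hex ≠ 0 := by
      intro h
      have := Nat.find_spec hex
      rw [h, hA0] at this
      exact hy this
    obtain ⟨m, hm⟩ := Nat.exists_eq_succ_of_ne_zero hne
    refine mem_iUnion.2 ⟨m, ?_, ?_⟩
    · have := Nat.find_spec hex
      rwa [hm] at this
    · exact Nat.find_min hex (by omega)
  have hLm := hLo.measurableSet
  set S : Set (EuclideanSpace ℝ (Fin n) × EuclideanSpace ℝ (Fin n)) :=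
    {p | p.1 ∈ L ∧ p.2 ∉ L ∧ dist p.2 p.1 ≤ δ} with hS
  have hSm : MeasurableSet S := by
    apply (measurable_fst hLm).inter
    apply (measurable_snd hLm).compl.inter
    exact measurableSet_le (measurable_snd.dist measurable_fst) measurable_const
  have e1 : ∫⁻ x in L, volume (closedBall x δ \ L) = (volume.prod volume) S := by
    rw [Measure.prod_apply hSm, ← lintegral_indicator hLm]
    congr 1
    ext x
    by_cases hx : x ∈ L
    · rw [indicator_of_mem hx]
      congr 1
      ext y
      simp [hS, hx, and_comm]
    · rw [indicator_of_notMem hx]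
      simp [hS, hx]
  have e2 : (volume.prod volume) S = ∫⁻ y in Lᶜ, volume (L ∩ closedBall y δ) := by
    rw [Measure.prod_apply_symm hSm, ← lintegral_indicator hLm.compl]
    congr 1
    ext y
    by_cases hy : y ∈ L
    · rw [indicator_of_notMem (by simpa using hy)]
      simp [hS, hy]
    · rw [indicator_of_mem (by simpa using hy)]
      congr 1
      ext x
      simp [hS, hy, dist_comm]
  rw [e1, e2]
  have hterm : ∀ k, ∫⁻ y in A (k + 1) \ A k, volume (L ∩ closedBall y δ) ≤
      ENNReal.ofReal (32 * θ * (1 / 2) ^ k) * (volume L * V) := by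
    intro k
    have hcap : ∀ y ∈ A (k + 1) \ A k, volume (L ∩ closedBall y δ) ≤
        ENNReal.ofReal (exp (-((k:ℝ) ^ 2 / 2))) * V := by
      intro y hy
      have := alc_cap hLo hLc hr hδ (hσ1 k) hz hy.2
      refine this.trans (le_of_eq ?_)
      congr 4
      simp only [hσ, hη, hθ]
      have : √(n:ℝ) ^ 2 = n := sq_sqrt hn0.le
      field_simp
      rw [add_sub_cancel_left, mul_pow, this]
      ring
    have hdv : volume (A (k + 1) \ A k) ≤ ENNReal.ofReal (θ * exp (k + 1)) * volume L := by
      rw [measure_sdiff (hAmono k) (hAo k).measurableSet.nullMeasurableSet, hAvol, hAvol]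
      · rw [← ENNReal.sub_mul (fun _ _ => hfin), ← ENNReal.ofReal_sub]
        · gcongr
          exact alc_pow hη0.le hnη h1
        · have := hσ1 k
          positivity
      · rw [hAvol]; finiteness
    calc ∫⁻ y in A (k + 1) \ A k, volume (L ∩ closedBall y δ)
        ≤ ∫⁻ y in A (k + 1) \ A k, ENNReal.ofReal (exp (-((k:ℝ) ^ 2 / 2))) * V :=
          setLIntegral_mono' ((hAo _).measurableSet.diff (hAo _).measurableSet) hcap
      _ = ENNReal.ofReal (exp (-((k:ℝ) ^ 2 / 2))) * V * volume (A (k + 1) \ A k) :=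
          setLIntegral_const _ _
      _ ≤ ENNReal.ofReal (exp (-((k:ℝ) ^ 2 / 2))) * V *
          (ENNReal.ofReal (θ * exp (k + 1)) * volume L) := by gcongr
      _ = ENNReal.ofReal (exp (-((k:ℝ) ^ 2 / 2)) * (θ * exp (k + 1))) * (volume L * V) := by
          rw [ENNReal.ofReal_mul (exp_pos _).le]; ring
      _ ≤ _ := by
          gcongr ENNReal.ofReal ?_ * _
          exact alc_term k hθ0.le
  calc ∫⁻ y in Lᶜ, volume (L ∩ closedBall y δ)
      ≤ ∫⁻ y in ⋃ k, A (k + 1) \ A k, volume (L ∩ closedBall y δ) := lintegral_mono_set hcover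
    _ ≤ ∑' k, ∫⁻ y in A (k + 1) \ A k, volume (L ∩ closedBall y δ) := lintegral_iUnion_le _ _
    _ ≤ ∑' k, ENNReal.ofReal (32 * θ * (1 / 2) ^ k) * (volume L * V) := ENNReal.tsum_le_tsum hterm
    _ = ENNReal.ofReal (∑' k : ℕ, 32 * θ * (1 / 2) ^ k) * (volume L * V) := by
        rw [ENNReal.tsum_mul_right, ENNReal.ofReal_tsum_of_nonneg (fun k => by positivity)
          (summable_geometric_two.mul_left _)]
    _ = _ := by
        rw [tsum_mul_left, tsum_geometric_two]
        congr 2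
        ring

lemma alc_tail {n : ℕ} {f : EuclideanSpace ℝ (Fin n) → ℝ} (hf0 : ∀ x, 0 ≤ f x)
    (hint : Integrable f) (s : ℝ) :
    ∫⁻ t in {t : ℝ | 0 < t ∧ ∫ x in {x | t ≤ f x}, f x < s}, volume {x | t ≤ f x} ≤
      ENNReal.ofReal s := by
  set T := {t : ℝ | 0 < t ∧ ∫ x in {x | t ≤ f x}, f x < s} with hT
  rcases T.eq_empty_or_nonempty with h | hne
  · simp [h]
  set τ := sInf T with hτ
  have hbdd : BddBelow T := ⟨0, fun t ht => ht.1.le⟩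
  have hτ0 : 0 ≤ τ := le_csInf hne fun t ht => ht.1.le
  set m := (volume : Measure (EuclideanSpace ℝ (Fin n))).withDensity
    (fun x => ENNReal.ofReal (f x)) with hm
  have hmT : ∀ t, τ < t → m {x | t ≤ f x} ≤ ENNReal.ofReal s := by
    intro t ht
    obtain ⟨t', ht', htt⟩ := exists_lt_of_csInf_lt hne ht
    calc m {x | t ≤ f x} ≤ m {x | t' ≤ f x} :=
          measure_mono fun x hx => htt.le.trans hx
      _ = ENNReal.ofReal (∫ x in {x | t' ≤ f x}, f x) := by
          rw [hm, withDensity_apply',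
            ofReal_integral_eq_lintegral_ofReal hint.integrableOn (Filter.Eventually.of_forall hf0)]
      _ ≤ _ := ENNReal.ofReal_le_ofReal ht'.2.le
  have hE : m {x | τ < f x} ≤ ENNReal.ofReal s := by
    have hU : {x | τ < f x} = ⋃ k : ℕ, {x | τ + 1 / ((k:ℝ) + 1) ≤ f x} := by
      ext x
      simp only [mem_ofPred_eq, mem_iUnion]
      constructor
      · intro hx
        obtain ⟨k, hk⟩ := exists_nat_one_div_lt (sub_pos.2 hx)
        exact ⟨k, by linarith⟩
      · rintro ⟨k, hk⟩
        have : 0 < 1 / ((k:ℝ) + 1) := by positivity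
        linarith
    rw [hU, Monotone.measure_iUnion]
    · refine iSup_le fun k => hmT _ ?_
      have : 0 < 1 / ((k:ℝ) + 1) := by positivity
      linarith
    · intro j k hjk x hx
      simp only [mem_ofPred_eq] at hx ⊢
      have : 1 / ((k:ℝ) + 1) ≤ 1 / ((j:ℝ) + 1) := by gcongr
      linarith
  have hEm : NullMeasurableSet {x | τ < f x} volume :=
    nullMeasurableSet_lt aemeasurable_const hint.aemeasurable
  set g := indicator {x | τ < f x} f with hg
  have hgm : AEMeasurable g volume := hint.aemeasurable.indicator₀ hEm
  have hg0 : ∀ x, 0 ≤ g x := fun x => indicator_nonneg (fun x _ => hf0 x) x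
  have hgt : ∀ t, τ < t → {x | t ≤ f x} ⊆ {x | t ≤ g x} := by
    intro t ht x hx
    simp only [mem_ofPred_eq] at hx ⊢
    rw [hg, indicator_of_mem]
    · exact hx
    · exact lt_of_lt_of_le ht hx
  calc ∫⁻ t in T, volume {x | t ≤ f x}
      ≤ ∫⁻ t in Ici τ, volume {x | t ≤ f x} := lintegral_mono_set fun t ht => csInf_le hbdd ht
    _ = ∫⁻ t in Ioi τ, volume {x | t ≤ f x} := setLIntegral_congr Ioi_ae_eq_Ici.symm
    _ ≤ ∫⁻ t in Ioi τ, volume {x | t ≤ g x} :=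
        setLIntegral_mono' measurableSet_Ioi fun t ht => measure_mono (hgt t ht)
    _ ≤ ∫⁻ t in Ioi 0, volume {x | t ≤ g x} := lintegral_mono_set (Ioi_subset_Ioi hτ0)
    _ = ∫⁻ x, ENNReal.ofReal (g x) :=
        (lintegral_eq_lintegral_meas_le _ (Filter.Eventually.of_forall hg0) hgm).symm
    _ = ∫⁻ x in {x | τ < f x}, ENNReal.ofReal (f x) := by
        rw [← lintegral_indicator₀ hEm]
        congr 1
        ext x
        by_cases hx : x ∈ {x | τ < f x}
        · rw [hg, indicator_of_mem hx, indicator_of_mem hx]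
        · rw [hg, indicator_of_notMem hx, indicator_of_notMem hx, ENNReal.ofReal_zero]
    _ = m {x | τ < f x} := by rw [hm, withDensity_apply']
    _ ≤ _ := hE

lemma alc_convex {n : ℕ} {f : EuclideanSpace ℝ (Fin n) → ℝ} 
    (hlc : ∀ x y : EuclideanSpace ℝ (Fin n), ∀ l ∈ Icc (0:ℝ) 1,
      f x ^ l * f y ^ (1 - l) ≤ f (l • x + (1 - l) • y)) {t : ℝ} (ht : 0 < t) :
    Convex ℝ {x | t ≤ f x} := by
  intro x hx y hy a b ha hb hab
  simp only [mem_ofPred_eq] at hx hy ⊢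
  have hb' : b = 1 - a := by linarith
  subst hb'
  refine le_trans ?_ (hlc x y a ⟨ha, by linarith⟩)
  calc t = t ^ a * t ^ (1 - a) := by rw [← rpow_add ht]; simp
    _ ≤ _ := by
      have hfx : 0 ≤ f x := ht.le.trans hx
      gcongr

lemma alc_lint {n : ℕ} (hn : 1 ≤ n) {a δ : ℝ} (ha : 0 < a) (hδ : 0 < δ)
    {K : Set (EuclideanSpace ℝ (Fin n))}
    {f : EuclideanSpace ℝ (Fin n) → ℝ}
    (hf0 : ∀ x, 0 ≤ f x)
    (hsupp : ∀ x, x ∉ K → f x = 0)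
    (hlc : ∀ x y : EuclideanSpace ℝ (Fin n), ∀ l ∈ Icc (0:ℝ) 1,
      f x ^ l * f y ^ (1 - l) ≤ f (l • x + (1 - l) • y))
    (hint : Integrable f) (hmass : ∫ x, f x = 1)
    (hrounded : ∀ t : ℝ, 0 < t → ({x | t ≤ f x}).Nonempty →
      ∃ z : EuclideanSpace ℝ (Fin n),
        closedBall z (a * ∫ x in {x | t ≤ f x}, f x) ⊆ {x | t ≤ f x})
    (hq : Measurable fun x => volume (closedBall x δ \ K)) :
    ∫⁻ x, volume (closedBall x δ \ K) * ENNReal.ofReal (f x) ≤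
      ENNReal.ofReal (16 * √(δ * √n / a)) *
        volume (closedBall (0 : EuclideanSpace ℝ (Fin n)) δ) := by
  set V := volume (closedBall (0 : EuclideanSpace ℝ (Fin n)) δ) with hV
  have hVtop : V ≠ ⊤ := measure_closedBall_lt_top.ne
  have hball : ∀ x : EuclideanSpace ℝ (Fin n), volume (closedBall x δ) = V := fun x => by
    rw [hV, Measure.addHaar_closedBall' _ _ hδ.le, Measure.addHaar_closedBall' _ _ hδ.le]
  have hn0 : (0:ℝ) < n := by exact_mod_cast hn
  have hsn : 0 < √(n:ℝ) := sqrt_pos.2 hn0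
  set θ := δ * √n / a with hθ
  have hθ0 : 0 < θ := by positivity
  set s := 8 * √θ with hs
  have hs0 : 0 < s := by positivity
  set q : EuclideanSpace ℝ (Fin n) → ENNReal := fun x => volume (closedBall x δ \ K) with hqdef
  have hqV : ∀ x, q x ≤ V := fun x => (measure_mono sdiff_subset).trans (hball x).le
  set μ := (volume : Measure (EuclideanSpace ℝ (Fin n))).withDensity q with hμ
  set T := {t : ℝ | 0 < t ∧ ∫ x in {x | t ≤ f x}, f x < s} with hT
  have htriv : ∀ t, μ {x | t ≤ f x} ≤ V * volume {x | t ≤ f x} := by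
    intro t
    rw [hμ, withDensity_apply', ← setLIntegral_const]
    exact lintegral_mono hqV
  have hmain : ∀ t, 0 < t → t ∉ T →
      μ {x | t ≤ f x} ≤ ENNReal.ofReal (64 * θ / s) * V * volume {x | t ≤ f x} := by
    intro t ht htT
    set L := {x | t ≤ f x} with hL
    have hp : s ≤ ∫ x in L, f x := by
      by_contra hc
      exact htT ⟨ht, not_le.1 hc⟩
    set p := ∫ x in L, f x with hpdef
    have hp0 : 0 < p := lt_of_lt_of_le hs0 hp
    have hLne : L.Nonempty := by
      by_contra hc
      rw [not_nonempty_iff_eq_empty] at hc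
      rw [hpdef, hc] at hp0
      simp at hp0
    obtain ⟨z, hz⟩ := hrounded t ht hLne
    have hLc : Convex ℝ L := alc_convex hlc ht
    have hLfin : volume L ≠ ⊤ := by
      refine ((measure_mono ?_).trans_lt (hint.measure_norm_ge_lt_top ht)).ne
      intro x hx
      have hx' : t ≤ f x := hx
      exact hx'.trans (le_abs_self _)
    have hIfin : volume (interior L) ≠ ⊤ := 
      ((measure_mono interior_subset).trans_lt hLfin.lt_top).ne
    have hLK : L ⊆ K := by
      intro x hx
      by_contra hc
      have := hsupp x hc
      simp only [hL, mem_ofPred_eq] at hx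
      linarith
    have hae : interior L =ᵐ[volume] L :=
      interior_ae_eq_of_null_frontier (hLc.addHaar_frontier volume)
    have hbi : ball z (a * p) ⊆ interior L :=
      interior_maximal (ball_subset_closedBall.trans hz) isOpen_ball
    calc μ L = ∫⁻ x in interior L, q x := by
          rw [hμ, withDensity_apply', setLIntegral_congr hae]
      _ ≤ ∫⁻ x in interior L, volume (closedBall x δ \ interior L) := by
          apply lintegral_mono
          intro x
          exact measure_mono (sdiff_subset_sdiff_right (interior_subset.trans hLK))
      _ ≤ ENNReal.ofReal (64 * (δ * √n / (a * p))) * (volume (interior L) * V) :=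
          alc_body hn isOpen_interior hLc.interior (by positivity) hδ hbi hIfin
      _ ≤ ENNReal.ofReal (64 * θ / s) * (volume L * V) := by
          gcongr
          · have : 64 * (δ * √n / (a * p)) = 64 * θ / p := by rw [hθ]; field_simp
            rw [this]
            gcongr
          · exact interior_subset
      _ = _ := by ring
  have hanti : Antitone fun t : ℝ => volume {x | t ≤ f x} := by
    intro t t' htt
    exact measure_mono fun x hx => htt.trans hx
  have hTm : MeasurableSet T := by
    have : OrdConnected T := by
      refine ⟨fun t ht t' ht' u hu => ⟨ht.1.trans_le hu.1, lt_of_le_of_lt ?_ ht.2⟩⟩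
      apply setIntegral_mono_set hint.integrableOn (Filter.Eventually.of_forall hf0)
      exact (HasSubset.Subset.eventuallyLE fun x hx => hu.1.trans hx)
    exact this.measurableSet
  have hfμ : AEMeasurable f μ := hint.aemeasurable.mono_ac (withDensity_absolutelyContinuous _ _)
  calc ∫⁻ x, q x * ENNReal.ofReal (f x) = ∫⁻ x, ENNReal.ofReal (f x) ∂μ := by
        rw [hμ, lintegral_withDensity_eq_lintegral_mul₀ hq.aemeasurable
          hint.aemeasurable.ennreal_ofReal]
        rfl
    _ = ∫⁻ t in Ioi 0, μ {x | t ≤ f x} :=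
        lintegral_eq_lintegral_meas_le _ (Filter.Eventually.of_forall hf0) hfμ
    _ ≤ ∫⁻ t in Ioi 0, (ENNReal.ofReal (64 * θ / s) * V * volume {x | t ≤ f x} +
          V * T.indicator (fun t => volume {x | t ≤ f x}) t) := by
        refine setLIntegral_mono' measurableSet_Ioi fun t ht => ?_
        by_cases htT : t ∈ T
        · rw [indicator_of_mem htT]
          exact (htriv t).trans le_add_self
        · exact (hmain t ht htT).trans le_self_add
    _ = ENNReal.ofReal (64 * θ / s) * V * (∫⁻ t in Ioi 0, volume {x | t ≤ f x}) +
          V * ∫⁻ t in Ioi 0, T.indicator (fun t => volume {x | t ≤ f x}) t := by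
        rw [lintegral_add_left (hanti.measurable.const_mul _),
          lintegral_const_mul _ hanti.measurable,
          lintegral_const_mul _ (hanti.measurable.indicator hTm)]
    _ ≤ ENNReal.ofReal (64 * θ / s) * V * 1 + V * ENNReal.ofReal s := by
        gcongr
        · rw [← lintegral_eq_lintegral_meas_le _ (Filter.Eventually.of_forall hf0)
            hint.aemeasurable, ← ofReal_integral_eq_lintegral_ofReal hint
            (Filter.Eventually.of_forall hf0), hmass, ENNReal.ofReal_one]
        · refine le_trans (setLIntegral_le_lintegral _ _) ?_
          rw [lintegral_indicator hTm]
          exact alc_tail hf0 hint s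
    _ = ENNReal.ofReal (64 * θ / s + s) * V := by
        rw [ENNReal.ofReal_add (by positivity) hs0.le]; ring
    _ = _ := by
        congr 2
        have : √θ ^ 2 = θ := sq_sqrt hθ0.le
        rw [hs]
        have h2 : 0 < √θ := sqrt_pos.2 hθ0
        nth_rw 1 [← this]
        field_simp
        norm_num

/-- Average local conductance of the ball walk for rounded logconcave densities
(Lemma 5.5 of the paper): if `f` is an `a`-rounded logconcave probability density with
convex support `K`, then the average local conductance with step size `δ` satisfies
`λ(f) ≥ 1 - 32 δ^{1/2} n^{1/4} / a^{1/2}`. -/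
theorem average_local_conductance
    (n : ℕ) (a δ : ℝ) (ha : 0 < a) (hδ : 0 < δ)
    (K : Set (EuclideanSpace ℝ (Fin n))) (hKconv : Convex ℝ K) (hKm : MeasurableSet K)
    (f : EuclideanSpace ℝ (Fin n) → ℝ)
    (hf0 : ∀ x, 0 ≤ f x)
    (hsupp : ∀ x, x ∉ K → f x = 0)
    (hlc : ∀ x y : EuclideanSpace ℝ (Fin n), ∀ l ∈ Icc (0:ℝ) 1,
      f x ^ l * f y ^ (1 - l) ≤ f (l • x + (1 - l) • y))
    (hint : Integrable f) (hmass : ∫ x, f x = 1)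
    (hrounded : ∀ t : ℝ, 0 < t → ({x | t ≤ f x}).Nonempty →
      ∃ z : EuclideanSpace ℝ (Fin n),
        closedBall z (a * ∫ x in {x | t ≤ f x}, f x) ⊆ {x | t ≤ f x})
    (ℓ : EuclideanSpace ℝ (Fin n) → ℝ)
    (hℓ : ∀ x, ℓ x = (volume (K ∩ closedBall x δ)).toReal /
      (volume (closedBall (0 : EuclideanSpace ℝ (Fin n)) δ)).toReal) :
    1 - 32 * Real.sqrt δ * (n : ℝ) ^ ((1:ℝ)/4) / Real.sqrt a ≤
      (∫ x in K, ℓ x * f x) / (∫ x in K, f x) := by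
  have hK1 : ∫ x in K, f x = 1 := by
    rw [setIntegral_eq_integral_of_forall_compl_eq_zero hsupp, hmass]
  have hK2 : ∫ x in K, ℓ x * f x = ∫ x, ℓ x * f x :=
    setIntegral_eq_integral_of_forall_compl_eq_zero fun x hx => by rw [hsupp x hx, mul_zero]
  rw [hK1, div_one]
  set V := volume (closedBall (0 : EuclideanSpace ℝ (Fin n)) δ) with hV
  have hVtop : V ≠ ⊤ := measure_closedBall_lt_top.ne
  have hV0 : V ≠ 0 := (measure_closedBall_pos _ _ hδ).ne'
  have hVr : 0 < V.toReal := ENNReal.toReal_pos hV0 hVtop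
  rcases Nat.eq_zero_or_pos n with hn | hn
  · subst hn
    have : ∀ x ∈ K, ℓ x * f x = f x := by
      intro x hx
      have h1 : K ∩ closedBall x δ = closedBall 0 δ := by
        rw [Subsingleton.elim x 0] at hx ⊢
        refine inter_eq_right.2 fun y _ => ?_
        rwa [Subsingleton.elim y 0]
      rw [hℓ, h1, div_self hVr.ne', one_mul]
    rw [setIntegral_congr_fun hKm this, hK1]
    simp
  have hball : ∀ x : EuclideanSpace ℝ (Fin n), volume (closedBall x δ) = V := fun x => by
    rw [hV, Measure.addHaar_closedBall' _ _ hδ.le, Measure.addHaar_closedBall' _ _ hδ.le]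
  set q : EuclideanSpace ℝ (Fin n) → ENNReal := fun x => volume (closedBall x δ \ K) with hqdef
  have hqV : ∀ x, q x ≤ V := fun x => (measure_mono sdiff_subset).trans (hball x).le
  have hqtop : ∀ x, q x ≠ ⊤ := fun x => ((hqV x).trans_lt hVtop.lt_top).ne
  have hq : Measurable q := by
    have hSm : MeasurableSet {p : EuclideanSpace ℝ (Fin n) × EuclideanSpace ℝ (Fin n) |
        dist p.2 p.1 ≤ δ ∧ p.2 ∉ K} :=
      (measurableSet_le (measurable_snd.dist measurable_fst) measurable_const).inter
        (measurable_snd hKm).compl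
    exact measurable_measure_prodMk_left (ν := volume) hSm
  have hmain := alc_lint hn ha hδ hf0 hsupp hlc hint hmass hrounded hq
  set p : EuclideanSpace ℝ (Fin n) → ℝ := fun x => (q x).toReal / V.toReal with hp
  have hp0 : ∀ x, 0 ≤ p x := fun x => by positivity
  have hp1 : ∀ x, p x ≤ 1 := fun x =>
    (div_le_one hVr).2 (ENNReal.toReal_mono hVtop (hqV x))
  have hℓp : ∀ x, ℓ x = 1 - p x := by
    intro x
    have h1 := measure_inter_add_sdiff (μ := volume) (closedBall x δ) hKm
    rw [hball, inter_comm] at h1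
    have h2 : V.toReal = (volume (K ∩ closedBall x δ)).toReal + (q x).toReal := by
      rw [← h1, ENNReal.toReal_add _ (hqtop x)]
      exact ((measure_mono inter_subset_right).trans_lt measure_closedBall_lt_top).ne
    rw [hℓ, hp, eq_sub_iff_add_eq, ← add_div, ← h2, div_self hVr.ne']
  have hpm : Measurable p := hq.ennreal_toReal.div_const _
  have hpf : Integrable fun x => p x * f x := by
    refine hint.mono' (hpm.aestronglyMeasurable.mul hint.aestronglyMeasurable) 
      (Filter.Eventually.of_forall fun x => ?_)
    rw [Real.norm_eq_abs, abs_of_nonneg (mul_nonneg (hp0 x) (hf0 x))]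
    exact mul_le_of_le_one_left (hf0 x) (hp1 x)
  have hbound : ∫ x, p x * f x ≤ 16 * √(δ * √n / a) := by
    rw [← ENNReal.ofReal_le_ofReal_iff (by positivity), ofReal_integral_eq_lintegral_ofReal hpf
      (Filter.Eventually.of_forall fun x => mul_nonneg (hp0 x) (hf0 x))]
    have : ∀ x, ENNReal.ofReal (p x * f x) = V⁻¹ * (q x * ENNReal.ofReal (f x)) := by
      intro x
      rw [ENNReal.ofReal_mul (hp0 x), hp, ENNReal.ofReal_div_of_pos hVr,
        ENNReal.ofReal_toReal (hqtop x), ENNReal.ofReal_toReal hVtop, ENNReal.div_eq_inv_mul,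
        mul_assoc]
    simp_rw [this]
    rw [lintegral_const_mul' _ _ (ENNReal.inv_ne_top.2 hV0)]
    calc _ ≤ V⁻¹ * (ENNReal.ofReal (16 * √(δ * √n / a)) * V) := by gcongr
      _ = ENNReal.ofReal (16 * √(δ * √n / a)) * (V⁻¹ * V) := by ring
      _ ≤ _ := by rw [ENNReal.inv_mul_cancel hV0 hVtop, mul_one]
  have hsqrt : √(δ * √n / a) = √δ * (n : ℝ) ^ ((1:ℝ)/4) / √a := by
    rw [sqrt_div (by positivity), sqrt_mul hδ.le]
    congr 2
    rw [sqrt_eq_rpow, sqrt_eq_rpow, ← rpow_mul (Nat.cast_nonneg n)]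
    norm_num
  rw [hK2]
  have hI : ∫ x, ℓ x * f x = 1 - ∫ x, p x * f x := by
    rw [← hmass, ← integral_sub hint hpf]
    congr 1
    ext x
    rw [hℓp]; ring
  rw [hI]
  rw [hsqrt] at hbound
  have h0 : 0 ≤ √δ * (n : ℝ) ^ ((1:ℝ)/4) / √a := by positivity
  have h1 : 32 * √δ * (n : ℝ) ^ ((1:ℝ)/4) / √a = 32 * (√δ * (n : ℝ) ^ ((1:ℝ)/4) / √a) := by ring
  rw [h1]
  linarith
end
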